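/- Consider the stochastic regression model X_{n+1} = θ^t Φ_n + ε_{n+1} with least squares estimator θ̂_n. Let p ≥ 1 be an integer and assume (ε_n) is a martingale difference sequence with E[ε_{n+1}² | F_n] = σ² a.s. and sup_{n≥0} E[|ε_{n+1}|^a | F_n] < ∞ a.s. for some a > 2p, the explosion coefficient f_n → 0 a.s., and S_n/n → L a.s. for some symmetric positive definite d×d matrix L. Then almost surely lim_{n→∞} (1/log n) Σ_{k=1}^n k^{p−1} ((θ̂_k − θ)^t L (θ̂_k − θ))^p = ℓ(p), where ℓ(p) = d σ^{2p} ∏_{j=1}^{p-1} (d + 2j); in particular the cumulative estimation error G_n(p) = Σ_{k=1}^n k^{p−1} ‖θ̂_k − θ‖^{2p} satisfies G_n(p) = O(log n) almost surely. -/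

import Mathlib

open MeasureTheory ProbabilityTheory Filter Finset Matrix Topology Asymptotics

noncomputable section

/-- `S_n = S + ∑_{k=0}^n Φ_k Φ_kᵗ`. -/
def Smat {Ω : Type*} {d : ℕ} (S : Matrix (Fin d) (Fin d) ℝ)
    (Φ : ℕ → Ω → Fin d → ℝ) (n : ℕ) (ω : Ω) : Matrix (Fin d) (Fin d) ℝ :=
  S + ∑ k ∈ Finset.range (n + 1), vecMulVec (Φ k ω) (Φ k ω)

/-- The explosion coefficient `f_n = Φ_nᵗ S_n⁻¹ Φ_n`. -/
def expl {Ω : Type*} {d : ℕ} (S : Matrix (Fin d) (Fin d) ℝ)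
    (Φ : ℕ → Ω → Fin d → ℝ) (n : ℕ) (ω : Ω) : ℝ :=
  Φ n ω ⬝ᵥ ((Smat S Φ n ω)⁻¹ *ᵥ Φ n ω)

/-- The least squares estimator `θ̂_n = S_{n-1}⁻¹ ∑_{k=1}^n Φ_{k-1} X_k`. -/
def lsq {Ω : Type*} {d : ℕ} (S : Matrix (Fin d) (Fin d) ℝ)
    (Φ : ℕ → Ω → Fin d → ℝ) (X : ℕ → Ω → ℝ) (n : ℕ) (ω : Ω) : Fin d → ℝ :=
  (Smat S Φ (n - 1) ω)⁻¹ *ᵥ ∑ k ∈ Finset.Icc 1 n, X k ω • Φ (k - 1) ω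



section Part1
/-! Part 1 -/

lemma phi_ineq (x y r : ℝ) (hr1 : 1 ≤ r) (hr2 : r ≤ 2) :
    √(1 + (x + y) ^ 2) ≤ √(1 + x ^ 2) + x / √(1 + x ^ 2) * y + 2 * |y| ^ r := by
  have h1 : (1:ℝ) ≤ √(1 + x ^ 2) := by
    rw [Real.one_le_sqrt]; nlinarith [sq_nonneg x]
  set f := √(1 + x ^ 2) with hf
  have hf2 : f ^ 2 = 1 + x ^ 2 := Real.sq_sqrt (by positivity)
  have hf0 : 0 < f := by linarith
  have hxf : |x| ≤ f := by
    rw [← Real.sqrt_sq_eq_abs]; exact Real.sqrt_le_sqrt (by linarith)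
  have hxq : |x / f| ≤ 1 := by
    rw [abs_div, abs_of_pos hf0]; exact (div_le_one hf0).2 hxf
  set c := x / f with hc
  have hcf : c * f = x := by rw [hc]; field_simp
  by_cases hy : |y| ≤ 1
  · have hyr : y ^ 2 ≤ |y| ^ r := by
      rw [← sq_abs, ← Real.rpow_natCast]
      rcases (abs_nonneg y).eq_or_lt with h0 | h0
      · rw [← h0, Real.zero_rpow (by norm_num), Real.zero_rpow (by linarith)]
      · exact Real.rpow_le_rpow_of_exponent_ge h0 hy (by exact_mod_cast hr2)
    have key : √(1 + (x + y) ^ 2) ≤ f + c * y + y ^ 2 := by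
      apply Real.sqrt_le_iff.2
      have hcy : |c * y| ≤ 1 := by
        rw [abs_mul]; exact mul_le_one₀ hxq (abs_nonneg _) hy
      have := abs_le.1 hcy
      refine ⟨by nlinarith [sq_nonneg y], ?_⟩
      have e : (f + c * y + y ^ 2) ^ 2 = f ^ 2 + 2 * (c * f) * y + 2 * f * y ^ 2 + (c * y + y ^ 2) ^ 2 := by ring
      rw [e, hcf, hf2]
      nlinarith [sq_nonneg (c * y + y ^ 2), sq_nonneg y, mul_le_mul_of_nonneg_right h1 (sq_nonneg y)]
    nlinarith [sq_nonneg y]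
  · push Not at hy
    have hyr : |y| ≤ |y| ^ r := by
      conv_lhs => rw [← Real.rpow_one |y|]
      exact Real.rpow_le_rpow_of_exponent_le hy.le hr1
    have key : √(1 + (x + y) ^ 2) ≤ f + |y| := by
      apply Real.sqrt_le_iff.2
      refine ⟨by positivity, ?_⟩
      have : x * y ≤ f * |y| := by
        calc x * y ≤ |x * y| := le_abs_self _
          _ = |x| * |y| := abs_mul _ _
          _ ≤ _ := mul_le_mul_of_nonneg_right hxf (abs_nonneg _)
      nlinarith [sq_abs y]
    have : -|y| ≤ c * y := by
      have : |c * y| ≤ |y| := by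
        rw [abs_mul]; exact mul_le_of_le_one_left (abs_nonneg _) hxq
      linarith [(abs_le.1 this).1]
    linarith

lemma add_rpow_le_aux {x y r : ℝ} (hx : 0 ≤ x) (hy : 0 ≤ y) (hr : 1 ≤ r) :
    (x + y) ^ r ≤ 2 ^ (r - 1) * (x ^ r + y ^ r) := by
  lift x to NNReal using hx
  lift y to NNReal using hy
  exact_mod_cast NNReal.rpow_add_le_mul_rpow_add_rpow x y hr

section prob
variable {Ω : Type*} {m0 : MeasurableSpace Ω} {μ : Measure Ω} [IsProbabilityMeasure μ]

lemma partial_martingale (F : Filtration ℕ m0) (D : ℕ → Ω → ℝ)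
    (hDm : ∀ k, StronglyMeasurable[F (k + 1)] (D k)) (hDi : ∀ k, Integrable (D k) μ)
    (hD0 : ∀ k, μ[D k|F k] =ᵐ[μ] 0) :
    Martingale (fun n ω => ∑ k ∈ range n, D k ω) F μ := by
  apply martingale_of_condExp_sub_eq_zero_nat
  · intro n
    apply Finset.stronglyMeasurable_fun_sum
    intro k hk
    exact (hDm k).mono (F.mono (by simpa using Finset.mem_range.1 hk))
  · intro n
    exact integrable_finsetSum _ fun k _ => hDi k
  · intro n
    have : ((fun ω => ∑ k ∈ range (n + 1), D k ω) - fun ω => ∑ k ∈ range n, D k ω) = D n := by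
      ext ω; simp [Finset.sum_range_succ]
    rw [this]; exact hD0 n

lemma conv_of_L1 (F : Filtration ℕ m0) (D : ℕ → Ω → ℝ)
    (hDm : ∀ k, StronglyMeasurable[F (k + 1)] (D k)) (hDi : ∀ k, Integrable (D k) μ)
    (hD0 : ∀ k, μ[D k|F k] =ᵐ[μ] 0) (R : ℝ)
    (hR : ∀ n, ∫ ω, |∑ k ∈ range n, D k ω| ∂μ ≤ R) :
    ∀ᵐ ω ∂μ, ∃ l, Tendsto (fun n => ∑ k ∈ range n, D k ω) atTop (𝓝 l) := by
  have hM := partial_martingale F D hDm hDi hD0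
  have := hM.submartingale.ae_tendsto_limitProcess (R := R.toNNReal) ?_
  · filter_upwards [this] with ω h using ⟨_, h⟩
  · intro n
    rw [eLpNorm_one_eq_lintegral_enorm]
    have hi := hM.integrable n
    have := ofReal_integral_norm_eq_lintegral_enorm hi
    rw [← this]
    exact ENNReal.ofReal_le_ofReal (hR n)

/-- centred transform differences -/
lemma transform_props (F : Filtration ℕ m0) (h ξ : ℕ → Ω → ℝ)
    (hξm : ∀ k, StronglyMeasurable[F (k + 1)] (ξ k)) (hξi : ∀ k, Integrable (ξ k) μ)
    (hh : ∀ k, StronglyMeasurable[F k] (h k)) (B : ℕ → ℝ) (hB : ∀ k ω, |h k ω| ≤ B k) (k : ℕ) :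
    StronglyMeasurable[F (k + 1)] (fun ω => h k ω * (ξ k ω - (μ[ξ k|F k]) ω)) ∧
    Integrable (fun ω => h k ω * (ξ k ω - (μ[ξ k|F k]) ω)) μ ∧
    μ[fun ω => h k ω * (ξ k ω - (μ[ξ k|F k]) ω)|F k] =ᵐ[μ] 0 := by
  have hi : Integrable (ξ k - μ[ξ k|F k]) μ := (hξi k).sub integrable_condExp
  have hc : μ[ξ k - μ[ξ k|F k]|F k] =ᵐ[μ] 0 := by
    have h1 := condExp_sub (hξi k) (integrable_condExp (μ := μ) (m := F k) (f := ξ k)) (F k)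
    have h2 : μ[μ[ξ k|F k]|F k] = μ[ξ k|F k] :=
      condExp_of_stronglyMeasurable (F.le k) stronglyMeasurable_condExp integrable_condExp
    rw [h2] at h1
    filter_upwards [h1] with ω hω
    rw [hω]; simp
  refine ⟨?_, ?_, ?_⟩
  · exact ((hh k).mono (F.mono (Nat.le_succ k))).mul ((hξm k).sub
      (stronglyMeasurable_condExp.mono (F.mono (Nat.le_succ k))))
  · exact hi.bdd_mul (c := B k) ((hh k).mono (F.le k)).aestronglyMeasurable
      (Eventually.of_forall fun ω => hB k ω)
  · have := condExp_stronglyMeasurable_mul_of_bound (μ := μ) (F.le k) (hh k) hi (B k)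
      (Eventually.of_forall fun ω => hB k ω)
    filter_upwards [this, hc] with ω h1 h2
    have e : (fun ω => h k ω * (ξ k ω - (μ[ξ k|F k]) ω)) = h k * (ξ k - μ[ξ k|F k]) := rfl
    rw [e, h1]; simp [h2]

lemma pull_integral (F : Filtration ℕ m0) (k : ℕ) (h Y : Ω → ℝ) (hY : Integrable Y μ)
    (hh : StronglyMeasurable[F k] h) (B : ℝ) (hB : ∀ ω, |h ω| ≤ B) :
    ∫ ω, h ω * Y ω ∂μ = ∫ ω, h ω * (μ[Y|F k]) ω ∂μ := by
  have h1 := condExp_stronglyMeasurable_mul_of_bound (μ := μ) (F.le k) hh hY B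
      (Eventually.of_forall fun ω => hB ω)
  have h2 := integral_condExp (μ := μ) (F.le k) (f := h * Y)
  rw [integral_congr_ae h1] at h2
  exact h2.symm

lemma L1_bound (F : Filtration ℕ m0) (D : ℕ → Ω → ℝ)
    (hDm : ∀ k, StronglyMeasurable[F (k + 1)] (D k)) (hDi : ∀ k, Integrable (D k) μ)
    (hD0 : ∀ k, μ[D k|F k] =ᵐ[μ] 0) (r : ℝ) (hr1 : 1 ≤ r) (hr2 : r ≤ 2)
    (hDr : ∀ k, Integrable (fun ω => |D k ω| ^ r) μ) (n : ℕ) :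
    ∫ ω, |∑ k ∈ range n, D k ω| ∂μ ≤ 1 + 2 * ∑ k ∈ range n, ∫ ω, |D k ω| ^ r ∂μ := by
  have hM := partial_martingale F D hDm hDi hD0
  have hφi : ∀ n, Integrable (fun ω => √(1 + (∑ k ∈ range n, D k ω) ^ 2)) μ := by
    intro n
    have hi := (integrable_const (1:ℝ)).add (hM.integrable n).abs
    refine hi.mono' ?_ (Eventually.of_forall fun ω => ?_)
    · have := (hM.integrable n).aestronglyMeasurable.aemeasurable
      exact ((this.pow_const 2).const_add 1).sqrt.aestronglyMeasurable
    · rw [Real.norm_eq_abs, abs_of_nonneg (Real.sqrt_nonneg _)]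
      apply Real.sqrt_le_iff.2
      have := abs_nonneg (∑ k ∈ range n, D k ω)
      simp only [Pi.add_apply]
      refine ⟨by positivity, ?_⟩
      nlinarith [sq_abs (∑ k ∈ range n, D k ω)]
  have hstep : ∀ n, ∫ ω, √(1 + (∑ k ∈ range n, D k ω) ^ 2) ∂μ
      ≤ 1 + 2 * ∑ k ∈ range n, ∫ ω, |D k ω| ^ r ∂μ := by
    intro n
    induction n with
    | zero => simp
    | succ n ih =>
      set c : Ω → ℝ := fun ω => (∑ k ∈ range n, D k ω) / √(1 + (∑ k ∈ range n, D k ω) ^ 2) with hc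
      have hcm : StronglyMeasurable[F n] c := by
        have := (hM.1 n).measurable
        exact (this.div ((this.pow_const 2).const_add 1).sqrt).stronglyMeasurable
      have hcb : ∀ ω, |c ω| ≤ 1 := by
        intro ω
        simp only [hc]
        rw [abs_div, abs_of_nonneg (Real.sqrt_nonneg _)]
        apply div_le_one_of_le₀ _ (Real.sqrt_nonneg _)
        rw [← Real.sqrt_sq_eq_abs]; exact Real.sqrt_le_sqrt (by linarith)
      have h0 : ∫ ω, c ω * D n ω ∂μ = 0 := by
        rw [pull_integral F n c (D n) (hDi n) hcm 1 hcb]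
        rw [integral_congr_ae (g := fun _ => (0:ℝ))]
        · simp
        · filter_upwards [hD0 n] with ω h using by rw [h]; simp
      have hci : Integrable (fun ω => c ω * D n ω) μ :=
        (hDi n).bdd_mul (c := 1) (hcm.mono (F.le n)).aestronglyMeasurable
          (Eventually.of_forall fun ω => hcb ω)
      have hle : ∫ ω, √(1 + (∑ k ∈ range (n + 1), D k ω) ^ 2) ∂μ ≤
          ∫ ω, (√(1 + (∑ k ∈ range n, D k ω) ^ 2) + c ω * D n ω + 2 * |D n ω| ^ r) ∂μ := by
        apply integral_mono (hφi (n + 1)) (((hφi n).add hci).add ((hDr n).const_mul 2))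
        intro ω
        simp only [Finset.sum_range_succ]
        exact phi_ineq _ _ r hr1 hr2
      have e1 := integral_add ((hφi n).add hci) ((hDr n).const_mul 2)
      have e2 := integral_add (hφi n) hci
      have e3 : ∫ ω, 2 * |D n ω| ^ r ∂μ = 2 * ∫ ω, |D n ω| ^ r ∂μ := integral_const_mul _ _
      simp only [Pi.add_apply] at e1
      rw [e1, e2, h0, e3] at hle
      rw [Finset.sum_range_succ]
      linarith
  refine le_trans (integral_mono (hM.integrable n).abs (hφi n) ?_) (hstep n)
  intro ω
  simp only []
  rw [← Real.sqrt_sq_eq_abs]; exact Real.sqrt_le_sqrt (by linarith)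

theorem lemM (F : Filtration ℕ m0) (ξ Y H : ℕ → Ω → ℝ) (r : ℝ) (hr1 : 1 ≤ r) (hr2 : r ≤ 2)
    (hξm : ∀ k, StronglyMeasurable[F (k + 1)] (ξ k)) (hξi : ∀ k, Integrable (ξ k) μ)
    (hY : ∀ k, Integrable (Y k) μ) (hξY : ∀ k ω, |ξ k ω| ^ r ≤ Y k ω)
    (hYb : ∀ᵐ ω ∂μ, ∃ C : ℝ, ∀ k, (μ[Y k|F k]) ω ≤ C)
    (hH : ∀ k, StronglyMeasurable[F k] (H k))
    (hHs : ∀ᵐ ω ∂μ, Summable fun k => |H k ω| ^ r) :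
    ∀ᵐ ω ∂μ, ∃ l, Tendsto (fun n => ∑ k ∈ range n, H k ω * (ξ k ω - (μ[ξ k|F k]) ω))
      atTop (𝓝 l) := by
  have hr0 : 0 < r := by linarith
  set G : ℕ → ℕ → Set Ω := fun K k =>
    {ω | ∀ i ≤ k, ∑ l ∈ range (i + 1), |H l ω| ^ r ≤ K ∧ (μ[Y i|F i]) ω ≤ K} with hG
  have hGm : ∀ K k, MeasurableSet[F k] (G K k) := by
    intro K k
    have : G K k = ⋂ i ∈ Set.Iic k, ({ω | ∑ l ∈ range (i + 1), |H l ω| ^ r ≤ K} ∩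
        {ω | (μ[Y i|F i]) ω ≤ K}) := by
      ext ω; simp [hG]
    rw [this]
    refine MeasurableSet.biInter (Set.to_countable _) fun i hi => MeasurableSet.inter ?_ ?_
    · refine measurableSet_le ?_ measurable_const
      refine Finset.measurable_fun_sum _ fun l hl => ?_
      have := ((hH l).mono (F.mono (show l ≤ k by
        have := Finset.mem_range.1 hl; have := Set.mem_Iic.1 hi; omega)))
      have h2 : Measurable[F k] (fun ω => |H l ω|) :=
        (continuous_abs.comp_stronglyMeasurable this).measurable
      exact h2.pow_const r
    · refine measurableSet_le ?_ measurable_const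
      exact (stronglyMeasurable_condExp.mono (F.mono hi)).measurable
  have hmean : ∀ᵐ ω ∂μ, ∀ k, |(μ[ξ k|F k]) ω| ≤ 1 + (μ[Y k|F k]) ω := by
    rw [ae_all_iff]
    intro k
    have hle : ∀ ω, |ξ k ω| ≤ 1 + Y k ω := by
      intro ω
      have := hξY k ω
      by_cases h1 : |ξ k ω| ≤ 1
      · have : 0 ≤ Y k ω := le_trans (by positivity) this
        linarith
      · push Not at h1
        have h3 : |ξ k ω| ≤ |ξ k ω| ^ r := by
          conv_lhs => rw [← Real.rpow_one |ξ k ω|]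
          exact Real.rpow_le_rpow_of_exponent_le h1.le hr1
        linarith
    have i1 : Integrable (fun ω => 1 + Y k ω) μ := (integrable_const (1:ℝ)).add (hY k)
    have h1 := condExp_mono (m := F k) (hξi k) i1 (Eventually.of_forall fun ω =>
      le_trans (le_abs_self _) (hle ω))
    have h2 := condExp_mono (m := F k) i1.neg (hξi k) (Eventually.of_forall fun ω => by
      have := hle ω; have := neg_abs_le (ξ k ω); simp only [Pi.neg_apply]; linarith)
    have h3 := condExp_neg (μ := μ) (fun ω => 1 + Y k ω) (F k)
    have h4 := condExp_add (μ := μ) (integrable_const (1:ℝ)) (hY k) (F k)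
    have h5 : μ[fun _ : Ω => (1:ℝ)|F k] = fun _ => 1 := condExp_const (F.le k) 1
    have h6 : (fun ω => 1 + Y k ω) = (fun _ => (1:ℝ)) + Y k := rfl
    filter_upwards [h1, h2, h3, h4] with ω h1 h2 h3 h4
    rw [← h6, Pi.add_apply, h5] at h4
    rw [h3, Pi.neg_apply] at h2
    rw [abs_le]
    constructor <;> linarith
  have main : ∀ K : ℕ, ∀ᵐ ω ∂μ, ∃ l, Tendsto (fun n => ∑ k ∈ range n,
      (G K k).indicator (H k) ω * (ξ k ω - (μ[ξ k|F k]) ω)) atTop (𝓝 l) := by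
    intro K
    set h : ℕ → Ω → ℝ := fun k => (G K k).indicator (H k) with hh
    have hhm : ∀ k, StronglyMeasurable[F k] (h k) := fun k => (hH k).indicator (hGm K k)
    have hhsum : ∀ n ω, ∑ k ∈ range n, |h k ω| ^ r ≤ K := by
      intro n ω
      induction n with
      | zero => simp
      | succ n ih =>
        by_cases hω : ω ∈ G K n
        · refine le_trans (Finset.sum_le_sum fun k _ => ?_) (hω n le_rfl).1
          apply Real.rpow_le_rpow (abs_nonneg _) _ hr0.le
          simp only [hh, Set.indicator]
          split_ifs <;> simp
        · rw [Finset.sum_range_succ]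
          have : h n ω = 0 := by simp [hh, hω]
          rw [this, abs_zero, Real.zero_rpow hr0.ne', add_zero]; exact ih
    have hhb' : ∀ k ω, |h k ω| ^ r ≤ K := by
      intro k ω
      refine le_trans ?_ (hhsum (k + 1) ω)
      exact Finset.single_le_sum (f := fun k => |h k ω| ^ r) (fun i _ => by positivity)
        (Finset.self_mem_range_succ k)
    have hhb : ∀ k ω, |h k ω| ≤ K + 1 := by
      intro k ω
      have := hhb' k ω
      by_cases h1 : |h k ω| ≤ 1
      · have : (0:ℝ) ≤ K := Nat.cast_nonneg K
        linarith
      · push Not at h1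
        have h3 : |h k ω| ≤ |h k ω| ^ r := by
          conv_lhs => rw [← Real.rpow_one |h k ω|]
          exact Real.rpow_le_rpow_of_exponent_le h1.le hr1
        linarith
    have hp := transform_props (μ := μ) F h ξ hξm hξi hhm (fun _ => K + 1) hhb
    set D : ℕ → Ω → ℝ := fun k ω => h k ω * (ξ k ω - (μ[ξ k|F k]) ω) with hD
    set c : ℝ := (1 + K) ^ 2 with hc
    have hK0 : (0:ℝ) ≤ K := Nat.cast_nonneg K
    have hDb : ∀ k, ∀ᵐ ω ∂μ, |D k ω| ^ r ≤ |h k ω| ^ r * (4 * Y k ω + 4 * c) := by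
      intro k
      filter_upwards [hmean] with ω hω
      by_cases hωG : ω ∈ G K k
      · have hm : |(μ[ξ k|F k]) ω| ≤ 1 + K := by
          have := (hωG k le_rfl).2
          have := hω k
          linarith
        simp only [hD]
        rw [abs_mul, Real.mul_rpow (abs_nonneg _) (abs_nonneg _)]
        apply mul_le_mul_of_nonneg_left _ (by positivity)
        have h1 : |ξ k ω - (μ[ξ k|F k]) ω| ≤ |ξ k ω| + (1 + K) :=
          (abs_sub _ _).trans (by linarith)
        have h2 : (|ξ k ω| + (1 + K)) ^ r ≤ 2 ^ (r - 1) * (|ξ k ω| ^ r + (1 + K) ^ r) :=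
          add_rpow_le_aux (abs_nonneg _) (by positivity) hr1
        have h3 : (2:ℝ) ^ (r - 1) ≤ 4 := by
          calc (2:ℝ) ^ (r - 1) ≤ 2 ^ (2:ℝ) :=
                Real.rpow_le_rpow_of_exponent_le (by norm_num) (by linarith)
            _ = 4 := by norm_num
        have h4 : ((1:ℝ) + K) ^ r ≤ c := by
          rw [hc, ← Real.rpow_natCast]
          exact Real.rpow_le_rpow_of_exponent_le (by linarith) (by exact_mod_cast hr2)
        have h5 := hξY k ω
        calc _ ≤ (|ξ k ω| + (1 + K)) ^ r := Real.rpow_le_rpow (abs_nonneg _) h1 hr0.le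
          _ ≤ _ := h2
          _ ≤ 4 * (Y k ω + c) := by
              apply mul_le_mul h3 (by linarith) (by positivity) (by norm_num)
          _ = _ := by ring
      · have : h k ω = 0 := by simp [hh, hωG]
        simp [hD, this, Real.zero_rpow hr0.ne']
    have hhrm : ∀ k, StronglyMeasurable[F k] (fun ω => |h k ω| ^ r) := fun k => by
      have : Measurable[F k] (fun ω => |h k ω|) := 
        (continuous_abs.comp_stronglyMeasurable (hhm k)).measurable
      exact (this.pow_const r).stronglyMeasurable
    have hhri : ∀ k, Integrable (fun ω => |h k ω| ^ r) μ := fun k =>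
      (integrable_const (K:ℝ)).mono' ((hhrm k).mono (F.le k)).aestronglyMeasurable
        (Eventually.of_forall fun ω => by
          rw [Real.norm_eq_abs, abs_of_nonneg (by positivity)]; exact hhb' k ω)
    have hbi : ∀ k, Integrable (fun ω => |h k ω| ^ r * (4 * Y k ω + 4 * c)) μ := fun k =>
      (((hY k).const_mul 4).add (integrable_const _)).bdd_mul (c := K)
        ((hhrm k).mono (F.le k)).aestronglyMeasurable
        (Eventually.of_forall fun ω => by
          rw [Real.norm_eq_abs, abs_of_nonneg (by positivity)]; exact hhb' k ω)
    have hDri : ∀ k, Integrable (fun ω => |D k ω| ^ r) μ := fun k => by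
      refine (hbi k).mono' ?_ ?_
      · have : Measurable (fun ω => |D k ω|) := ((hp k).1.mono (F.le _)).measurable.abs
        exact (this.pow_const r).aestronglyMeasurable
      · filter_upwards [hDb k] with ω hω
        rw [Real.norm_eq_abs, abs_of_nonneg (by positivity)]; exact hω
    have hint : ∀ k, ∫ ω, |D k ω| ^ r ∂μ ≤ (4 * K + 4 * c) * ∫ ω, |h k ω| ^ r ∂μ := by
      intro k
      have h1 : ∫ ω, |D k ω| ^ r ∂μ ≤ ∫ ω, |h k ω| ^ r * (4 * Y k ω + 4 * c) ∂μ :=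
        integral_mono_ae (hDri k) (hbi k) (hDb k)
      have hYi : Integrable (fun ω => |h k ω| ^ r * Y k ω) μ := (hY k).bdd_mul (c := K)
        ((hhrm k).mono (F.le k)).aestronglyMeasurable
        (Eventually.of_forall fun ω => by
          rw [Real.norm_eq_abs, abs_of_nonneg (by positivity)]; exact hhb' k ω)
      have h2 : ∫ ω, |h k ω| ^ r * (4 * Y k ω + 4 * c) ∂μ =
          4 * ∫ ω, |h k ω| ^ r * Y k ω ∂μ + 4 * c * ∫ ω, |h k ω| ^ r ∂μ := by
        rw [← integral_const_mul, ← integral_const_mul, ← integral_add (hYi.const_mul 4)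
          ((hhri k).const_mul _)]
        congr 1; ext ω; ring
      have h3 := pull_integral (μ := μ) F k (fun ω => |h k ω| ^ r) (Y k) (hY k) (hhrm k) K
        (fun ω => by rw [abs_of_nonneg (by positivity)]; exact hhb' k ω)
      have hci : Integrable (fun ω => |h k ω| ^ r * (μ[Y k|F k]) ω) μ :=
        (integrable_condExp).bdd_mul (c := K)
        ((hhrm k).mono (F.le k)).aestronglyMeasurable
        (Eventually.of_forall fun ω => by
          rw [Real.norm_eq_abs, abs_of_nonneg (by positivity)]; exact hhb' k ω)
      have h4 : ∫ ω, |h k ω| ^ r * (μ[Y k|F k]) ω ∂μ ≤ ∫ ω, K * |h k ω| ^ r ∂μ := by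
        apply integral_mono hci ((hhri k).const_mul _)
        intro ω
        simp only []
        by_cases hωG : ω ∈ G K k
        · have := (hωG k le_rfl).2
          rw [mul_comm]
          exact mul_le_mul_of_nonneg_right this (by positivity)
        · have : h k ω = 0 := by simp [hh, hωG]
          simp [this, Real.zero_rpow hr0.ne']
      rw [integral_const_mul] at h4
      rw [h2, h3] at h1
      linarith
    apply conv_of_L1 F D (fun k => (hp k).1) (fun k => (hp k).2.1) (fun k => (hp k).2.2)
      (1 + 2 * ((4 * K + 4 * c) * K))
    intro n
    refine (L1_bound F D (fun k => (hp k).1) (fun k => (hp k).2.1) (fun k => (hp k).2.2) r hr1 hr2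
      hDri n).trans ?_
    have : ∑ k ∈ range n, ∫ ω, |D k ω| ^ r ∂μ ≤ (4 * K + 4 * c) * K := by
      refine (Finset.sum_le_sum fun k _ => hint k).trans ?_
      rw [← Finset.mul_sum, ← integral_finsetSum _ fun k _ => hhri k]
      apply mul_le_mul_of_nonneg_left _ (by positivity)
      calc ∫ ω, ∑ k ∈ range n, |h k ω| ^ r ∂μ ≤ ∫ _, (K:ℝ) ∂μ :=
            integral_mono (integrable_finsetSum _ fun k _ => hhri k) (integrable_const _)
              (fun ω => hhsum n ω)
        _ = K := by simp
    linarith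
  rw [← ae_all_iff] at main
  filter_upwards [main, hYb, hHs] with ω hω ⟨C, hC⟩ hs
  obtain ⟨K, hK⟩ := exists_nat_ge (max C (∑' k, |H k ω| ^ r))
  have hmem : ∀ k, ω ∈ G K k := by
    intro k i _
    refine ⟨?_, (hC i).trans ((le_max_left _ _).trans hK)⟩
    exact (hs.sum_le_tsum _ fun _ _ => by positivity).trans ((le_max_right _ _).trans hK)
  obtain ⟨l, hl⟩ := hω K
  refine ⟨l, ?_⟩
  simpa [Set.indicator_of_mem (hmem _)] using hl

end prob
end Part1

section Part2
section prob2
variable {Ω : Type*} {m0 : MeasurableSpace Ω} {μ : Measure Ω} [IsProbabilityMeasure μ]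

lemma exists_det_bound (h : ℕ → Ω → ℝ) (hm : ∀ k, Measurable (h k)) :
    ∃ B : ℕ → ℝ, ∀ᵐ ω ∂μ, ∃ K : ℕ, ∀ k, h k ω ≤ B k + K := by
  have h1 : ∀ k, ∃ B : ℕ, μ {ω | (B:ℝ) < h k ω} ≤ ENNReal.ofReal ((1/2) ^ k) := by
    intro k
    have ht := tendsto_measure_iInter_atTop (μ := μ) (s := fun B : ℕ => {ω | (B:ℝ) < h k ω})
      (fun B => (measurableSet_lt measurable_const (hm k)).nullMeasurableSet)
      (fun a b hab ω hω => by
        simp only [Set.mem_ofPred_eq] at *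
        exact lt_of_le_of_lt (by exact_mod_cast hab) hω) ⟨0, measure_ne_top _ _⟩
    have he : (⋂ B : ℕ, {ω | (B:ℝ) < h k ω}) = ∅ := by
      ext ω
      simp only [Set.mem_iInter, Set.mem_ofPred_eq, Set.mem_empty_iff_false, iff_false, not_forall,
        not_lt]
      exact exists_nat_ge _
    rw [he, measure_empty] at ht
    have hpos : (0:ENNReal) < ENNReal.ofReal ((1/2) ^ k) := ENNReal.ofReal_pos.2 (by positivity)
    have := ht.eventually (Iic_mem_nhds hpos)
    exact this.exists
  choose B hB using h1
  refine ⟨fun k => B k, ?_⟩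
  have hs : (∑' k, μ {ω | (B k:ℝ) < h k ω}) ≠ ⊤ := by
    refine ne_top_of_le_ne_top ?_ (ENNReal.tsum_le_tsum hB)
    rw [← ENNReal.ofReal_tsum_of_nonneg (fun n => by positivity) summable_geometric_two]
    exact ENNReal.ofReal_ne_top
  filter_upwards [ae_eventually_notMem hs] with ω hω
  obtain ⟨n, hn⟩ := eventually_atTop.1 hω
  obtain ⟨K, hK⟩ := exists_nat_ge (∑ k ∈ range n, |h k ω|)
  refine ⟨K, fun k => ?_⟩
  have hB0 : (0:ℝ) ≤ B k := Nat.cast_nonneg _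
  by_cases hk : n ≤ k
  · have := hn k hk
    simp only [Set.mem_ofPred_eq, not_lt] at this
    have : (0:ℝ) ≤ K := Nat.cast_nonneg _
    linarith
  · have : |h k ω| ≤ ∑ k ∈ range n, |h k ω| :=
      Finset.single_le_sum (f := fun k => |h k ω|) (fun _ _ => abs_nonneg _)
        (Finset.mem_range.2 (by omega))
    have := le_abs_self (h k ω)
    linarith

theorem lemRS (F : Filtration ℕ m0) (J : Finset ℕ) (ξ H : ℕ → ℕ → Ω → ℝ) (Λ : ℕ → Ω → ℝ)
    (hξm : ∀ j ∈ J, ∀ k, StronglyMeasurable[F (k + 1)] (ξ j k))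
    (hξi : ∀ j ∈ J, ∀ k, Integrable (ξ j k) μ)
    (hH : ∀ j ∈ J, ∀ k, StronglyMeasurable[F k] (H j k))
    (hΛm : ∀ k, StronglyMeasurable[F k] (Λ k))
    (hΛb : ∀ᵐ ω ∂μ, ∃ C : ℝ, ∀ k, Λ k ω ≤ C)
    (hlow : ∀ᵐ ω ∂μ, ∀ n, -Λ n ω ≤
      ∑ k ∈ range (n + 1), ∑ j ∈ J, H j k ω * (ξ j k ω - (μ[ξ j k|F k]) ω)) :
    ∀ᵐ ω ∂μ, ∃ l, Tendsto (fun n => ∑ k ∈ range n, ∑ j ∈ J,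
      H j k ω * (ξ j k ω - (μ[ξ j k|F k]) ω)) atTop (𝓝 l) := by
  set h : ℕ → Ω → ℝ := fun k ω => ∑ j ∈ J, |H j k ω| with hh
  have hhm : ∀ k, Measurable[F k] (h k) := fun k =>
    Finset.measurable_fun_sum _ fun j hj =>
      (continuous_abs.comp_stronglyMeasurable (hH j hj k)).measurable
  obtain ⟨B, hB⟩ := exists_det_bound (μ := μ) h (fun k => (hhm k).mono (F.le k) le_rfl)
  set G : ℕ → ℕ → Set Ω := fun K k => {ω | ∀ i ≤ k, h i ω ≤ B i + K ∧ Λ i ω ≤ K} with hG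
  have hGm : ∀ K k, MeasurableSet[F k] (G K k) := by
    intro K k
    have : G K k = ⋂ i ∈ Set.Iic k, ({ω | h i ω ≤ B i + K} ∩ {ω | Λ i ω ≤ K}) := by
      ext ω; simp [hG]
    rw [this]
    refine MeasurableSet.biInter (Set.to_countable _) fun i hi => MeasurableSet.inter ?_ ?_
    · exact measurableSet_le ((hhm i).mono (F.mono hi) le_rfl) measurable_const
    · exact measurableSet_le ((hΛm i).mono (F.mono hi)).measurable measurable_const
  have main : ∀ K : ℕ, ∀ᵐ ω ∂μ, ∃ l, Tendsto (fun n => ∑ k ∈ range n, ∑ j ∈ J,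
      (G K k).indicator (H j k) ω * (ξ j k ω - (μ[ξ j k|F k]) ω)) atTop (𝓝 l) := by
    intro K
    have hK0 : (0:ℝ) ≤ K := Nat.cast_nonneg K
    have hp : ∀ j ∈ J, ∀ k, _ := fun j hj => transform_props (μ := μ) F
      (fun k => (G K k).indicator (H j k)) (ξ j) (hξm j hj) (hξi j hj)
      (fun k => (hH j hj k).indicator (hGm K k)) (fun k => |B k + K|) (by
        intro k ω
        by_cases hω : ω ∈ G K k
        · rw [Set.indicator_of_mem hω]
          have h1 := (hω k le_rfl).1
          have h2 : |H j k ω| ≤ h k ω :=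
            Finset.single_le_sum (f := fun j => |H j k ω|) (fun _ _ => abs_nonneg _) hj
          exact (h2.trans h1).trans (le_abs_self _)
        · rw [Set.indicator_of_notMem hω]; simp)
    set D : ℕ → Ω → ℝ := fun k ω => ∑ j ∈ J,
      (G K k).indicator (H j k) ω * (ξ j k ω - (μ[ξ j k|F k]) ω) with hD
    have hDm : ∀ k, StronglyMeasurable[F (k + 1)] (D k) := fun k =>
      Finset.stronglyMeasurable_fun_sum _ fun j hj => (hp j hj k).1
    have hDi : ∀ k, Integrable (D k) μ := fun k =>
      integrable_finsetSum _ fun j hj => (hp j hj k).2.1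
    have hD0 : ∀ k, μ[D k|F k] =ᵐ[μ] 0 := by
      intro k
      have h1 := condExp_finsetSum (μ := μ) (s := J)
        (f := fun j ω => (G K k).indicator (H j k) ω * (ξ j k ω - (μ[ξ j k|F k]) ω))
        (fun j hj => (hp j hj k).2.1) (F k)
      have h2 : ∀ᵐ ω ∂μ, ∀ j ∈ J, (μ[fun ω => (G K k).indicator (H j k) ω *
          (ξ j k ω - (μ[ξ j k|F k]) ω)|F k]) ω = 0 := by
        refine (ae_ball_iff (Finset.countable_toSet J)).2 ?_
        intro j hj
        exact (hp j hj k).2.2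
      have e : D k = ∑ j ∈ J,
        (fun ω => (G K k).indicator (H j k) ω * (ξ j k ω - (μ[ξ j k|F k]) ω)) := by
        ext ω; simp [hD]
      rw [e]
      filter_upwards [h1, h2] with ω h1 h2
      rw [h1, Finset.sum_apply]
      exact Finset.sum_eq_zero h2
    have hM := partial_martingale F D hDm hDi hD0
    have hlb : ∀ n, ∀ᵐ ω ∂μ, -(K:ℝ) ≤ ∑ k ∈ range n, D k ω := by
      intro n
      filter_upwards [hlow] with ω hω
      induction n with
      | zero => simp
      | succ n ih =>
        by_cases hωG : ω ∈ G K n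
        · have h1 := (hωG n le_rfl).2
          have h2 := hω n
          have h3 : ∑ k ∈ range (n + 1), D k ω = ∑ k ∈ range (n + 1), ∑ j ∈ J,
              H j k ω * (ξ j k ω - (μ[ξ j k|F k]) ω) := by
            refine Finset.sum_congr rfl fun k hk => ?_
            have : ω ∈ G K k := fun i hi => hωG i (by have := Finset.mem_range.1 hk; omega)
            simp [hD, Set.indicator_of_mem this]
          rw [h3]; linarith
        · rw [Finset.sum_range_succ]
          have : D n ω = 0 := by simp [hD, hωG]
          rw [this, add_zero]; exact ih
    apply conv_of_L1 F D hDm hDi hD0 (2 * K)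
    intro n
    have hz : ∫ ω, ∑ k ∈ range n, D k ω ∂μ = 0 := by
      rw [integral_finsetSum _ fun k _ => hDi k]
      refine Finset.sum_eq_zero fun k _ => ?_
      rw [← integral_condExp (F.le k), integral_congr_ae (hD0 k)]
      simp
    have hle : ∫ ω, |∑ k ∈ range n, D k ω| ∂μ ≤ ∫ ω, (∑ k ∈ range n, D k ω + 2 * K) ∂μ := by
      apply integral_mono_ae (hM.integrable n).abs ((hM.integrable n).add (integrable_const _))
      filter_upwards [hlb n] with ω hω
      simp only [Pi.add_apply]
      rw [abs_le]; constructor <;> linarith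
    rw [integral_add (hM.integrable n) (integrable_const _), hz] at hle
    simpa using hle
  rw [← ae_all_iff] at main
  filter_upwards [main, hΛb, hB] with ω hω ⟨C, hC⟩ ⟨K₁, hK₁⟩
  obtain ⟨K₂, hK₂⟩ := exists_nat_ge C
  have hmem : ∀ k, ω ∈ G (max K₁ K₂) k := by
    intro k i _
    constructor
    · refine (hK₁ i).trans ?_
      have : (K₁:ℝ) ≤ (max K₁ K₂ : ℕ) := by exact_mod_cast le_max_left _ _
      linarith
    · have : (K₂:ℝ) ≤ (max K₁ K₂ : ℕ) := by exact_mod_cast le_max_right _ _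
      linarith [hC i]
  obtain ⟨l, hl⟩ := hω (max K₁ K₂)
  refine ⟨l, ?_⟩
  simpa [Set.indicator_of_mem (hmem _)] using hl

end prob2
end Part2

section Part3
lemma kronecker_aux (D l : ℕ → ℝ) (hl : Monotone l) (hl0 : ∀ k, 0 < l k)
    (hlt : Tendsto l atTop atTop) (L : ℝ)
    (h : Tendsto (fun n => ∑ k ∈ range n, D k / l k) atTop (𝓝 L)) :
    (fun n => ∑ k ∈ range n, D k) =o[atTop] l := by
  set Z : ℕ → ℝ := fun n => ∑ k ∈ range n, D k / l k - L with hZ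
  have hZ0 : Tendsto Z atTop (𝓝 0) := by
    have := h.sub_const L
    simpa [hZ] using this
  have hid : ∀ n, ∑ k ∈ range n, D k = l n * Z n - l 0 * Z 0
      - ∑ k ∈ range n, (l (k + 1) - l k) * Z (k + 1) := by
    intro n
    induction n with
    | zero => simp
    | succ n ih =>
      rw [Finset.sum_range_succ, ih, Finset.sum_range_succ (fun k => (l (k + 1) - l k) * Z (k + 1))]
      have : Z (n + 1) = Z n + D n / l n := by
        simp only [hZ]; rw [Finset.sum_range_succ]; ring
      have hne := (hl0 n).ne'
      rw [this]; field_simp; ring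
  have hlt' : Tendsto (fun n => ‖l n‖) atTop atTop := tendsto_norm_atTop_atTop.comp hlt
  have h1 : (fun n => l n * Z n) =o[atTop] l := by
    have : (fun n => l n * Z n) =o[atTop] (fun n => l n * 1) :=
      (isBigO_refl l atTop).mul_isLittleO ((isLittleO_one_iff ℝ).2 hZ0)
    simpa using this
  have h2 : (fun _ : ℕ => l 0 * Z 0) =o[atTop] l :=
    isLittleO_const_left.2 (Or.inr hlt')
  have hsum : ∀ n, ∑ k ∈ range n, (l (k + 1) - l k) = l n - l 0 := fun n =>
    Finset.sum_range_sub l n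
  have h3 : (fun n => ∑ k ∈ range n, (l (k + 1) - l k) * Z (k + 1)) =o[atTop] l := by
    have h4 : (fun k => (l (k + 1) - l k) * Z (k + 1)) =o[atTop] (fun k => l (k + 1) - l k) := by
      have : (fun k => (l (k + 1) - l k) * Z (k + 1)) =o[atTop] (fun k => (l (k + 1) - l k) * 1) :=
        (isBigO_refl _ atTop).mul_isLittleO
          ((isLittleO_one_iff ℝ).2 (hZ0.comp (tendsto_add_atTop_nat 1)))
      simpa using this
    have h5 := h4.sum_range (fun k => sub_nonneg.2 (hl (Nat.le_succ k))) (by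
      simp only [hsum]
      exact tendsto_atTop_add_const_right _ _ hlt)
    simp only [hsum] at h5
    refine h5.trans_isBigO ?_
    exact (isBigO_refl l atTop).sub (isLittleO_const_left.2 (Or.inr hlt')).isBigO
  have := (h1.sub h2).sub h3
  refine this.congr_left fun n => (hid n).symm

lemma log_tend : Tendsto (fun n : ℕ => Real.log n) atTop atTop :=
  Real.tendsto_log_atTop.comp tendsto_natCast_atTop_atTop

lemma harm_bigO : (fun n : ℕ => ∑ k ∈ range n, ((k:ℝ) + 1)⁻¹) =O[atTop] (fun n : ℕ => Real.log n) := by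
  have h : ∀ n : ℕ, ∑ k ∈ range n, ((k:ℝ) + 1)⁻¹ = (harmonic n : ℝ) := by
    intro n; simp [harmonic]
  have h1 : (fun n : ℕ => (1 + Real.log n)) =O[atTop] (fun n : ℕ => Real.log n) :=
    (isLittleO_const_left.2 (Or.inr (tendsto_norm_atTop_atTop.comp log_tend))).isBigO.add
      (isBigO_refl _ _)
  refine IsBigO.trans (IsBigO.of_bound 1 ?_) h1
  filter_upwards [] with n
  rw [h, one_mul, Real.norm_of_nonneg, Real.norm_of_nonneg]
  · exact harmonic_le_one_add_log n
  · have := Real.log_natCast_nonneg n; positivity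
  · rw [← h]; positivity

lemma harm_lim : (fun n : ℕ => ∑ k ∈ range n, ((k:ℝ) + 1)⁻¹ - Real.log n) =o[atTop]
    (fun n : ℕ => Real.log n) := by
  have h : ∀ n : ℕ, ∑ k ∈ range n, ((k:ℝ) + 1)⁻¹ = (harmonic n : ℝ) := by
    intro n; simp [harmonic]
  have := Real.tendsto_harmonic_sub_log
  have h2 : (fun n : ℕ => ∑ k ∈ range n, ((k:ℝ) + 1)⁻¹ - Real.log n) =O[atTop]
      (fun _ => (1:ℝ)) := by
    simp only [h]
    exact this.isBigO_one ℝ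
  exact h2.trans_isLittleO (isLittleO_const_left.2 (Or.inr (tendsto_norm_atTop_atTop.comp log_tend)))

lemma sum_littleO (x y δ : ℕ → ℝ) (hxy : ∀ᶠ k in atTop, |x k| ≤ δ k * y k)
    (hδ : Tendsto δ atTop (𝓝 0)) (hy : ∀ k, 0 ≤ y k)
    (hY : (fun n => ∑ k ∈ range n, y k) =O[atTop] (fun n : ℕ => Real.log n)) :
    (fun n => ∑ k ∈ range n, x k) =o[atTop] (fun n : ℕ => Real.log n) := by
  have h1 : x =o[atTop] (fun k => y k + ((k:ℝ) + 1)⁻¹) := by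
    have a1 : x =O[atTop] (fun k => δ k * y k) := by
      refine IsBigO.of_bound 1 ?_
      filter_upwards [hxy] with k hk
      rw [one_mul, Real.norm_eq_abs]
      exact hk.trans (le_abs_self _)
    have a2 : (fun k => δ k * y k) =o[atTop] (fun k => 1 * y k) :=
      ((isLittleO_one_iff ℝ).2 hδ).mul_isBigO (isBigO_refl _ _)
    refine (a1.trans_isLittleO a2).trans_isBigO (IsBigO.of_bound 1 ?_)
    filter_upwards [] with k
    have := hy k
    have h2 : (0:ℝ) ≤ ((k:ℝ) + 1)⁻¹ := by positivity
    rw [one_mul, one_mul, Real.norm_of_nonneg this, Real.norm_of_nonneg (by positivity)]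
    linarith
  have h2 := h1.sum_range (fun k => by have := hy k; positivity) (by
    have : Tendsto (fun n : ℕ => ∑ k ∈ range n, ((k:ℝ) + 1)⁻¹) atTop atTop := by
      have := Real.tendsto_sum_range_one_div_nat_succ_atTop
      simpa [one_div] using this
    refine tendsto_atTop_mono (fun n => ?_) this
    refine Finset.sum_le_sum fun k _ => ?_
    linarith [hy k])
  refine h2.trans_isBigO ?_
  simp only [Finset.sum_add_distrib]
  exact hY.add harm_bigO

lemma bigO_of_le (x y : ℕ → ℝ) (hx : ∀ n, 0 ≤ x n) (C : ℝ) (hxy : ∀ n, x n ≤ C * y n)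
    (hy : y =O[atTop] (fun n : ℕ => Real.log n)) : x =O[atTop] (fun n : ℕ => Real.log n) := by
  refine IsBigO.trans (IsBigO.of_bound |C| ?_) hy
  filter_upwards [] with n
  rw [Real.norm_of_nonneg (hx n)]
  refine (hxy n).trans ?_
  rw [Real.norm_eq_abs, ← abs_mul]; exact le_abs_self _

lemma const_littleO (c : ℝ) : (fun _ : ℕ => c) =o[atTop] (fun n : ℕ => Real.log n) :=
  isLittleO_const_left.2 (Or.inr (tendsto_norm_atTop_atTop.comp log_tend))

lemma log_compare (s : ℕ → ℝ) (c : ℝ) (hc : 0 < c) (hs : ∀ n, 3 ≤ s n)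
    (h : Tendsto (fun n : ℕ => (n:ℝ)⁻¹ * s n) atTop (𝓝 c)) :
    (fun n => Real.log (s n)) =O[atTop] (fun n : ℕ => Real.log n) := by
  have h1 : ∀ᶠ n : ℕ in atTop, Real.log (s n) = Real.log n + Real.log ((n:ℝ)⁻¹ * s n) := by
    filter_upwards [eventually_gt_atTop 0] with n hn
    have : (0:ℝ) < n := by exact_mod_cast hn
    have h3 := hs n
    rw [← Real.log_mul this.ne' (by positivity)]
    congr 1; field_simp
  have h2 : Tendsto (fun n : ℕ => Real.log ((n:ℝ)⁻¹ * s n)) atTop (𝓝 (Real.log c)) :=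
    h.log hc.ne'
  refine IsBigO.congr' (f₁ := fun n : ℕ => Real.log n + Real.log ((n:ℝ)⁻¹ * s n)) ?_
    (h1.mono fun n hn => hn.symm) EventuallyEq.rfl
  exact (isBigO_refl _ _).add ((h2.isBigO_one ℝ).trans (const_littleO 1).isBigO)

lemma ode_aux (I : ℕ → ℝ) (p c : ℝ) (hp : 0 < p)
    (h : (fun n : ℕ => ((n:ℝ) + 1) * (I (n + 1) - I n) + p * I n - c * Real.log n) =o[atTop]
      (fun n : ℕ => Real.log n)) :
    (fun n : ℕ => I n - c / p * Real.log n) =o[atTop] (fun n : ℕ => Real.log n) := by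
  set J : ℕ → ℝ := fun n => I n - c / p * Real.log n with hJ
  set R : ℕ → ℝ := fun n => ((n:ℝ) + 1) * (J (n + 1) - J n) + p * J n with hR
  have hRo : R =o[atTop] (fun n : ℕ => Real.log n) := by
    have hb : (fun n : ℕ => c / p * (((n:ℝ) + 1) * (Real.log ((n + 1 : ℕ):ℝ) - Real.log n)))
        =O[atTop] (fun _ : ℕ => (1:ℝ)) := by
      refine IsBigO.const_mul_left (IsBigO.of_bound 2 ?_) _
      filter_upwards [eventually_ge_atTop 1] with n hn
      have h1 : (1:ℝ) ≤ n := by exact_mod_cast hn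
      have h0 : (0:ℝ) < n := by linarith
      have hlog : Real.log ((n + 1 : ℕ):ℝ) - Real.log n ≤ 1 / n := by
        rw [← Real.log_div (by positivity) (by positivity)]
        refine (Real.log_le_sub_one_of_pos (by positivity)).trans (le_of_eq ?_)
        push_cast; field_simp; ring
      have hlog0 : 0 ≤ Real.log ((n + 1 : ℕ):ℝ) - Real.log n :=
        sub_nonneg.2 (Real.log_le_log h0 (by push_cast; linarith))
      rw [Real.norm_of_nonneg (by positivity), norm_one]
      calc ((n:ℝ) + 1) * (Real.log ((n + 1 : ℕ):ℝ) - Real.log n) ≤ (n + 1) * (1 / n) :=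
            mul_le_mul_of_nonneg_left hlog (by positivity)
        _ ≤ 2 * 1 := by rw [mul_one_div, div_le_iff₀ h0]; linarith
    have := h.sub (hb.trans_isLittleO (const_littleO 1))
    refine this.congr_left fun n => ?_
    simp only [hR, hJ]
    field_simp
    ring
  rw [isLittleO_iff] at hRo ⊢
  intro η hη
  have hη2 : 0 < η / 2 := by positivity
  obtain ⟨N, hN⟩ := eventually_atTop.1 ((hRo (mul_pos hp hη2)).and
    (tendsto_natCast_atTop_atTop.eventually_ge_atTop p : ∀ᶠ n : ℕ in atTop, p ≤ (n:ℝ)))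
  have hind : ∀ n, N ≤ n → |J n| ≤ |J N| + η / 2 * Real.log n := by
    intro n hn
    induction n, hn using Nat.le_induction with
    | base =>
      have := Real.log_natCast_nonneg N
      nlinarith
    | succ n hn ih =>
      obtain ⟨h1, h2⟩ := hN n hn
      have hln := Real.log_natCast_nonneg n
      rw [Real.norm_eq_abs, Real.norm_of_nonneg hln] at h1
      have hn1 : (0:ℝ) < (n:ℝ) + 1 := by positivity
      have hn0 : (0:ℝ) < n := lt_of_lt_of_le hp h2
      have hmono : Real.log n ≤ Real.log ((n + 1 : ℕ):ℝ) :=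
        Real.log_le_log hn0 (by push_cast; linarith)
      set δ := p / ((n:ℝ) + 1) with hδ
      have hδ0 : 0 ≤ δ := by positivity
      have hδ1 : δ ≤ 1 := (div_le_one hn1).2 (by linarith)
      have e : J (n + 1) = (1 - δ) * J n + R n / ((n:ℝ) + 1) := by
        simp only [hR, hδ]; field_simp; ring
      have hr : |R n / ((n:ℝ) + 1)| ≤ δ * (η / 2 * Real.log n) := by
        rw [abs_div, abs_of_pos hn1, hδ, div_mul_eq_mul_div]
        apply div_le_div_of_nonneg_right _ hn1.le
        linarith
      have h3 : |J (n + 1)| ≤ (1 - δ) * |J n| + δ * (η / 2 * Real.log n) := by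
        rw [e]
        refine (abs_add_le _ _).trans (add_le_add ?_ hr)
        rw [abs_mul, abs_of_nonneg (by linarith)]
      have h4 : (1 - δ) * |J n| ≤ (1 - δ) * (|J N| + η / 2 * Real.log n) :=
        mul_le_mul_of_nonneg_left ih (by linarith)
      have h5 : 0 ≤ δ * |J N| := by positivity
      have h6 : η / 2 * Real.log n ≤ η / 2 * Real.log ((n + 1 : ℕ):ℝ) :=
        mul_le_mul_of_nonneg_left hmono hη2.le
      nlinarith
  have hC := isLittleO_iff.1 (const_littleO |J N|) hη2
  filter_upwards [hC, eventually_ge_atTop N] with n h1 h2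
  have := hind n h2
  rw [Real.norm_eq_abs, Real.norm_of_nonneg (Real.log_natCast_nonneg n)] at *
  rw [abs_abs] at h1
  linarith

lemma log3 : (1:ℝ) < Real.log 3 := by
  rw [Real.lt_log_iff_exp_lt (by norm_num)]
  linarith [Real.exp_one_lt_d9]

lemma base_summable (s : ℕ → ℝ) (hs : Monotone s) (h3 : ∀ n, 3 ≤ s n) (q : ℝ) (hq : 1 < q) :
    Summable (fun k => (s (k + 1) - s k) / s (k + 1) * Real.log (s (k + 1)) ^ (-q)) := by
  have hl : ∀ n, 1 < Real.log (s n) := fun n =>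
    log3.trans_le (Real.log_le_log (by norm_num) (h3 n))
  have hnn : ∀ k, 0 ≤ (s (k + 1) - s k) / s (k + 1) * Real.log (s (k + 1)) ^ (-q) := fun k => by
    have := hs (Nat.le_succ k)
    have := h3 (k + 1)
    have := hl (k + 1)
    have : 0 ≤ s (k + 1) - s k := by linarith
    positivity
  have hstep : ∀ k, (q - 1) * ((s (k + 1) - s k) / s (k + 1) * Real.log (s (k + 1)) ^ (-q)) ≤
      Real.log (s k) ^ (1 - q) - Real.log (s (k + 1)) ^ (1 - q) := by
    intro k
    have h1 := hs (Nat.le_succ k)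
    have h2 := h3 k
    have h2' := h3 (k + 1)
    set u := Real.log (s k) with hu
    set v := Real.log (s (k + 1)) with hv
    have hu1 : 1 < u := hl k
    have hv1 : 1 < v := hl (k + 1)
    have hd : (s (k + 1) - s k) / s (k + 1) ≤ v - u := by
      have := Real.log_le_sub_one_of_pos (show 0 < s k / s (k + 1) by positivity)
      rw [Real.log_div (by positivity) (by positivity)] at this
      have e : (s (k + 1) - s k) / s (k + 1) = 1 - s k / s (k + 1) := by
        rw [sub_div, div_self (by positivity)]
      rw [e]; linarith
    -- Bernoulli
    have hBer : 1 + (1 - q) * (u / v - 1) ≤ (u / v) ^ (1 - q) := by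
      have ht : 0 < u / v := by positivity
      have h5 := Real.log_le_sub_one_of_pos ht
      rw [Real.rpow_def_of_pos ht]
      have h6 := Real.add_one_le_exp (Real.log (u / v) * (1 - q))
      nlinarith
    have hmul : v ^ (1 - q) * (1 + (1 - q) * (u / v - 1)) ≤ u ^ (1 - q) := by
      have e : u ^ (1 - q) = v ^ (1 - q) * (u / v) ^ (1 - q) := by
        rw [← Real.mul_rpow (by positivity) (by positivity)]
        congr 1; field_simp
      rw [e]
      exact mul_le_mul_of_nonneg_left hBer (by positivity)
    have e2 : v ^ (1 - q) = v * v ^ (-q) := by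
      rw [sub_eq_add_neg, Real.rpow_add (by positivity), Real.rpow_one]
    have e3 : v ^ (1 - q) * (1 + (1 - q) * (u / v - 1)) =
        v ^ (1 - q) + (q - 1) * ((v - u) * v ^ (-q)) := by
      rw [e2]; field_simp; ring
    have e4 : (q - 1) * ((s (k + 1) - s k) / s (k + 1) * v ^ (-q)) ≤
        (q - 1) * ((v - u) * v ^ (-q)) := by
      apply mul_le_mul_of_nonneg_left _ (by linarith)
      exact mul_le_mul_of_nonneg_right hd (by positivity)
    linarith
  refine summable_of_sum_range_le (c := Real.log (s 0) ^ (1 - q) / (q - 1)) hnn fun n => ?_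
  rw [le_div_iff₀ (by linarith), mul_comm, Finset.mul_sum]
  refine (Finset.sum_le_sum fun k _ => hstep k).trans ?_
  rw [Finset.sum_range_sub' (fun k => Real.log (s k) ^ (1 - q))]
  have : 0 ≤ Real.log (s n) ^ (1 - q) := Real.rpow_nonneg (by linarith [hl n]) _
  linarith

lemma base_sum_le (s : ℕ → ℝ) (h3 : ∀ n, 3 ≤ s n) (n : ℕ) :
    ∑ k ∈ range n, (s (k + 1) - s k) / s (k + 1) ≤ Real.log (s n) := by
  have hd : ∀ k, (s (k + 1) - s k) / s (k + 1) ≤ Real.log (s (k + 1)) - Real.log (s k) := by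
    intro k
    have h2 := h3 k
    have h2' := h3 (k + 1)
    have := Real.log_le_sub_one_of_pos (show 0 < s k / s (k + 1) by positivity)
    rw [Real.log_div (by positivity) (by positivity)] at this
    have e : (s (k + 1) - s k) / s (k + 1) = 1 - s k / s (k + 1) := by
      rw [sub_div, div_self (by positivity)]
    rw [e]; linarith
  refine (Finset.sum_le_sum fun k _ => hd k).trans ?_
  rw [Finset.sum_range_sub (fun k => Real.log (s k))]
  have := Real.log_nonneg (show 1 ≤ s 0 by linarith [h3 0])
  linarith
end Part3

section Part4
def nrm {d : ℕ} (x : Fin d → ℝ) : ℝ := Real.sqrt (x ⬝ᵥ x)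

lemma dot_nn {d : ℕ} (x : Fin d → ℝ) : 0 ≤ x ⬝ᵥ x :=
  Finset.sum_nonneg fun i _ => mul_self_nonneg _

lemma nrm_nn {d : ℕ} (x : Fin d → ℝ) : 0 ≤ nrm x := Real.sqrt_nonneg _

lemma nrm_sq {d : ℕ} (x : Fin d → ℝ) : nrm x ^ 2 = x ⬝ᵥ x := Real.sq_sqrt (dot_nn x)

lemma dot_le {d : ℕ} (x y : Fin d → ℝ) : |x ⬝ᵥ y| ≤ nrm x * nrm y := by
  apply abs_le_of_sq_le_sq _ (mul_nonneg (nrm_nn x) (nrm_nn y))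
  rw [mul_pow, nrm_sq, nrm_sq]
  have := Finset.sum_mul_sq_le_sq_mul_sq Finset.univ x y
  simpa [dotProduct, pow_two] using this

lemma coord_le {d : ℕ} (x : Fin d → ℝ) (i : Fin d) : |x i| ≤ nrm x := by
  apply abs_le_of_sq_le_sq _ (nrm_nn x)
  rw [nrm_sq, pow_two]
  exact Finset.single_le_sum (f := fun i => x i * x i) (fun i _ => mul_self_nonneg _) (Finset.mem_univ i)

structure PC {d : ℕ} (w : (Fin d → ℝ) → ℝ) (D : ℕ)
    (q : (Fin d → ℝ) → (Fin d → ℝ) → Polynomial ℝ) : Prop where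
  ev : ∀ x y t, w (x + t • y) = (q x y).eval t
  deg : ∀ x y, (q x y).natDegree ≤ D
  bd : ∀ j, ∃ C, 0 ≤ C ∧ ∀ x y, j ≤ D → |(q x y).coeff j| ≤ C * (nrm x ^ (D - j) * nrm y ^ j)
  ct : ∀ j, Continuous (fun z : (Fin d → ℝ) × (Fin d → ℝ) => (q z.1 z.2).coeff j)

variable {d : ℕ}

lemma PC.c0 {w : (Fin d → ℝ) → ℝ} {D q} (h : PC w D q) (x y) : (q x y).coeff 0 = w x := by
  have := h.ev x y 0
  simp only [zero_smul, add_zero] at this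
  rw [this, Polynomial.coeff_zero_eq_eval_zero]

lemma PC.expand {w : (Fin d → ℝ) → ℝ} {D q} (h : PC w D q) (x y) (t : ℝ) :
    w (x + t • y) - w x = ∑ j ∈ Finset.Icc 1 D, (q x y).coeff j * t ^ j := by
  rw [h.ev, Polynomial.eval_eq_sum_range' (Nat.lt_succ_of_le (h.deg x y)), Finset.sum_range_succ',
    h.c0]
  simp only [pow_zero, mul_one, add_sub_cancel_right]
  rw [Finset.sum_bij (fun j _ => j + 1)]
  · intro j hj; simp at hj ⊢; omega
  · intro j hj k hk; omega
  · intro j hj; simp at hj; exact ⟨j - 1, by simp; omega, by omega⟩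
  · intro j hj; rfl

lemma PC.bdd {w : (Fin d → ℝ) → ℝ} {D q} (h : PC w D q) : ∃ C, 0 ≤ C ∧ ∀ x y, ∀ j ≤ D,
    |(q x y).coeff j| ≤ C * (nrm x ^ (D - j) * nrm y ^ j) := by
  choose C hC0 hC using h.bd
  refine ⟨∑ j ∈ range (D+1), C j, Finset.sum_nonneg fun j _ => hC0 j, fun x y j hj => ?_⟩
  refine (hC j x y hj).trans (mul_le_mul_of_nonneg_right ?_ ?_)
  · exact Finset.single_le_sum (f := C) (fun j _ => hC0 j) (by simp; omega)
  · have := nrm_nn x; have := nrm_nn y; positivity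

lemma PC.wbd {w : (Fin d → ℝ) → ℝ} {D q} (h : PC w D q) : ∃ C, 0 ≤ C ∧ ∀ x,
    |w x| ≤ C * nrm x ^ D := by
  obtain ⟨C, hC, hb⟩ := h.bdd
  refine ⟨C, hC, fun x => ?_⟩
  have := hb x 0 0 (Nat.zero_le _)
  rw [h.c0] at this
  simpa using this

lemma PC.const (c : ℝ) : PC (d := d) (fun _ => c) 0 (fun _ _ => Polynomial.C c) where
  ev := by simp
  deg := by simp
  bd := fun j => ⟨|c|, abs_nonneg _, fun x y hj => by
    obtain rfl : j = 0 := by omega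
    simp⟩
  ct := fun j => by exact continuous_const

lemma PC.coord (i : Fin d) : PC (fun x => x i) 1
    (fun x y => Polynomial.C (x i) + Polynomial.C (y i) * Polynomial.X) where
  ev := by intro x y t; simp; ring
  deg := by intro x y; rw [add_comm]; exact Polynomial.natDegree_linear_le
  bd := fun j => ⟨1, zero_le_one, fun x y hj => by
    interval_cases j
    · simpa using coord_le x i
    · simpa [Polynomial.coeff_C] using coord_le y i⟩
  ct := fun j => by
    rcases j with _ | _ | j
    · simp; fun_prop
    · simp [Polynomial.coeff_C]; fun_prop
    · simp [Polynomial.coeff_C, Polynomial.coeff_X]; exact continuous_const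

lemma PC.mul {w w' : (Fin d → ℝ) → ℝ} {D D' q q'} (h : PC w D q) (h' : PC w' D' q') :
    PC (fun x => w x * w' x) (D + D') (fun x y => q x y * q' x y) where
  ev := by intro x y t; simp [h.ev, h'.ev]
  deg := fun x y => Polynomial.natDegree_mul_le.trans (Nat.add_le_add (h.deg x y) (h'.deg x y))
  bd := fun j => by
    obtain ⟨C, hC, hb⟩ := h.bdd
    obtain ⟨C', hC', hb'⟩ := h'.bdd
    refine ⟨∑ z ∈ Finset.HasAntidiagonal.antidiagonal j, C * C', Finset.sum_nonneg fun _ _ => by positivity, ?_⟩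
    intro x y hj
    rw [Polynomial.coeff_mul, Finset.sum_mul]
    refine (Finset.abs_sum_le_sum_abs _ _).trans (Finset.sum_le_sum ?_)
    rintro ⟨i, k⟩ hik
    rw [Finset.HasAntidiagonal.mem_antidiagonal] at hik
    dsimp only at hik ⊢
    have hx := nrm_nn x
    have hy := nrm_nn y
    by_cases hi : i ≤ D
    · by_cases hk : k ≤ D'
      · rw [abs_mul]
        refine (mul_le_mul (hb x y i hi) (hb' x y k hk) (abs_nonneg _) (by positivity)).trans (le_of_eq ?_)
        rw [show D + D' - j = (D - i) + (D' - k) by omega, ← hik, pow_add, pow_add]; ring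
      · rw [Polynomial.coeff_eq_zero_of_natDegree_lt (p := q' x y) ((h'.deg x y).trans_lt (by omega))]
        rw [mul_zero, abs_zero]; positivity
    · rw [Polynomial.coeff_eq_zero_of_natDegree_lt (p := q x y) ((h.deg x y).trans_lt (by omega))]
      rw [zero_mul, abs_zero]; positivity
  ct := fun j => by
    simp only [Polynomial.coeff_mul]
    exact continuous_finsetSum _ fun z _ => (h.ct _).mul (h'.ct _)

lemma PC.add {w w' : (Fin d → ℝ) → ℝ} {D q q'} (h : PC w D q) (h' : PC w' D q') :
    PC (fun x => w x + w' x) D (fun x y => q x y + q' x y) where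
  ev := by intro x y t; simp [h.ev, h'.ev]
  deg := fun x y => (Polynomial.natDegree_add_le _ _).trans (max_le (h.deg x y) (h'.deg x y))
  bd := fun j => by
    obtain ⟨C, hC, hb⟩ := h.bd j
    obtain ⟨C', hC', hb'⟩ := h'.bd j
    refine ⟨C + C', by positivity, fun x y hj => ?_⟩
    rw [Polynomial.coeff_add, add_mul]
    exact (abs_add_le _ _).trans (add_le_add (hb x y hj) (hb' x y hj))
  ct := fun j => by
    simp only [Polynomial.coeff_add]
    exact (h.ct _).add (h'.ct _)

lemma PC.dot : PC (d := d) (fun x => x ⬝ᵥ x) 2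
    (fun x y => Polynomial.C (y ⬝ᵥ y) * Polynomial.X ^ 2 +
      Polynomial.C (2 * (x ⬝ᵥ y)) * Polynomial.X + Polynomial.C (x ⬝ᵥ x)) where
  ev := by
    intro x y t
    simp [dotProduct_comm y x]; ring
  deg := fun x y => Polynomial.natDegree_quadratic_le
  bd := fun j => ⟨2, zero_le_two, fun x y hj => by
    have hx := dot_nn x
    have hy := dot_nn y
    interval_cases j
    · simp [nrm_sq, abs_of_nonneg hx]; linarith
    · simp [Polynomial.coeff_C, abs_mul]; exact dot_le x y
    · simp [Polynomial.coeff_C, Polynomial.coeff_X, nrm_sq, abs_of_nonneg hy]; linarith⟩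
  ct := fun j => by
    have c1 : Continuous fun z : (Fin d → ℝ) × (Fin d → ℝ) => z.1 ⬝ᵥ z.1 := by
      simp only [dotProduct]; fun_prop
    have c2 : Continuous fun z : (Fin d → ℝ) × (Fin d → ℝ) => z.1 ⬝ᵥ z.2 := by
      simp only [dotProduct]; fun_prop
    have c3 : Continuous fun z : (Fin d → ℝ) × (Fin d → ℝ) => z.2 ⬝ᵥ z.2 := by
      simp only [dotProduct]; fun_prop
    rcases j with _ | _ | _ | j
    · simpa using c1
    · simpa [Polynomial.coeff_C] using c2.const_mul 2
    · simpa [Polynomial.coeff_C, Polynomial.coeff_X] using c3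
    · simp [Polynomial.coeff_C, Polynomial.coeff_X, Polynomial.coeff_X_pow]; exact continuous_const

def qd (x y : Fin d → ℝ) : Polynomial ℝ := Polynomial.C (y ⬝ᵥ y) * Polynomial.X ^ 2 +
      Polynomial.C (2 * (x ⬝ᵥ y)) * Polynomial.X + Polynomial.C (x ⬝ᵥ x)

lemma PC.dotpow (m : ℕ) : PC (d := d) (fun x => (x ⬝ᵥ x) ^ m) (2 * m) (fun x y => qd x y ^ m) := by
  induction m with
  | zero => simpa using PC.const (d := d) 1
  | succ m ih =>
    have h := ih.mul PC.dot
    have e : (fun x y : Fin d → ℝ => qd x y ^ (m+1)) = fun x y => qd x y ^ m * qd x y := by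
      funext x y; rw [pow_succ]
    have e1 : (fun x : Fin d → ℝ => (x ⬝ᵥ x) ^ (m+1)) = fun x => (x ⬝ᵥ x) ^ m * (x ⬝ᵥ x) := by
      funext x; rw [pow_succ]
    rw [e, e1]
    exact h

lemma qd0 (x y : Fin d → ℝ) (m : ℕ) : (qd x y ^ m).coeff 0 = (x ⬝ᵥ x) ^ m :=
  (PC.dotpow m).c0 x y

lemma qd_c0 (x y : Fin d → ℝ) : (qd x y).coeff 0 = x ⬝ᵥ x := by simp [qd]
lemma qd_c1 (x y : Fin d → ℝ) : (qd x y).coeff 1 = 2 * (x ⬝ᵥ y) := by simp [qd, Polynomial.coeff_C]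
lemma qd_c2 (x y : Fin d → ℝ) : (qd x y).coeff 2 = y ⬝ᵥ y := by
  simp [qd, Polynomial.coeff_C, Polynomial.coeff_X]

lemma qd1 (x y : Fin d → ℝ) (m : ℕ) :
    (qd x y ^ (m+1)).coeff 1 = (m+1) * (x ⬝ᵥ x) ^ m * (2 * (x ⬝ᵥ y)) := by
  induction m with
  | zero => simp [qd_c1]
  | succ m ih =>
    rw [pow_succ, Polynomial.coeff_mul]
    simp only [Finset.Nat.antidiagonal_succ, Finset.Nat.antidiagonal_zero]
    simp [ih, qd0, qd_c0, qd_c1]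
    ring

lemma qd2 (x y : Fin d → ℝ) (m : ℕ) :
    (qd x y ^ (m+1)).coeff 2 = (m+1) * (x ⬝ᵥ x) ^ m * (y ⬝ᵥ y)
      + 2 * (m+1) * m * (x ⬝ᵥ x) ^ (m-1) * (x ⬝ᵥ y) ^ 2 := by
  induction m with
  | zero => simp [qd_c2]
  | succ m ih =>
    rw [pow_succ, Polynomial.coeff_mul]
    simp only [Finset.Nat.antidiagonal_succ, Finset.Nat.antidiagonal_zero]
    simp [ih, qd0, qd1, qd_c0, qd_c1, qd_c2]
    rcases m with _ | m
    · simp; ring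
    · simp; ring
end Part4

section P5
variable {Ω : Type*} {m0 : MeasurableSpace Ω} {d : ℕ}

def ss (Ψ : ℕ → Ω → Fin d → ℝ) (k : ℕ) (ω : Ω) : ℝ := 3 + ∑ l ∈ range k, Ψ l ω ⬝ᵥ Ψ l ω
def uu (N Ψ : ℕ → Ω → Fin d → ℝ) (k : ℕ) (ω : Ω) : ℝ := nrm (N k ω) / √(ss Ψ k ω)
def zz (Ψ : ℕ → Ω → Fin d → ℝ) (k : ℕ) (ω : Ω) : ℝ := nrm (Ψ k ω) / √(ss Ψ (k+1) ω)
def ll (Ψ : ℕ → Ω → Fin d → ℝ) (k : ℕ) (ω : Ω) : ℝ := Real.log (ss Ψ (k+1) ω)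

structure Setup (μ : Measure Ω) (F : Filtration ℕ m0) (e : ℕ → Ω → ℝ)
    (N Ψ : ℕ → Ω → Fin d → ℝ) (σ a : ℝ) (p : ℕ) : Prop where
  hd : 0 < d
  hp : 1 ≤ p
  ha : 2 * p < a
  hem : ∀ k, StronglyMeasurable[F (k+1)] (e k)
  hei : ∀ k, Integrable (fun ω => |e k ω| ^ a) μ
  hmds : ∀ k, μ[e k|F k] =ᵐ[μ] 0
  hvar : ∀ k, μ[fun ω => e k ω ^ 2|F k] =ᵐ[μ] fun _ => σ ^ 2
  hmom : ∀ᵐ ω ∂μ, ∃ C : ℝ, ∀ k, (μ[fun ω => |e k ω| ^ a|F k]) ω ≤ C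
  hNm : ∀ k, StronglyMeasurable[F k] (N k)
  hΨm : ∀ k, StronglyMeasurable[F k] (Ψ k)
  hstep : ∀ k ω, N (k+1) ω = N k ω + e k ω • Ψ k ω
  hconv : ∀ᵐ ω ∂μ, ∀ i j, Tendsto (fun n : ℕ => (n:ℝ)⁻¹ * ∑ k ∈ range n, Ψ k ω i * Ψ k ω j) atTop
    (𝓝 (if i = j then 1 else 0))

variable {N Ψ : ℕ → Ω → Fin d → ℝ}

lemma ss3 (k ω) : 3 ≤ ss Ψ k ω := by
  have : 0 ≤ ∑ l ∈ range k, Ψ l ω ⬝ᵥ Ψ l ω := Finset.sum_nonneg fun l _ => dot_nn _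
  unfold ss; linarith

lemma ss_succ (k ω) : ss Ψ (k+1) ω = ss Ψ k ω + Ψ k ω ⬝ᵥ Ψ k ω := by
  simp only [ss, Finset.sum_range_succ]; ring

lemma ss_mono (ω) : Monotone (fun k => ss Ψ k ω) :=
  monotone_nat_of_le_succ fun k => by
    rw [ss_succ]; linarith [dot_nn (Ψ k ω)]

lemma uu_nn (k ω) : 0 ≤ uu N Ψ k ω := div_nonneg (nrm_nn _) (Real.sqrt_nonneg _)
lemma zz_nn (k ω) : 0 ≤ zz Ψ k ω := div_nonneg (nrm_nn _) (Real.sqrt_nonneg _)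
lemma uu_sq (k ω) : uu N Ψ k ω ^ 2 = (N k ω ⬝ᵥ N k ω) / ss Ψ k ω := by
  rw [uu, div_pow, nrm_sq, Real.sq_sqrt (by linarith [ss3 (Ψ := Ψ) k ω])]
lemma uu_pow (m k ω) : uu N Ψ k ω ^ (2 * m) = (N k ω ⬝ᵥ N k ω) ^ m / ss Ψ k ω ^ m := by
  rw [pow_mul, uu_sq, div_pow]
lemma zz_sq (k ω) : zz Ψ k ω ^ 2 = (Ψ k ω ⬝ᵥ Ψ k ω) / ss Ψ (k+1) ω := by
  rw [zz, div_pow, nrm_sq, Real.sq_sqrt (by linarith [ss3 (Ψ := Ψ) (k+1) ω])]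
lemma zz_sq' (k ω) : zz Ψ k ω ^ 2 = (ss Ψ (k+1) ω - ss Ψ k ω) / ss Ψ (k+1) ω := by
  rw [zz_sq, ss_succ]; ring
lemma zz_le (k ω) : zz Ψ k ω ≤ 1 := by
  have h : zz Ψ k ω ^ 2 ≤ 1 := by
    have h1 := ss3 (Ψ := Ψ) (k+1) ω
    have h2 := ss3 (Ψ := Ψ) k ω
    rw [zz_sq', div_le_one (by linarith)]; linarith
  nlinarith [zz_nn (Ψ := Ψ) k ω]
lemma ll_gt (k ω) : 1 < ll Ψ k ω :=
  log3.trans_le (Real.log_le_log (by norm_num) (ss3 (k+1) ω))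
lemma lg_gt (k ω) : 1 < Real.log (ss Ψ k ω) :=
  log3.trans_le (Real.log_le_log (by norm_num) (ss3 k ω))
lemma lg_le (k ω) : Real.log (ss Ψ k ω) ≤ ll Ψ k ω :=
  Real.log_le_log (by linarith [ss3 (Ψ := Ψ) k ω]) (ss_mono ω (Nat.le_succ k))

/-- normalised coefficient bound -/
lemma coef_bd {w : (Fin d → ℝ) → ℝ} {m q} (h : PC w (2 * m) q) : ∃ C, 0 ≤ C ∧ ∀ k ω, ∀ j ≤ 2 * m,
    (ss Ψ (k+1) ω ^ m)⁻¹ * |(q (N k ω) (Ψ k ω)).coeff j| ≤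
      C * (uu N Ψ k ω ^ (2 * m - j) * zz Ψ k ω ^ j) := by
  obtain ⟨C, hC, hb⟩ := h.bdd
  refine ⟨C, hC, fun k ω j hj => ?_⟩
  have h1 := ss3 (Ψ := Ψ) (k+1) ω
  have h2 := ss3 (Ψ := Ψ) k ω
  have h3 : ss Ψ k ω ≤ ss Ψ (k+1) ω := ss_mono ω (Nat.le_succ k)
  set s' := ss Ψ (k+1) ω
  have hs' : s' ^ m = √s' ^ (2 * m - j) * √s' ^ j := by
    rw [← pow_add, Nat.sub_add_cancel hj, pow_mul, Real.sq_sqrt (by linarith)]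
  have hx := nrm_nn (N k ω)
  have hy := nrm_nn (Ψ k ω)
  have h4 : 0 < √s' := Real.sqrt_pos.2 (by linarith)
  have h5 : 0 < √(ss Ψ k ω) := Real.sqrt_pos.2 (by linarith)
  calc (s' ^ m)⁻¹ * |(q (N k ω) (Ψ k ω)).coeff j|
      ≤ (s' ^ m)⁻¹ * (C * (nrm (N k ω) ^ (2 * m - j) * nrm (Ψ k ω) ^ j)) :=
        mul_le_mul_of_nonneg_left (hb _ _ j hj) (by positivity)
    _ = C * ((nrm (N k ω) / √s') ^ (2 * m - j) * (nrm (Ψ k ω) / √s') ^ j) := by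
        rw [hs', div_pow, div_pow]; field_simp
    _ ≤ _ := by
        unfold uu zz
        have : nrm (N k ω) / √s' ≤ nrm (N k ω) / √(ss Ψ k ω) :=
          div_le_div_of_nonneg_left hx h5 (Real.sqrt_le_sqrt h3)
        gcongr

/-- one-step recursion -/
lemma recur {e : ℕ → Ω → ℝ} (hstep : ∀ k ω, N (k+1) ω = N k ω + e k ω • Ψ k ω)
    (m : ℕ) (hm : 1 ≤ m) (q : ℝ) (hq : 0 ≤ q) (k ω) :
    uu N Ψ (k+1) ω ^ (2 * m) * Real.log (ss Ψ (k+1) ω) ^ (-q) +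
      uu N Ψ k ω ^ (2 * m) * zz Ψ k ω ^ 2 * ll Ψ k ω ^ (-q) ≤
    uu N Ψ k ω ^ (2 * m) * Real.log (ss Ψ k ω) ^ (-q) +
      ∑ j ∈ Finset.Icc 1 (2 * m), ((ss Ψ (k+1) ω ^ m)⁻¹ * ll Ψ k ω ^ (-q) *
        (qd (N k ω) (Ψ k ω) ^ m).coeff j) * e k ω ^ j := by
  have hex := (PC.dotpow m).expand (N k ω) (Ψ k ω) (e k ω)
  rw [← hstep] at hex
  have h1 := ss3 (Ψ := Ψ) (k+1) ω
  have h2 := ss3 (Ψ := Ψ) k ω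
  have h3 : ss Ψ k ω ≤ ss Ψ (k+1) ω := ss_mono ω (Nat.le_succ k)
  have hl := ll_gt (Ψ := Ψ) k ω
  have hG : ll Ψ k ω ^ (-q) ≤ Real.log (ss Ψ k ω) ^ (-q) :=
    Real.rpow_le_rpow_of_nonpos (by linarith [lg_gt (Ψ := Ψ) k ω]) (lg_le k ω) (by linarith)
  have e0 : ∑ j ∈ Finset.Icc 1 (2 * m), ((ss Ψ (k+1) ω ^ m)⁻¹ * ll Ψ k ω ^ (-q) *
        (qd (N k ω) (Ψ k ω) ^ m).coeff j) * e k ω ^ j = (ss Ψ (k+1) ω ^ m)⁻¹ * ll Ψ k ω ^ (-q) *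
        ((N (k+1) ω ⬝ᵥ N (k+1) ω) ^ m - (N k ω ⬝ᵥ N k ω) ^ m) := by
    rw [hex, Finset.mul_sum]
    exact Finset.sum_congr rfl fun j _ => by ring
  rw [e0]
  change uu N Ψ (k+1) ω ^ (2 * m) * ll Ψ k ω ^ (-q) + _ ≤ _
  have hg0 : 0 ≤ ll Ψ k ω ^ (-q) := Real.rpow_nonneg (by linarith) _
  set g := ll Ψ k ω ^ (-q)
  set g' := Real.log (ss Ψ k ω) ^ (-q)
  rw [uu_pow, zz_sq']
  have hu0 : 0 ≤ uu N Ψ k ω ^ (2 * m) := pow_nonneg (uu_nn k ω) _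
  have hV : (N k ω ⬝ᵥ N k ω) ^ m = uu N Ψ k ω ^ (2 * m) * ss Ψ k ω ^ m := by
    rw [uu_pow]; field_simp
  rw [hV]
  set U := uu N Ψ k ω ^ (2 * m)
  set s := ss Ψ k ω
  set s' := ss Ψ (k+1) ω
  have hr : (s / s') ^ m ≤ s / s' := by
    have : s / s' ≤ 1 := (div_le_one (by linarith)).2 h3
    calc (s / s') ^ m ≤ (s / s') ^ 1 := pow_le_pow_of_le_one (by positivity) this hm
      _ = _ := pow_one _
  have e3 : (s' - s) / s' = 1 - s / s' := by rw [sub_div, div_self (by linarith)]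
  have e4 : (s' ^ m)⁻¹ * g * ((N (k+1) ω ⬝ᵥ N (k+1) ω) ^ m - U * s ^ m) =
     (N (k+1) ω ⬝ᵥ N (k+1) ω) ^ m / s' ^ m * g - U * g * (s / s') ^ m := by
    rw [div_pow]; field_simp
  rw [e3, e4]
  have h6 : U * g ≤ U * g' := mul_le_mul_of_nonneg_left hG hu0
  have h7 : U * g * (s / s') ^ m ≤ U * g * (s / s') := mul_le_mul_of_nonneg_left hr (by positivity)
  nlinarith

variable {μ : Measure Ω} [IsProbabilityMeasure μ] {F : Filtration ℕ m0} {e : ℕ → Ω → ℝ} {σ a : ℝ} {p : ℕ}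

lemma pow_le_Y (x : ℝ) (j : ℝ) (hj : 0 ≤ j) (hja : j ≤ a) : |x| ^ j ≤ 1 + |x| ^ a := by
  rcases le_total |x| 1 with h | h
  · have := Real.rpow_le_one (abs_nonneg x) h hj
    have := Real.rpow_nonneg (abs_nonneg x) a
    linarith
  · have := Real.rpow_le_rpow_of_exponent_le h hja
    linarith

lemma Setup.hYi (h : Setup μ F e N Ψ σ a p) (k) : Integrable (fun ω => 1 + |e k ω| ^ a) μ :=
  (integrable_const 1).add (h.hei k)

lemma Setup.pow_le (h : Setup μ F e N Ψ σ a p) (k ω) (j : ℕ) (hj : j ≤ 2 * p) :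
    |e k ω ^ j| ≤ 1 + |e k ω| ^ a := by
  rw [abs_pow, ← Real.rpow_natCast]
  refine pow_le_Y _ _ (by positivity) ?_
  have : (j:ℝ) ≤ 2 * p := by exact_mod_cast hj
  linarith [h.ha]

lemma Setup.powm (h : Setup μ F e N Ψ σ a p) (k) (j : ℕ) :
    StronglyMeasurable[F (k+1)] (fun ω => e k ω ^ j) := (h.hem k).pow j

lemma Setup.powi (h : Setup μ F e N Ψ σ a p) (k) (j : ℕ) (hj : j ≤ 2 * p) :
    Integrable (fun ω => e k ω ^ j) μ :=
  (h.hYi k).mono' ((h.powm k j).mono (F.le _)).aestronglyMeasurable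
    (Eventually.of_forall fun ω => h.pow_le k ω j hj)

lemma Setup.Yb (h : Setup μ F e N Ψ σ a p) :
    ∀ᵐ ω ∂μ, ∃ C : ℝ, ∀ k, (μ[fun ω => 1 + |e k ω| ^ a|F k]) ω ≤ C := by
  have h1 : ∀ k, μ[fun ω => 1 + |e k ω| ^ a|F k] =ᵐ[μ]
      fun ω => 1 + (μ[fun ω => |e k ω| ^ a|F k]) ω := fun k => by
    have := condExp_add (m := F k) (integrable_const (μ := μ) (1:ℝ)) (h.hei k)
    refine this.trans ?_
    rw [condExp_const (F.le k)]
    rfl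
  filter_upwards [h.hmom, ae_all_iff.2 h1] with ω ⟨C, hC⟩ h2
  exact ⟨1 + C, fun k => by rw [h2]; linarith [hC k]⟩

lemma Setup.Eb (h : Setup μ F e N Ψ σ a p) :
    ∀ᵐ ω ∂μ, ∃ C : ℝ, 0 ≤ C ∧ ∀ k, ∀ j ≤ 2 * p, |(μ[fun ω => e k ω ^ j|F k]) ω| ≤ C := by
  have h1 : ∀ k j, j ≤ 2 * p → ∀ᵐ ω ∂μ, |(μ[fun ω => e k ω ^ j|F k]) ω| ≤
      (μ[fun ω => 1 + |e k ω| ^ a|F k]) ω := fun k j hj => by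
    have a1 := condExp_mono (m := F k) (h.powi k j hj) (h.hYi k)
      (Eventually.of_forall fun ω => (le_abs_self _).trans (h.pow_le k ω j hj))
    have a2 := condExp_mono (m := F k) (h.powi k j hj).neg (h.hYi k)
      (Eventually.of_forall fun ω => (neg_le_abs _).trans (h.pow_le k ω j hj))
    filter_upwards [a1, a2, condExp_neg (μ := μ) (fun ω => e k ω ^ j) (F k)] with ω b1 b2 b3
    rw [b3] at b2
    exact abs_le'.2 ⟨b1, b2⟩
  filter_upwards [h.Yb, ae_all_iff.2 fun k => ae_all_iff.2 fun j => ae_all_iff.2 (h1 k j)] with ω ⟨C, hC⟩ h2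
  refine ⟨|C|, abs_nonneg C, fun k j hj => (h2 k j hj).trans ((hC k).trans (le_abs_self C))⟩

lemma Setup.E1 (h : Setup μ F e N Ψ σ a p) : ∀ᵐ ω ∂μ, ∀ k, (μ[fun ω => e k ω ^ 1|F k]) ω = 0 := by
  refine ae_all_iff.2 fun k => ?_
  simp only [pow_one]
  exact h.hmds k

lemma Setup.E2 (h : Setup μ F e N Ψ σ a p) : ∀ᵐ ω ∂μ, ∀ k, (μ[fun ω => e k ω ^ 2|F k]) ω = σ ^ 2 :=
  ae_all_iff.2 h.hvar

lemma dot_meas {x y : Ω → Fin d → ℝ} {m : MeasurableSpace Ω} (hx : StronglyMeasurable[m] x)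
    (hy : StronglyMeasurable[m] y) : StronglyMeasurable[m] (fun ω => x ω ⬝ᵥ y ω) := by
  have c2 : Continuous fun z : (Fin d → ℝ) × (Fin d → ℝ) => z.1 ⬝ᵥ z.2 := by
    simp only [dotProduct]; fun_prop
  exact c2.comp_stronglyMeasurable (hx.prodMk hy)

lemma Setup.ssm (h : Setup μ F e N Ψ σ a p) (k) : StronglyMeasurable[F k] (ss Ψ (k+1)) := by
  unfold ss
  exact (stronglyMeasurable_const).add (Finset.stronglyMeasurable_fun_sum _ fun l hl =>
    (dot_meas (h.hΨm l) (h.hΨm l)).mono (F.mono (by simp at hl; omega)))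

lemma Setup.ssm' (h : Setup μ F e N Ψ σ a p) (k) : StronglyMeasurable[F k] (ss Ψ k) := by
  unfold ss
  exact (stronglyMeasurable_const).add (Finset.stronglyMeasurable_fun_sum _ fun l hl =>
    (dot_meas (h.hΨm l) (h.hΨm l)).mono (F.mono (by simp at hl; omega)))

lemma Setup.llm (h : Setup μ F e N Ψ σ a p) (k) : StronglyMeasurable[F k] (ll Ψ k) :=
  (Real.measurable_log.comp (h.ssm k).measurable).stronglyMeasurable

lemma Setup.cfm (h : Setup μ F e N Ψ σ a p) {w : (Fin d → ℝ) → ℝ} {D q} (hw : PC w D q) (k j) :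
    StronglyMeasurable[F k] (fun ω => (q (N k ω) (Ψ k ω)).coeff j) :=
  (hw.ct j).comp_stronglyMeasurable ((h.hNm k).prodMk (h.hΨm k))

lemma zpow_le (m j : ℕ) (u z : ℝ) (hu : 0 ≤ u) (hz : 0 ≤ z) (hz1 : z ≤ 1) (hj : 2 ≤ j) (hjm : j ≤ 2 * m) :
    u ^ (2 * m - j) * z ^ j ≤ (1 + u ^ (2 * (m - 1))) * z ^ 2 := by
  have h1 : z ^ j ≤ z ^ 2 := pow_le_pow_of_le_one hz hz1 hj
  have h2 : u ^ (2 * m - j) ≤ 1 + u ^ (2 * (m - 1)) := by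
    rcases le_total u 1 with h | h
    · have := pow_le_one₀ (n := 2 * m - j) hu h
      have : 0 ≤ u ^ (2 * (m - 1)) := by positivity
      linarith
    · have := pow_le_pow_right₀ h (show 2 * m - j ≤ 2 * (m - 1) by omega)
      linarith
  gcongr

/-- compensator bound -/
lemma Setup.comp_bd (h : Setup μ F e N Ψ σ a p) {w : (Fin d → ℝ) → ℝ} {m q} (hw : PC w (2 * m) q)
    (hm : m ≤ p) :
    ∀ᵐ ω ∂μ, ∃ K, 0 ≤ K ∧ ∀ k, (ss Ψ (k+1) ω ^ m)⁻¹ * |∑ j ∈ Finset.Icc 1 (2 * m),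
      (q (N k ω) (Ψ k ω)).coeff j * (μ[fun ω => e k ω ^ j|F k]) ω| ≤
      K * ((1 + uu N Ψ k ω ^ (2 * (m - 1))) * zz Ψ k ω ^ 2) := by
  obtain ⟨C, hC, hc⟩ := coef_bd (N := N) (Ψ := Ψ) hw
  filter_upwards [h.Eb, h.E1] with ω ⟨B, hB, hE⟩ h1
  refine ⟨∑ j ∈ Finset.Icc 1 (2 * m), C * B, Finset.sum_nonneg fun _ _ => by positivity, fun k => ?_⟩
  have h3 := ss3 (Ψ := Ψ) (k+1) ω
  have hz := zz_nn (Ψ := Ψ) k ω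
  have hu := uu_nn (N := N) (Ψ := Ψ) k ω
  refine (mul_le_mul_of_nonneg_left (Finset.abs_sum_le_sum_abs _ _) (by positivity)).trans ?_
  rw [Finset.mul_sum, Finset.sum_mul]
  refine Finset.sum_le_sum fun j hj => ?_
  rw [Finset.mem_Icc] at hj
  rcases eq_or_lt_of_le hj.1 with rfl | h2
  · rw [h1 k, mul_zero, abs_zero, mul_zero]; positivity
  · rw [abs_mul, ← mul_assoc]
    calc _ ≤ C * (uu N Ψ k ω ^ (2 * m - j) * zz Ψ k ω ^ j) * B :=
          mul_le_mul (hc k ω j hj.2) (hE k j (by omega)) (abs_nonneg _) (by positivity)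
      _ ≤ C * ((1 + uu N Ψ k ω ^ (2 * (m - 1))) * zz Ψ k ω ^ 2) * B := by
          have := zpow_le m j _ _ hu hz (zz_le k ω) h2 hj.2
          gcongr
      _ = _ := by ring

end P5

section P6
variable {Ω : Type*} {m0 : MeasurableSpace Ω} {d : ℕ}
variable {N Ψ : ℕ → Ω → Fin d → ℝ}
variable {μ : Measure Ω} [IsProbabilityMeasure μ] {F : Filtration ℕ m0} {e : ℕ → Ω → ℝ} {σ a : ℝ} {p : ℕ}

/-- summed recursion, with compensator -/
lemma Setup.recur_sum (h : Setup μ F e N Ψ σ a p) (m : ℕ) (hm : 1 ≤ m) (hmp : m ≤ p) (q : ℝ)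
    (hq : 0 ≤ q) : ∀ᵐ ω ∂μ, ∃ K, 0 ≤ K ∧ ∀ n,
    uu N Ψ n ω ^ (2 * m) * Real.log (ss Ψ n ω) ^ (-q) +
      ∑ k ∈ range n, uu N Ψ k ω ^ (2 * m) * zz Ψ k ω ^ 2 * ll Ψ k ω ^ (-q) ≤
    uu N Ψ 0 ω ^ (2 * m) * Real.log (ss Ψ 0 ω) ^ (-q) +
      ∑ k ∈ range n, ∑ j ∈ Finset.Icc 1 (2 * m), ((ss Ψ (k+1) ω ^ m)⁻¹ * ll Ψ k ω ^ (-q) *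
        (qd (N k ω) (Ψ k ω) ^ m).coeff j) * (e k ω ^ j - (μ[fun ω => e k ω ^ j|F k]) ω) +
      K * ∑ k ∈ range n, (1 + uu N Ψ k ω ^ (2 * (m - 1))) * zz Ψ k ω ^ 2 * ll Ψ k ω ^ (-q) := by
  filter_upwards [h.comp_bd (PC.dotpow m) hmp] with ω ⟨K, hK, hb⟩
  refine ⟨K, hK, fun n => ?_⟩
  induction n with
  | zero => simp
  | succ n ih =>
    rw [Finset.sum_range_succ, Finset.sum_range_succ, Finset.sum_range_succ]
    have hr := recur (N := N) (Ψ := Ψ) h.hstep m hm q hq n ω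
    have e1 : ∑ j ∈ Finset.Icc 1 (2 * m), ((ss Ψ (n+1) ω ^ m)⁻¹ * ll Ψ n ω ^ (-q) *
        (qd (N n ω) (Ψ n ω) ^ m).coeff j) * e n ω ^ j =
        ∑ j ∈ Finset.Icc 1 (2 * m), ((ss Ψ (n+1) ω ^ m)⁻¹ * ll Ψ n ω ^ (-q) *
        (qd (N n ω) (Ψ n ω) ^ m).coeff j) * (e n ω ^ j - (μ[fun ω => e n ω ^ j|F n]) ω) +
        ll Ψ n ω ^ (-q) * ((ss Ψ (n+1) ω ^ m)⁻¹ * ∑ j ∈ Finset.Icc 1 (2 * m),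
          (qd (N n ω) (Ψ n ω) ^ m).coeff j * (μ[fun ω => e n ω ^ j|F n]) ω) := by
      rw [Finset.mul_sum, Finset.mul_sum, ← Finset.sum_add_distrib]
      exact Finset.sum_congr rfl fun j _ => by ring
    have hs := ss3 (Ψ := Ψ) (n+1) ω
    have hl := ll_gt (Ψ := Ψ) n ω
    have hg0 : 0 ≤ ll Ψ n ω ^ (-q) := Real.rpow_nonneg (by linarith) _
    have e2 : ll Ψ n ω ^ (-q) * ((ss Ψ (n+1) ω ^ m)⁻¹ * ∑ j ∈ Finset.Icc 1 (2 * m),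
          (qd (N n ω) (Ψ n ω) ^ m).coeff j * (μ[fun ω => e n ω ^ j|F n]) ω) ≤
          K * ((1 + uu N Ψ n ω ^ (2 * (m - 1))) * zz Ψ n ω ^ 2 * ll Ψ n ω ^ (-q)) := by
      calc _ ≤ ll Ψ n ω ^ (-q) * (K * ((1 + uu N Ψ n ω ^ (2 * (m - 1))) * zz Ψ n ω ^ 2)) := by
            refine mul_le_mul_of_nonneg_left (le_trans ?_ (hb n)) hg0
            exact mul_le_mul_of_nonneg_left (le_abs_self _) (by positivity)
        _ = _ := by ring
    linarith

lemma Setup.Hm (h : Setup μ F e N Ψ σ a p) {w : (Fin d → ℝ) → ℝ} {D Q} (hw : PC w D Q) (m : ℕ) (q : ℝ)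
    (k j) : StronglyMeasurable[F k] (fun ω => (ss Ψ (k+1) ω ^ m)⁻¹ * ll Ψ k ω ^ (-q) *
        (Q (N k ω) (Ψ k ω)).coeff j) := by
  refine StronglyMeasurable.mul (StronglyMeasurable.mul ?_ ?_) (h.cfm hw k j)
  · exact (((h.ssm k).measurable.pow_const m).inv).stronglyMeasurable
  · exact ((h.llm k).measurable.pow_const (-q)).stronglyMeasurable

lemma tend_bdd {x : ℕ → ℝ} {l : ℝ} (h : Tendsto x atTop (𝓝 l)) : ∃ C, ∀ n, |x n| ≤ C := by
  obtain ⟨C, hC⟩ := (h.abs).bddAbove_range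
  exact ⟨C, fun n => hC ⟨n, rfl⟩⟩

lemma Setup.stepA (h : Setup μ F e N Ψ σ a p) (m : ℕ) (hmp : m ≤ p) : ∀ q : ℝ, 1 < q →
    ∀ᵐ ω ∂μ, Summable (fun k => uu N Ψ k ω ^ (2 * m) * zz Ψ k ω ^ 2 * ll Ψ k ω ^ (-q)) ∧
      ∃ C, ∀ n, uu N Ψ n ω ^ (2 * m) * Real.log (ss Ψ n ω) ^ (-q) ≤ C := by
  induction m with
  | zero =>
    intro q hq
    refine Eventually.of_forall fun ω => ⟨?_, 1, fun n => ?_⟩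
    · have := base_summable (fun k => ss Ψ k ω) (ss_mono ω) (fun k => ss3 k ω) q hq
      refine this.congr fun k => ?_
      rw [mul_zero, pow_zero, one_mul, zz_sq']; rfl
    · rw [mul_zero, pow_zero, one_mul]
      exact Real.rpow_le_one_of_one_le_of_nonpos (lg_gt n ω).le (by linarith)
  | succ m ih =>
    intro q hq
    have hnn : ∀ (j : ℕ) k ω, 0 ≤ uu N Ψ k ω ^ j * zz Ψ k ω ^ 2 * ll Ψ k ω ^ (-q) := fun j k ω => by
      have h1 := uu_nn (N := N) (Ψ := Ψ) k ω
      have h2 : 0 ≤ ll Ψ k ω := (zero_le_one.trans (ll_gt k ω).le)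
      positivity
    have hs0 : ∀ ω, Summable (fun k => zz Ψ k ω ^ 2 * ll Ψ k ω ^ (-q)) := fun ω => by
      have := base_summable (fun k => ss Ψ k ω) (ss_mono ω) (fun k => ss3 k ω) q hq
      refine this.congr fun k => ?_
      rw [zz_sq']; rfl
    -- total compensator bound
    have hcomp : ∀ᵐ ω ∂μ, ∃ B, ∀ n, ∑ k ∈ range n, (1 + uu N Ψ k ω ^ (2 * m)) *
        zz Ψ k ω ^ 2 * ll Ψ k ω ^ (-q) ≤ B := by
      filter_upwards [ih (by omega) q hq] with ω ⟨h1, _⟩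
      have h2 : Summable (fun k => (1 + uu N Ψ k ω ^ (2 * m)) * zz Ψ k ω ^ 2 * ll Ψ k ω ^ (-q)) := by
        refine ((hs0 ω).add h1).congr fun k => ?_
        ring
      refine ⟨_, fun n => h2.sum_le_tsum _ fun k _ => ?_⟩
      have := hnn (2 * m) k ω
      have := hnn 0 k ω
      simp only [pow_zero, one_mul] at this
      have e : (1 + uu N Ψ k ω ^ (2 * m)) * zz Ψ k ω ^ 2 * ll Ψ k ω ^ (-q) =
        zz Ψ k ω ^ 2 * ll Ψ k ω ^ (-q) + uu N Ψ k ω ^ (2 * m) * zz Ψ k ω ^ 2 * ll Ψ k ω ^ (-q) := by ring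
      rw [e]; linarith
    set J := Finset.Icc 1 (2 * (m+1)) with hJ
    set H : ℕ → ℕ → Ω → ℝ := fun j k ω => (ss Ψ (k+1) ω ^ (m+1))⁻¹ * ll Ψ k ω ^ (-q) *
        (qd (N k ω) (Ψ k ω) ^ (m+1)).coeff j with hH
    set U : ℕ → Ω → ℝ := fun n ω => uu N Ψ n ω ^ (2 * (m+1)) * Real.log (ss Ψ n ω) ^ (-q) with hU
    have hU0 : ∀ n ω, 0 ≤ U n ω := fun n ω => by
      have h1 := uu_nn (N := N) (Ψ := Ψ) n ω
      have h2 := lg_gt (Ψ := Ψ) n ω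
      simp only [hU]; positivity
    have hHm : ∀ j k, StronglyMeasurable[F k] (H j k) := fun j k => h.Hm (PC.dotpow (m+1)) (m+1) q k j
    have hUm : StronglyMeasurable[F 0] (U 0) := by
      refine StronglyMeasurable.mul (StronglyMeasurable.pow ?_ _) ?_
      · have h1 : StronglyMeasurable[F 0] (fun ω => nrm (N 0 ω)) :=
          Real.continuous_sqrt.comp_stronglyMeasurable (dot_meas (h.hNm 0) (h.hNm 0))
        exact h1.div (Real.continuous_sqrt.comp_stronglyMeasurable (h.ssm' 0))
      · exact ((Real.measurable_log.comp (h.ssm' 0).measurable).pow_const (-q)).stronglyMeasurable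
    set E : ℕ → ℕ → Ω → ℝ := fun j k => μ[fun ω => e k ω ^ j|F k] with hE
    set Λ : ℕ → Ω → ℝ := fun n ω => U 0 ω + ∑ k ∈ range (n+1), |∑ j ∈ J, H j k ω * E j k ω| with hΛ
    have hrec := h.recur_sum (m+1) (by omega) hmp q (by linarith)
    have hid : ∀ ω n, U n ω ≤ U 0 ω + ∑ k ∈ range n, ∑ j ∈ J, H j k ω * (e k ω ^ j - E j k ω) +
        ∑ k ∈ range n, ∑ j ∈ J, H j k ω * E j k ω := by
      intro ω n
      induction n with
      | zero => simp
      | succ n ih =>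
        have hr := recur (N := N) (Ψ := Ψ) h.hstep (m+1) (by omega) q (by linarith) n ω
        rw [Finset.sum_range_succ, Finset.sum_range_succ]
        have e1 : ∑ j ∈ J, H j n ω * e n ω ^ j = ∑ j ∈ J, H j n ω * (e n ω ^ j - E j n ω) +
          ∑ j ∈ J, H j n ω * E j n ω := by
          rw [← Finset.sum_add_distrib]
          exact Finset.sum_congr rfl fun j _ => by ring
        have := hnn (2 * (m+1)) n ω
        change U (n+1) ω + _ ≤ U n ω + ∑ j ∈ J, H j n ω * e n ω ^ j at hr
        linarith
    have hΛb : ∀ᵐ ω ∂μ, ∃ C, ∀ n, Λ n ω ≤ C := by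
      filter_upwards [hcomp, h.comp_bd (PC.dotpow (m+1)) hmp] with ω ⟨B, hB⟩ ⟨K, hK, hb⟩
      refine ⟨U 0 ω + K * B, fun n => ?_⟩
      simp only [hΛ]
      gcongr
      calc _ ≤ ∑ k ∈ range (n+1), K * ((1 + uu N Ψ k ω ^ (2 * m)) *
              zz Ψ k ω ^ 2 * ll Ψ k ω ^ (-q)) := by
            refine Finset.sum_le_sum fun k _ => ?_
            have hs := ss3 (Ψ := Ψ) (k+1) ω
            have hl := ll_gt (Ψ := Ψ) k ω
            have hg0 : 0 ≤ ll Ψ k ω ^ (-q) := Real.rpow_nonneg (by linarith) _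
            have e1 : ∑ j ∈ J, H j k ω * E j k ω = ll Ψ k ω ^ (-q) * ((ss Ψ (k+1) ω ^ (m+1))⁻¹ *
              ∑ j ∈ J, (qd (N k ω) (Ψ k ω) ^ (m+1)).coeff j * E j k ω) := by
              rw [Finset.mul_sum, Finset.mul_sum]
              exact Finset.sum_congr rfl fun j _ => by simp only [hH]; ring
            rw [e1, abs_mul, abs_of_nonneg hg0, abs_mul, abs_of_nonneg (a := (ss Ψ (k+1) ω ^ (m+1))⁻¹)
              (by positivity)]
            calc _ ≤ ll Ψ k ω ^ (-q) * _ := mul_le_mul_of_nonneg_left (hb k) hg0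
              _ = _ := by simp only [Nat.add_sub_cancel]; ring
        _ ≤ K * B := by rw [← Finset.mul_sum]; exact mul_le_mul_of_nonneg_left (hB _) hK
    have hRS := lemRS (μ := μ) F J (fun j k ω => e k ω ^ j) H Λ (fun j _ k => h.powm k j)
      (fun j hj k => h.powi k j (by rw [hJ, Finset.mem_Icc] at hj; omega)) (fun j _ k => hHm j k)
      (fun n => (hUm.mono (F.mono (Nat.zero_le n))).add
        (Finset.stronglyMeasurable_fun_sum _ fun k hk => continuous_abs.comp_stronglyMeasurable
          (Finset.stronglyMeasurable_fun_sum _ fun j _ => ((hHm j k).mul stronglyMeasurable_condExp).mono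
            (F.mono (by simp at hk; omega))))) hΛb
      (Eventually.of_forall fun ω n => by
        have h1 := hid ω (n+1)
        have h2 := hU0 (n+1) ω
        have h3 : ∑ k ∈ range (n+1), ∑ j ∈ J, H j k ω * E j k ω ≤
          ∑ k ∈ range (n+1), |∑ j ∈ J, H j k ω * E j k ω| :=
          Finset.sum_le_sum fun k _ => le_abs_self _
        simp only [hΛ]
        change _ ≤ ∑ k ∈ range (n+1), ∑ j ∈ J, H j k ω * (e k ω ^ j - E j k ω)
        linarith)
    filter_upwards [hRS, hcomp, hrec] with ω ⟨l, hl⟩ ⟨B, hB⟩ ⟨K, hK, hr⟩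
    obtain ⟨C, hC⟩ := tend_bdd hl
    have hup : ∀ n, U n ω + ∑ k ∈ range n, uu N Ψ k ω ^ (2 * (m+1)) * zz Ψ k ω ^ 2 * ll Ψ k ω ^ (-q) ≤
        U 0 ω + C + K * B := fun n => by
      refine (hr n).trans ?_
      have h1 := (le_abs_self _).trans (hC n)
      have h2 := mul_le_mul_of_nonneg_left (hB n) hK
      simp only [Nat.add_sub_cancel]
      exact add_le_add (add_le_add_right h1 _) h2
    refine ⟨summable_of_sum_range_le (c := U 0 ω + C + K * B) (fun k => hnn _ k ω) fun n => ?_,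
      U 0 ω + C + K * B, fun n => ?_⟩
    · linarith [hup n, hU0 n ω]
    · have := Finset.sum_nonneg fun k (_ : k ∈ range n) => hnn (2 * (m+1)) k ω
      have h1 := hup n
      change U n ω ≤ _
      linarith

end P6

section P7
variable {Ω : Type*} {m0 : MeasurableSpace Ω} {d : ℕ}
variable {N Ψ : ℕ → Ω → Fin d → ℝ}
variable {μ : Measure Ω} [IsProbabilityMeasure μ] {F : Filtration ℕ m0} {e : ℕ → Ω → ℝ} {σ a : ℝ} {p : ℕ}

lemma Setup.slim (h : Setup μ F e N Ψ σ a p) : ∀ᵐ ω ∂μ,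
    Tendsto (fun n : ℕ => (n:ℝ)⁻¹ * ss Ψ n ω) atTop (𝓝 d) := by
  filter_upwards [h.hconv] with ω hω
  have h1 : Tendsto (fun n : ℕ => (n:ℝ)⁻¹ * 3 + ∑ i : Fin d, (n:ℝ)⁻¹ * ∑ k ∈ range n, Ψ k ω i * Ψ k ω i)
      atTop (𝓝 (0 * 3 + ∑ i : Fin d, (1:ℝ))) := by
    refine (tendsto_inv_atTop_nhds_zero_nat.mul_const 3).add (tendsto_finsetSum _ fun i _ => ?_)
    simpa using hω i i
  have e : ∀ n : ℕ, (n:ℝ)⁻¹ * ss Ψ n ω =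
      (n:ℝ)⁻¹ * 3 + ∑ i : Fin d, (n:ℝ)⁻¹ * ∑ k ∈ range n, Ψ k ω i * Ψ k ω i := by
    intro n
    unfold ss dotProduct
    rw [Finset.sum_comm, mul_add, Finset.mul_sum]
  simp only [e]
  simpa using h1

lemma shift_lim {s : ℕ → ℝ} {c : ℝ} (h : Tendsto (fun n : ℕ => (n:ℝ)⁻¹ * s n) atTop (𝓝 c)) :
    Tendsto (fun n : ℕ => ((n:ℝ))⁻¹ * s (n+1)) atTop (𝓝 c) := by
  have h1 := (tendsto_add_atTop_iff_nat 1).2 h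
  have h2 : Tendsto (fun n : ℕ => ((n:ℝ)+1)/(n:ℝ)) atTop (𝓝 1) := by
    have := (tendsto_inv_atTop_nhds_zero_nat (𝕜 := ℝ)).const_add 1
    rw [add_zero] at this
    refine this.congr' ?_
    filter_upwards [eventually_gt_atTop 0] with n hn
    have : (n:ℝ) ≠ 0 := by positivity
    field_simp
  have h3 := h1.mul h2
  rw [mul_one] at h3
  refine h3.congr' ?_
  filter_upwards [eventually_gt_atTop 0] with n hn
  have : (n:ℝ) ≠ 0 := by positivity
  have : (n:ℝ) + 1 ≠ 0 := by positivity
  push_cast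
  field_simp

lemma Setup.lgO (h : Setup μ F e N Ψ σ a p) : ∀ᵐ ω ∂μ,
    (fun n => ll Ψ n ω) =O[atTop] (fun n : ℕ => Real.log n) := by
  filter_upwards [h.slim] with ω hω
  exact log_compare (fun n => ss Ψ (n+1) ω) d (by exact_mod_cast h.hd) (fun n => ss3 _ ω) (shift_lim hω)

lemma Setup.llt (h : Setup μ F e N Ψ σ a p) : ∀ᵐ ω ∂μ,
    Tendsto (fun n => ll Ψ n ω) atTop atTop := by
  filter_upwards [h.slim] with ω hω
  have h1 := shift_lim (s := fun n => ss Ψ n ω) hω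
  have hd : (0:ℝ) < d := by exact_mod_cast h.hd
  refine Real.tendsto_log_atTop.comp ?_
  have h2 := (tendsto_natCast_atTop_atTop (R := ℝ)).atTop_mul_pos hd h1
  refine h2.congr' ?_
  filter_upwards [eventually_gt_atTop 0] with n hn
  have : (n:ℝ) ≠ 0 := by positivity
  field_simp

lemma ll_mono (ω) : Monotone (fun k => ll Ψ k ω) := fun i j hij =>
  Real.log_le_log (by linarith [ss3 (Ψ := Ψ) (i+1) ω]) (ss_mono ω (by omega))

lemma rp_le (u x : ℝ) (m : ℕ) (hu : 0 ≤ u) (hx : 0 ≤ x) (hxm : x ≤ 2 * m) :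
    u ^ x ≤ 1 + u ^ (2 * m) := by
  have := pow_le_Y (a := 2 * m) u x hx hxm
  rw [abs_of_nonneg hu] at this
  refine this.trans (le_of_eq ?_)
  congr 1
  rw [← Real.rpow_natCast]; push_cast; rfl

/-- summability for j ≥ 2 -/
lemma Setup.sum2 (h : Setup μ F e N Ψ σ a p) (m : ℕ) (hmp : m ≤ p) (r : ℝ) (hr1 : 1 < r)
    (hr2 : r ≤ 1 + 1 / p) :
    ∀ᵐ ω ∂μ, ∀ j, 2 ≤ j → j ≤ 2 * m →
      Summable (fun k => ((uu N Ψ k ω ^ (2 * m - j) * zz Ψ k ω ^ j) / ll Ψ k ω) ^ r) := by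
  filter_upwards [h.stepA 0 (Nat.zero_le _) r hr1, h.stepA m hmp r hr1] with ω ⟨h0, _⟩ ⟨h1, _⟩ j hj hjm
  refine (h0.add h1).of_nonneg_of_le (fun k => ?_) fun k => ?_
  · have hu := uu_nn (N := N) (Ψ := Ψ) k ω
    have hz := zz_nn (Ψ := Ψ) k ω
    have hl := ll_gt (Ψ := Ψ) k ω
    positivity
  · have hu := uu_nn (N := N) (Ψ := Ψ) k ω
    have hz := zz_nn (Ψ := Ψ) k ω
    have hl := ll_gt (Ψ := Ψ) k ω
    rw [Real.div_rpow (by positivity) (by positivity), Real.mul_rpow (by positivity) (by positivity),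
      ← Real.rpow_natCast_mul hu, ← Real.rpow_natCast_mul hz, Real.rpow_neg (by positivity),
      mul_zero, pow_zero, one_mul]
    have hpp : (0:ℝ) < p := by exact_mod_cast h.hp
    have a1 : uu N Ψ k ω ^ (((2 * m - j : ℕ):ℝ) * r) ≤ 1 + uu N Ψ k ω ^ (2 * m) := by
      refine rp_le _ _ _ hu (by positivity) ?_
      have b1 : ((2 * m - j : ℕ):ℝ) ≤ 2 * m - 2 := by
        rw [Nat.cast_sub hjm]; push_cast
        have : (2:ℝ) ≤ j := by exact_mod_cast hj
        linarith
      have b2 : (m:ℝ) ≤ p := by exact_mod_cast hmp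
      have b3 : (1:ℝ) ≤ m := by exact_mod_cast (show 1 ≤ m by omega)
      calc ((2 * m - j : ℕ):ℝ) * r ≤ (2 * m - 2) * (1 + 1 / p) :=
            mul_le_mul b1 hr2 (by linarith) (by linarith)
        _ = 2 * m - 2 + (2 * m - 2) / p := by ring
        _ ≤ 2 * m - 2 + 2 := by
            gcongr; rw [div_le_iff₀ hpp]; linarith
        _ = _ := by ring
    have a2 : zz Ψ k ω ^ ((j:ℝ) * r) ≤ zz Ψ k ω ^ 2 := by
      rcases eq_or_lt_of_le hz with h0 | h0
      · rw [← h0, Real.zero_rpow (by positivity)]; simp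
      · rw [← Real.rpow_natCast]
        refine Real.rpow_le_rpow_of_exponent_ge h0 (zz_le k ω) ?_
        have : (2:ℝ) ≤ j := by exact_mod_cast hj
        push_cast; nlinarith
    rw [div_eq_mul_inv]
    calc _ ≤ (1 + uu N Ψ k ω ^ (2 * m)) * zz Ψ k ω ^ 2 * (ll Ψ k ω ^ r)⁻¹ := by gcongr
      _ = _ := by ring

lemma Setup.sum1 (h : Setup μ F e N Ψ σ a p) (m : ℕ) (hm : 1 ≤ m) (hmp : m ≤ p) :
    ∀ᵐ ω ∂μ,
      Summable (fun k => ((uu N Ψ k ω ^ (2 * m - 1) * zz Ψ k ω ^ 1) / ll Ψ k ω) ^ (2:ℝ)) := by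
  have hpp : (0:ℝ) < p := by exact_mod_cast h.hp
  set q : ℝ := 1 + 1 / (2 * p) with hq
  have hq1 : 1 < q := by
    have : 0 < 1 / (2 * (p:ℝ)) := by positivity
    linarith
  have b2 : (m:ℝ) ≤ p := by exact_mod_cast hmp
  have b3 : (1:ℝ) ≤ m := by exact_mod_cast hm
  have hqm : q * (2 * m - 1) ≤ 2 * m := by
    have : (2 * (m:ℝ) - 1) / (2 * p) ≤ 1 := by rw [div_le_one (by positivity)]; linarith
    have e : q * (2 * m - 1) = 2 * m - 1 + (2 * (m:ℝ) - 1) / (2 * p) := by rw [hq]; ring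
    linarith
  filter_upwards [h.stepA m hmp q hq1] with ω ⟨h1, C, hC⟩
  have hC0 : 1 ≤ max C 1 := le_max_right _ _
  set C' := max C 1
  have hub : ∀ k, uu N Ψ k ω ^ (2 * m - 2) ≤ C' * ll Ψ k ω ^ (2 - q) := by
    intro k
    have hu := uu_nn (N := N) (Ψ := Ψ) k ω
    have hl := ll_gt (Ψ := Ψ) k ω
    have hg := lg_gt (Ψ := Ψ) k ω
    have a1 : uu N Ψ k ω ^ (2 * m) ≤ C' * ll Ψ k ω ^ q := by
      have := (hC k).trans (le_max_left C 1)
      rw [Real.rpow_neg (by linarith), ← div_eq_mul_inv, div_le_iff₀ (by positivity)] at this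
      refine this.trans (mul_le_mul_of_nonneg_left ?_ (by linarith))
      exact Real.rpow_le_rpow (by linarith) (lg_le k ω) (by linarith)
    have hmne : m ≠ 0 := by omega
    rw [← pow_le_pow_iff_left₀ (by positivity) (by positivity) hmne]
    calc (uu N Ψ k ω ^ (2 * m - 2)) ^ m = (uu N Ψ k ω ^ (2 * m)) ^ (m - 1) := by
          rw [← pow_mul, ← pow_mul]; congr 1
          obtain ⟨t, rfl⟩ : ∃ t, m = t + 1 := ⟨m - 1, by omega⟩
          simp only [Nat.add_sub_cancel, mul_add, mul_one]; ring
      _ ≤ (C' * ll Ψ k ω ^ q) ^ (m - 1) := by gcongr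
      _ = C' ^ (m - 1) * ll Ψ k ω ^ (q * (m - 1 : ℕ)) := by
          rw [mul_pow, Real.rpow_mul_natCast (by linarith)]
      _ ≤ C' ^ m * ll Ψ k ω ^ ((2 - q) * m) := by
          refine mul_le_mul (pow_le_pow_right₀ hC0 (by omega)) ?_ (by positivity) (by positivity)
          refine Real.rpow_le_rpow_of_exponent_le hl.le ?_
          rw [Nat.cast_sub hm]; push_cast; linarith
      _ = _ := by rw [mul_pow, Real.rpow_mul_natCast (by linarith)]
  refine (h1.mul_left C').of_nonneg_of_le (fun k => ?_) fun k => ?_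
  · have hu := uu_nn (N := N) (Ψ := Ψ) k ω
    have hz := zz_nn (Ψ := Ψ) k ω
    have hl := ll_gt (Ψ := Ψ) k ω
    positivity
  · have hu := uu_nn (N := N) (Ψ := Ψ) k ω
    have hz := zz_nn (Ψ := Ψ) k ω
    have hl := ll_gt (Ψ := Ψ) k ω
    have e1 : ((uu N Ψ k ω ^ (2 * m - 1) * zz Ψ k ω ^ 1) / ll Ψ k ω) ^ (2:ℝ) =
        uu N Ψ k ω ^ (2 * m - 2) * (uu N Ψ k ω ^ (2 * m) * zz Ψ k ω ^ 2 * (ll Ψ k ω ^ 2)⁻¹) := by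
      rw [show (2:ℝ) = ((2:ℕ):ℝ) by norm_num, Real.rpow_natCast, div_pow, mul_pow, ← pow_mul,
        show (2 * m - 1) * 2 = (2 * m - 2) + 2 * m by omega, pow_add, pow_one]
      rw [div_eq_mul_inv]; ring
    rw [e1]
    calc _ ≤ (C' * ll Ψ k ω ^ (2 - q)) * (uu N Ψ k ω ^ (2 * m) * zz Ψ k ω ^ 2 * (ll Ψ k ω ^ 2)⁻¹) := by
          gcongr; exact hub k
      _ = C' * (uu N Ψ k ω ^ (2 * m) * zz Ψ k ω ^ 2 * (ll Ψ k ω ^ (2 - q) * (ll Ψ k ω ^ 2)⁻¹)) := by ring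
      _ = _ := by
          rw [← Real.rpow_natCast (ll Ψ k ω) 2, ← Real.rpow_neg (by linarith), ← Real.rpow_add (by linarith)]
          congr 3; push_cast; ring

lemma Setup.mart_term (h : Setup μ F e N Ψ σ a p) {w : (Fin d → ℝ) → ℝ} {m Q} (hw : PC w (2 * m) Q)
    (hmp : m ≤ p) (b : ℕ → Ω → ℝ) (hb : ∀ k, StronglyMeasurable[F k] (b k))
    (hbb : ∀ᵐ ω ∂μ, ∃ C, ∀ k, |b k ω| ≤ C) (j : ℕ) (hj1 : 1 ≤ j) (hj2 : j ≤ 2 * m)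
    (r : ℝ) (hr1 : 1 ≤ r) (hr2 : r ≤ 2) (hra : j * r ≤ a)
    (hsum : ∀ᵐ ω ∂μ, Summable (fun k => ((uu N Ψ k ω ^ (2 * m - j) * zz Ψ k ω ^ j) / ll Ψ k ω) ^ r)) :
    ∀ᵐ ω ∂μ, ∃ l, Tendsto (fun n => ∑ k ∈ range n,
      (b k ω * ((ss Ψ (k+1) ω ^ m)⁻¹ * ll Ψ k ω ^ (-(1:ℝ)) *
        (Q (N k ω) (Ψ k ω)).coeff j)) * (e k ω ^ j - (μ[fun ω => e k ω ^ j|F k]) ω)) atTop (𝓝 l) := by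
  refine lemM (μ := μ) F (fun k ω => e k ω ^ j) (fun k ω => 1 + |e k ω| ^ a) _ r hr1 hr2
    (fun k => h.powm k j) (fun k => h.powi k j (by omega)) h.hYi ?_ h.Yb
    (fun k => (hb k).mul (h.Hm hw m 1 k j)) ?_
  · intro k ω
    rw [abs_pow, ← Real.rpow_natCast_mul (abs_nonneg _)]
    exact pow_le_Y _ _ (by positivity) hra
  · obtain ⟨C, hC, hc⟩ := coef_bd (N := N) (Ψ := Ψ) hw
    filter_upwards [hbb, hsum] with ω ⟨B, hB⟩ hs
    have hB0 : 0 ≤ B := (abs_nonneg _).trans (hB 0)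
    refine (hs.mul_left ((B * C) ^ r)).of_nonneg_of_le (fun k => by positivity) fun k => ?_
    have hu := uu_nn (N := N) (Ψ := Ψ) k ω
    have hz := zz_nn (Ψ := Ψ) k ω
    have hl := ll_gt (Ψ := Ψ) k ω
    have h3 := ss3 (Ψ := Ψ) (k+1) ω
    rw [← Real.mul_rpow (by positivity) (by positivity)]
    refine Real.rpow_le_rpow (abs_nonneg _) ?_ (by linarith)
    rw [Real.rpow_neg_one, abs_mul, abs_mul, abs_mul, abs_of_nonneg (a := (ss Ψ (k+1) ω ^ m)⁻¹) (by positivity),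
      abs_of_nonneg (a := (ll Ψ k ω)⁻¹) (by positivity)]
    calc _ = |b k ω| * (((ss Ψ (k+1) ω ^ m)⁻¹ * |(Q (N k ω) (Ψ k ω)).coeff j|)) * (ll Ψ k ω)⁻¹ := by ring
      _ ≤ B * (C * (uu N Ψ k ω ^ (2 * m - j) * zz Ψ k ω ^ j)) * (ll Ψ k ω)⁻¹ := by
          have := hB k
          have := hc k ω j hj2
          gcongr
      _ = _ := by ring

lemma Setup.mart (h : Setup μ F e N Ψ σ a p) {w : (Fin d → ℝ) → ℝ} {m Q} (hw : PC w (2 * m) Q)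
    (hmp : m ≤ p) (b : ℕ → Ω → ℝ) (hb : ∀ k, StronglyMeasurable[F k] (b k))
    (hbb : ∀ᵐ ω ∂μ, ∃ C, ∀ k, |b k ω| ≤ C) :
    ∀ᵐ ω ∂μ, (fun n => ∑ k ∈ range n, b k ω * (ss Ψ (k+1) ω ^ m)⁻¹ * ∑ j ∈ Finset.Icc 1 (2 * m),
        (Q (N k ω) (Ψ k ω)).coeff j * (e k ω ^ j - (μ[fun ω => e k ω ^ j|F k]) ω))
      =o[atTop] (fun n : ℕ => Real.log n) := by
  have hpp : (0:ℝ) < p := by exact_mod_cast h.hp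
  have hpp1 : (1:ℝ) ≤ p := by exact_mod_cast h.hp
  set r : ℝ := min 2 (min (a / (2 * p)) (1 + 1 / p)) with hr
  have hr1 : 1 < r := by
    refine lt_min (by norm_num) (lt_min ?_ ?_)
    · rw [lt_div_iff₀ (by positivity)]; linarith [h.ha]
    · have : 0 < 1 / (p:ℝ) := by positivity
      linarith
  have hj : ∀ j ∈ Finset.Icc 1 (2 * m), ∀ᵐ ω ∂μ, ∃ l, Tendsto (fun n => ∑ k ∈ range n,
      (b k ω * ((ss Ψ (k+1) ω ^ m)⁻¹ * ll Ψ k ω ^ (-(1:ℝ)) *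
        (Q (N k ω) (Ψ k ω)).coeff j)) * (e k ω ^ j - (μ[fun ω => e k ω ^ j|F k]) ω)) atTop (𝓝 l) := by
    intro j hj
    rw [Finset.mem_Icc] at hj
    rcases eq_or_lt_of_le hj.1 with rfl | h2
    · refine h.mart_term hw hmp b hb hbb 1 le_rfl hj.2 2 (by norm_num) le_rfl ?_ (h.sum1 m (by omega) hmp)
      have := h.ha
      push_cast; linarith
    · refine h.mart_term hw hmp b hb hbb j hj.1 hj.2 r hr1.le (min_le_left _ _) ?_ ?_
      · have b1 : r ≤ a / (2 * p) := (min_le_right _ _).trans (min_le_left _ _)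
        have b2 : (j:ℝ) ≤ 2 * p := by exact_mod_cast (show j ≤ 2 * p by omega)
        rw [le_div_iff₀ (by positivity)] at b1
        nlinarith
      · filter_upwards [h.sum2 m hmp r hr1 ((min_le_right _ _).trans (min_le_right _ _))] with ω hω
        exact hω j h2 hj.2
  have hj' := (ae_ball_iff (Finset.Icc 1 (2 * m)).countable_toSet).2 hj
  filter_upwards [hj', h.lgO, h.llt] with ω hω hO ht
  choose! l hl using hω
  refine IsLittleO.trans_isBigO ?_ hO
  refine kronecker_aux _ _ (ll_mono ω) (fun k => by linarith [ll_gt (Ψ := Ψ) k ω]) ht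
    (∑ j ∈ Finset.Icc 1 (2 * m), l j) ?_
  have := tendsto_finsetSum (Finset.Icc 1 (2 * m)) hl
  refine this.congr fun n => ?_
  rw [Finset.sum_comm]
  refine Finset.sum_congr rfl fun k _ => ?_
  rw [Finset.mul_sum, Finset.sum_div]
  refine Finset.sum_congr rfl fun j _ => ?_
  rw [Real.rpow_neg_one]; ring

end P7

section P8
variable {Ω : Type*} {m0 : MeasurableSpace Ω} {d : ℕ}
variable {N Ψ : ℕ → Ω → Fin d → ℝ}
variable {μ : Measure Ω} [IsProbabilityMeasure μ] {F : Filtration ℕ m0} {e : ℕ → Ω → ℝ} {σ a : ℝ} {p : ℕ}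

lemma Setup.lgO' (h : Setup μ F e N Ψ σ a p) : ∀ᵐ ω ∂μ,
    (fun n => Real.log (ss Ψ n ω)) =O[atTop] (fun n : ℕ => Real.log n) := by
  filter_upwards [h.slim] with ω hω
  exact log_compare (fun n => ss Ψ n ω) d (by exact_mod_cast h.hd) (fun n => ss3 _ ω) hω

lemma Setup.stepB0 (h : Setup μ F e N Ψ σ a p) :
    ∀ᵐ ω ∂μ, (fun n => ∑ k ∈ range n, zz Ψ k ω ^ 2) =O[atTop] (fun n : ℕ => Real.log n) := by
  filter_upwards [h.lgO'] with ω hω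
  refine bigO_of_le _ _ (fun n => ?_) 1 (fun n => ?_) hω
  · exact Finset.sum_nonneg fun k _ => by positivity
  · simp only [one_mul, zz_sq']
    exact base_sum_le (fun k => ss Ψ k ω) (fun k => ss3 k ω) n

lemma Setup.stepB (h : Setup μ F e N Ψ σ a p) (m : ℕ) (hmp : m ≤ p) :
    ∀ᵐ ω ∂μ, (fun n => ∑ k ∈ range n, uu N Ψ k ω ^ (2 * m) * zz Ψ k ω ^ 2) =O[atTop]
        (fun n : ℕ => Real.log n) ∧
      (fun n => uu N Ψ n ω ^ (2 * m)) =O[atTop] (fun n : ℕ => Real.log n) := by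
  induction m with
  | zero =>
    filter_upwards [h.stepB0] with ω hω
    refine ⟨?_, ?_⟩
    · simpa using hω
    · simpa using (const_littleO 1).isBigO
  | succ m ih =>
    filter_upwards [ih (by omega), h.recur_sum (m+1) (by omega) hmp 0 le_rfl,
      h.mart (PC.dotpow (m+1)) hmp (fun _ _ => 1) (fun _ => stronglyMeasurable_const)
        (Eventually.of_forall fun _ => ⟨1, fun _ => by simp⟩),
      h.stepB0] with ω ⟨i1, _⟩ ⟨K, hK, hr⟩ hM h0
    simp only [neg_zero, Real.rpow_zero, mul_one, one_mul, Nat.add_sub_cancel] at hr hM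
    have hR : (fun n => uu N Ψ 0 ω ^ (2 * (m+1)) + ∑ k ∈ range n, ∑ j ∈ Finset.Icc 1 (2 * (m+1)),
        ((ss Ψ (k+1) ω ^ (m+1))⁻¹ * (qd (N k ω) (Ψ k ω) ^ (m+1)).coeff j) *
          (e k ω ^ j - (μ[fun ω => e k ω ^ j|F k]) ω) +
        K * ∑ k ∈ range n, (1 + uu N Ψ k ω ^ (2 * m)) * zz Ψ k ω ^ 2) =O[atTop]
        (fun n : ℕ => Real.log n) := by
      refine ((const_littleO _).isBigO.add ?_).add (IsBigO.const_mul_left ?_ K)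
      · refine hM.isBigO.congr_left fun n => ?_
        refine Finset.sum_congr rfl fun k _ => ?_
        rw [Finset.mul_sum]
        exact Finset.sum_congr rfl fun j _ => by ring
      · refine (h0.add i1).congr_left fun n => ?_
        rw [← Finset.sum_add_distrib]
        exact Finset.sum_congr rfl fun j _ => by ring
    have n1 : ∀ n, 0 ≤ uu N Ψ n ω ^ (2 * (m+1)) := fun n => pow_nonneg (uu_nn n ω) _
    have n2 : ∀ n, 0 ≤ ∑ k ∈ range n, uu N Ψ k ω ^ (2 * (m+1)) * zz Ψ k ω ^ 2 := fun n =>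
      Finset.sum_nonneg fun k _ => mul_nonneg (n1 k) (sq_nonneg _)
    exact ⟨bigO_of_le _ _ n2 1 (fun n => by linarith [hr n, n1 n]) hR,
      bigO_of_le _ _ n1 1 (fun n => by linarith [hr n, n2 n]) hR⟩

lemma Setup.zz_lim (h : Setup μ F e N Ψ σ a p) :
    ∀ᵐ ω ∂μ, Tendsto (fun k => zz Ψ k ω) atTop (𝓝 0) := by
  filter_upwards [h.slim] with ω hω
  have h1 := shift_lim (s := fun n => ss Ψ n ω) hω
  have hd : (d:ℝ) ≠ 0 := by exact_mod_cast h.hd.ne'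
  have h2 := (hω.div h1 hd)
  rw [div_self hd] at h2
  have h3 : Tendsto (fun k => √(zz Ψ k ω ^ 2)) atTop (𝓝 (√(1 - 1))) := by
    refine Tendsto.sqrt ?_
    refine (h2.const_sub 1).congr' ?_
    filter_upwards [eventually_gt_atTop 0] with n hn
    have : (n:ℝ) ≠ 0 := by positivity
    have := ss3 (Ψ := Ψ) (n+1) ω
    have h4 : ss Ψ (n+1) ω ≠ 0 := by linarith
    rw [zz_sq', sub_div, div_self h4]
    simp only [Pi.div_apply]
    field_simp
  simp only [Real.sqrt_sq (zz_nn _ _), sub_self, Real.sqrt_zero] at h3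
  exact h3

lemma Setup.stepG (h : Setup μ F e N Ψ σ a p) {w : (Fin d → ℝ) → ℝ} {m Q} (hw : PC w (2 * m) Q)
    (hm : 1 ≤ m) (hmp : m ≤ p) (b : ℕ → Ω → ℝ) (hb : ∀ k, StronglyMeasurable[F k] (b k))
    (hbb : ∀ᵐ ω ∂μ, ∃ C, ∀ k, |b k ω| ≤ C) :
    ∀ᵐ ω ∂μ, (fun n => ∑ k ∈ range n, b k ω * (ss Ψ (k+1) ω ^ m)⁻¹ *
        ((w (N (k+1) ω) - w (N k ω)) - σ ^ 2 * (Q (N k ω) (Ψ k ω)).coeff 2))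
      =o[atTop] (fun n : ℕ => Real.log n) := by
  obtain ⟨C, hC, hc⟩ := coef_bd (N := N) (Ψ := Ψ) hw
  filter_upwards [h.mart hw hmp b hb hbb, hbb, h.Eb, h.E1, h.E2, h.zz_lim, h.stepB0,
    h.stepB (m-1) (by omega)] with ω hM ⟨B, hB⟩ ⟨K, hK, hE⟩ hE1 hE2 hz0 hB0 ⟨hB1, _⟩
  have hBn : 0 ≤ B := (abs_nonneg _).trans (hB 0)
  have hR : (fun n => ∑ k ∈ range n, b k ω * (ss Ψ (k+1) ω ^ m)⁻¹ * ∑ j ∈ Finset.Icc 3 (2 * m),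
        (Q (N k ω) (Ψ k ω)).coeff j * (μ[fun ω => e k ω ^ j|F k]) ω)
      =o[atTop] (fun n : ℕ => Real.log n) := by
    refine sum_littleO _ (fun k => (1 + uu N Ψ k ω ^ (2 * (m - 1))) * zz Ψ k ω ^ 2)
      (fun k => (B * ∑ j ∈ Finset.Icc 3 (2 * m), C * K) * zz Ψ k ω) (Eventually.of_forall fun k => ?_)
      (by simpa using hz0.const_mul (B * ∑ j ∈ Finset.Icc 3 (2 * m), C * K)) (fun k => ?_) ?_
    · have hu := uu_nn (N := N) (Ψ := Ψ) k ω
      have hz := zz_nn (Ψ := Ψ) k ω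
      have h3 := ss3 (Ψ := Ψ) (k+1) ω
      rw [abs_mul, abs_mul, abs_of_nonneg (a := (ss Ψ (k+1) ω ^ m)⁻¹) (by positivity), mul_assoc, mul_assoc B,
        mul_assoc B]
      refine mul_le_mul (hB k) ?_ (by positivity) hBn
      refine (mul_le_mul_of_nonneg_left (Finset.abs_sum_le_sum_abs _ _) (by positivity)).trans ?_
      rw [Finset.mul_sum, Finset.sum_mul, Finset.sum_mul]
      refine Finset.sum_le_sum fun j hj => ?_
      rw [Finset.mem_Icc] at hj
      rw [abs_mul, ← mul_assoc]
      calc _ ≤ C * (uu N Ψ k ω ^ (2 * m - j) * zz Ψ k ω ^ j) * K :=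
            mul_le_mul (hc k ω j hj.2) (hE k j (by omega)) (abs_nonneg _) (by positivity)
        _ ≤ C * (zz Ψ k ω * ((1 + uu N Ψ k ω ^ (2 * (m - 1))) * zz Ψ k ω ^ 2)) * K := by
            have : uu N Ψ k ω ^ (2 * m - j) * zz Ψ k ω ^ j ≤
                zz Ψ k ω * ((1 + uu N Ψ k ω ^ (2 * (m - 1))) * zz Ψ k ω ^ 2) := by
              have h1 : zz Ψ k ω ^ (j - 1) ≤ zz Ψ k ω ^ 2 :=
                pow_le_pow_of_le_one hz (zz_le k ω) (by omega)
              have h2 : uu N Ψ k ω ^ (2 * m - j) ≤ 1 + uu N Ψ k ω ^ (2 * (m - 1)) := by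
                have := rp_le (uu N Ψ k ω) ((2 * m - j : ℕ):ℝ) (m - 1) hu (by positivity)
                  (by exact_mod_cast (show 2 * m - j ≤ 2 * (m - 1) by omega))
                rwa [Real.rpow_natCast] at this
              rw [show zz Ψ k ω ^ j = zz Ψ k ω * zz Ψ k ω ^ (j - 1) by
                rw [← pow_succ']; congr 1; omega]
              calc _ = zz Ψ k ω * (uu N Ψ k ω ^ (2 * m - j) * zz Ψ k ω ^ (j - 1)) := by ring
                _ ≤ _ := by gcongr
            gcongr
        _ = _ := by ring
    · have := uu_nn (N := N) (Ψ := Ψ) k ω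
      positivity
    · refine (hB0.add hB1).congr_left fun n => ?_
      rw [← Finset.sum_add_distrib]
      exact Finset.sum_congr rfl fun j _ => by ring
  refine (hM.add hR).congr_left fun n => ?_
  rw [← Finset.sum_add_distrib]
  refine Finset.sum_congr rfl fun k _ => ?_
  rw [← mul_add]
  congr 1
  have hex := hw.expand (N k ω) (Ψ k ω) (e k ω)
  rw [← h.hstep] at hex
  have hsplit : ∀ f : ℕ → ℝ, ∑ j ∈ Finset.Icc 1 (2 * m), f j = f 1 + f 2 + ∑ j ∈ Finset.Icc 3 (2 * m), f j := by
    intro f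
    rw [← Finset.add_sum_Ioc_eq_sum_Icc (by omega), ← Finset.Icc_succ_left_eq_Ioc]
    change f 1 + ∑ j ∈ Finset.Icc 2 (2 * m), f j = _
    rw [← Finset.add_sum_Ioc_eq_sum_Icc (by omega), ← Finset.Icc_succ_left_eq_Ioc]
    change f 1 + (f 2 + ∑ j ∈ Finset.Icc 3 (2 * m), f j) = _
    ring
  rw [hex]
  simp only [mul_sub, Finset.sum_sub_distrib]
  rw [hsplit (fun j => (Q (N k ω) (Ψ k ω)).coeff j * (μ[fun ω => e k ω ^ j|F k]) ω), hE1 k, hE2 k]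
  ring

lemma Setup.stepG0 (h : Setup μ F e N Ψ σ a p) {w : (Fin d → ℝ) → ℝ} {m Q} (hw : PC w (2 * m) Q)
    (hmp : m ≤ p) (b : ℕ → Ω → ℝ) (hb : ∀ k, StronglyMeasurable[F k] (b k))
    (hbb : ∀ᵐ ω ∂μ, Tendsto (fun k => b k ω) atTop (𝓝 0)) :
    ∀ᵐ ω ∂μ, (fun n => ∑ k ∈ range n, b k ω * (ss Ψ (k+1) ω ^ m)⁻¹ *
        (w (N (k+1) ω) - w (N k ω)))
      =o[atTop] (fun n : ℕ => Real.log n) := by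
  rcases Nat.eq_zero_or_pos m with rfl | hm
  · refine Eventually.of_forall fun ω => ?_
    have : ∀ k, w (N (k+1) ω) - w (N k ω) = 0 := fun k => by
      have hex := hw.expand (N k ω) (Ψ k ω) (e k ω)
      rw [← h.hstep] at hex
      rw [hex]; simp
    simp [this]
  obtain ⟨C, hC, hc⟩ := coef_bd (N := N) (Ψ := Ψ) hw
  filter_upwards [h.stepG hw hm hmp b hb (hbb.mono fun ω hω => tend_bdd hω), hbb,
    h.stepB (m-1) (by omega)] with ω hM hb0 ⟨hB1, _⟩
  have hR : (fun n => ∑ k ∈ range n, b k ω * (ss Ψ (k+1) ω ^ m)⁻¹ *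
        (σ ^ 2 * (Q (N k ω) (Ψ k ω)).coeff 2))
      =o[atTop] (fun n : ℕ => Real.log n) := by
    refine sum_littleO _ _ (fun k => σ ^ 2 * C * |b k ω|) (Eventually.of_forall fun k => ?_)
      (by simpa using (hb0.abs.const_mul (σ ^ 2 * C))) (fun k => ?_) hB1
    · have hu := uu_nn (N := N) (Ψ := Ψ) k ω
      have hz := zz_nn (Ψ := Ψ) k ω
      have h3 := ss3 (Ψ := Ψ) (k+1) ω
      rw [abs_mul, abs_mul, abs_mul, abs_of_nonneg (a := (ss Ψ (k+1) ω ^ m)⁻¹) (by positivity),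
        abs_of_nonneg (sq_nonneg σ)]
      have := hc k ω 2 (by omega)
      rw [show 2 * m - 2 = 2 * (m - 1) by omega] at this
      calc _ = σ ^ 2 * |b k ω| * ((ss Ψ (k+1) ω ^ m)⁻¹ * |(Q (N k ω) (Ψ k ω)).coeff 2|) := by ring
        _ ≤ σ ^ 2 * |b k ω| * _ := mul_le_mul_of_nonneg_left this (by positivity)
        _ = _ := by ring
    · have := uu_nn (N := N) (Ψ := Ψ) k ω
      positivity
  refine (hM.add hR).congr_left fun n => ?_
  rw [← Finset.sum_add_distrib]
  exact Finset.sum_congr rfl fun k _ => by ring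

end P8

section P9
variable {Ω : Type*} {m0 : MeasurableSpace Ω} {d : ℕ}
variable {N Ψ : ℕ → Ω → Fin d → ℝ}
variable {μ : Measure Ω} [IsProbabilityMeasure μ] {F : Filtration ℕ m0} {e : ℕ → Ω → ℝ} {σ a : ℝ} {p : ℕ}

lemma inv_diff_le (x : ℝ) (hx : 0 < x) (M : ℕ) :
    (x ^ M)⁻¹ - ((x+1) ^ M)⁻¹ ≤ M / (x+1) * (x ^ M)⁻¹ := by
  have h := one_add_mul_le_pow (a := -(1/(x+1))) (by
    have : 1 / (x+1) ≤ 1 := by rw [div_le_one (by positivity)]; linarith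
    linarith) M
  have e1 : 1 + -(1/(x+1)) = x / (x+1) := by field_simp; ring
  rw [e1, div_pow] at h
  have h2 := mul_le_mul_of_nonneg_right h (show 0 ≤ (x ^ M)⁻¹ by positivity)
  have e2 : x ^ M / (x+1) ^ M * (x ^ M)⁻¹ = ((x+1) ^ M)⁻¹ := by field_simp
  rw [e2] at h2
  have e3 : (1 + ↑M * -(1 / (x + 1))) * (x ^ M)⁻¹ = (x ^ M)⁻¹ - M / (x+1) * (x ^ M)⁻¹ := by ring
  linarith

lemma inv_diff_nn (x : ℝ) (hx : 0 < x) (M : ℕ) : 0 ≤ (x ^ M)⁻¹ - ((x+1) ^ M)⁻¹ := by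
  have : ((x+1) ^ M)⁻¹ ≤ (x ^ M)⁻¹ := by gcongr; linarith
  linarith

lemma inv_diff_ge (x : ℝ) (hx : 1 ≤ x) (M : ℕ) (hM : 1 ≤ M) :
    (x ^ (M+1))⁻¹ ≤ 2 * ((x ^ M)⁻¹ - ((x+1) ^ M)⁻¹) := by
  have h : (x/(x+1)) ^ M ≤ x/(x+1) := by
    have h1 : x/(x+1) ≤ 1 := by rw [div_le_one (by positivity)]; linarith
    calc (x/(x+1)) ^ M ≤ (x/(x+1)) ^ 1 := pow_le_pow_of_le_one (by positivity) h1 hM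
      _ = _ := pow_one _
  have e2 : ((x+1) ^ M)⁻¹ = (x/(x+1)) ^ M * (x ^ M)⁻¹ := by rw [div_pow]; field_simp
  have e3 : (x ^ (M+1))⁻¹ = x⁻¹ * (x ^ M)⁻¹ := by rw [pow_succ, mul_inv]; ring
  rw [e2, e3]
  have h4 : x⁻¹ ≤ 2 * (1 - x/(x+1)) := by
    have : 1 - x/(x+1) = 1/(x+1) := by field_simp; ring
    rw [this, inv_eq_one_div, mul_one_div, div_le_div_iff₀ (by positivity) (by positivity)]; linarith
  have h5 : 0 ≤ (x ^ M)⁻¹ := by positivity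
  nlinarith [mul_le_mul_of_nonneg_right h h5, mul_le_mul_of_nonneg_right h4 h5]

lemma t_lim : Tendsto (fun k : ℕ => ((k:ℝ)+1)/((k:ℝ)+2)) atTop (𝓝 1) := by
  have h := tendsto_one_div_add_atTop_nhds_zero_nat (𝕜 := ℝ)
  have h1 := ((tendsto_add_atTop_iff_nat 1).2 h).const_sub 1
  rw [sub_zero] at h1
  refine h1.congr fun k => ?_
  push_cast
  field_simp; ring

lemma g_lim (M : ℕ) : Tendsto (fun k : ℕ => ((k:ℝ)+1) * (1 - (((k:ℝ)+1)/((k:ℝ)+2)) ^ M)) atTop (𝓝 M) := by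
  have h : Tendsto (fun k : ℕ => ((k:ℝ)+1)/((k:ℝ)+2) * ∑ i ∈ range M, (((k:ℝ)+1)/((k:ℝ)+2)) ^ i) atTop
      (𝓝 (1 * ∑ i ∈ range M, 1 ^ i)) := t_lim.mul (tendsto_finsetSum _ fun i _ => t_lim.pow i)
  simp only [one_pow, Finset.sum_const, card_range, nsmul_eq_mul, mul_one, one_mul] at h
  refine h.congr fun k => ?_
  have := mul_neg_geom_sum (((k:ℝ)+1)/((k:ℝ)+2)) M
  rw [← this]
  have : (1 - ((k:ℝ)+1)/((k:ℝ)+2)) = 1/((k:ℝ)+2) := by field_simp; ring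
  rw [this]; ring

lemma abel_sum (W B : ℕ → ℝ) (hB : B 0 = 0) (n : ℕ) :
    ∑ k ∈ range n, W k * (B (k+1) - B k) = W n * B n - ∑ k ∈ range n, (W (k+1) - W k) * B (k+1) := by
  induction n with
  | zero => simp [hB]
  | succ n ih => rw [Finset.sum_range_succ, Finset.sum_range_succ, ih]; ring

lemma ratio_lim {s : ℕ → ℝ} {c : ℝ} (h : Tendsto (fun n : ℕ => (n:ℝ)⁻¹ * s n) atTop (𝓝 c)) (x : ℝ) (hx : 0 ≤ x) :
    Tendsto (fun n : ℕ => s n / ((n:ℝ) + x)) atTop (𝓝 c) := by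
  have h2 : Tendsto (fun n : ℕ => (n:ℝ)/((n:ℝ) + x)) atTop (𝓝 1) := tendsto_natCast_div_add_atTop x
  have h3 := h.mul h2
  rw [mul_one] at h3
  refine h3.congr' ?_
  filter_upwards [eventually_gt_atTop 0] with n hn
  have : (n:ℝ) ≠ 0 := by positivity
  have : (n:ℝ) + x ≠ 0 := by positivity
  field_simp

def dlt (i j : Fin d) : ℝ := if i = j then 1 else 0

def BB (Ψ : ℕ → Ω → Fin d → ℝ) (i j : Fin d) (n : ℕ) (ω : Ω) : ℝ :=
  ∑ k ∈ range n, (Ψ k ω i * Ψ k ω j - dlt i j)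

lemma Setup.BB_lim (h : Setup μ F e N Ψ σ a p) : ∀ᵐ ω ∂μ, ∀ i j,
    Tendsto (fun n : ℕ => (n:ℝ)⁻¹ * BB Ψ i j n ω) atTop (𝓝 0) := by
  filter_upwards [h.hconv] with ω hω i j
  have := (hω i j).sub_const (dlt i j)
  rw [show (if i = j then (1:ℝ) else 0) - dlt i j = 0 by simp [dlt]] at this
  refine this.congr' ?_
  filter_upwards [eventually_gt_atTop 0] with n hn
  have : (n:ℝ) ≠ 0 := by positivity
  simp only [BB, Finset.sum_sub_distrib, Finset.sum_const, card_range, nsmul_eq_mul]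
  field_simp

lemma Setup.BBm (h : Setup μ F e N Ψ σ a p) (i j k) : StronglyMeasurable[F k] (BB Ψ i j (k+1)) := by
  refine Finset.stronglyMeasurable_fun_sum _ fun l hl => StronglyMeasurable.sub ?_ stronglyMeasurable_const
  have h1 : StronglyMeasurable[F k] (Ψ l) := (h.hΨm l).mono (F.mono (by simp at hl; omega))
  have c (i : Fin d) : StronglyMeasurable[F k] (fun ω => Ψ l ω i) :=
    (continuous_apply i).comp_stronglyMeasurable h1
  exact (c i).mul (c j)

def II (N : ℕ → Ω → Fin d → ℝ) (m n : ℕ) (ω : Ω) : ℝ :=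
  ∑ k ∈ range n, (((k:ℝ)+1) ^ (m+1))⁻¹ * (N k ω ⬝ᵥ N k ω) ^ m

lemma shift1 {s : ℕ → ℝ} {c : ℝ} (h : Tendsto (fun n : ℕ => (n:ℝ)⁻¹ * s n) atTop (𝓝 c)) (x : ℝ) (hx : 0 ≤ x) :
    Tendsto (fun n : ℕ => s (n+1) / ((n:ℝ) + x)) atTop (𝓝 c) :=
  ratio_lim (s := fun n => s (n+1)) (shift_lim h) x hx

lemma Setup.stepR (h : Setup μ F e N Ψ σ a p) {w : (Fin d → ℝ) → ℝ} {m Q} (hw : PC w (2 * m) Q)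
    (hmp : m ≤ p)
    (hA : ∀ᵐ ω ∂μ, (fun n => II N m n ω) =O[atTop] (fun n : ℕ => Real.log n)) (i j : Fin d) :
    ∀ᵐ ω ∂μ, (fun n => ∑ k ∈ range n, (((k:ℝ)+2) ^ (m+1))⁻¹ * w (N k ω) *
      (Ψ k ω i * Ψ k ω j - dlt i j)) =o[atTop] (fun n : ℕ => Real.log n) := by
  set b : ℕ → Ω → ℝ := fun k ω => BB Ψ i j (k+1) ω * (((k:ℝ)+3) ^ (m+1))⁻¹ * ss Ψ (k+1) ω ^ m with hb
  have hbm : ∀ k, StronglyMeasurable[F k] (b k) := fun k =>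
    ((h.BBm i j k).mul stronglyMeasurable_const).mul ((h.ssm k).pow m)
  have hb0 : ∀ᵐ ω ∂μ, Tendsto (fun k => b k ω) atTop (𝓝 0) := by
    filter_upwards [h.BB_lim, h.slim] with ω h1 h2
    have := (shift1 (h1 i j) 3 (by norm_num)).mul ((shift1 (s := fun n => ss Ψ n ω) h2 3 (by norm_num)).pow m)
    rw [zero_mul] at this
    refine this.congr fun k => ?_
    simp only [hb]
    rw [div_pow, pow_succ]; field_simp
  obtain ⟨C, hC, hwb⟩ := hw.wbd
  filter_upwards [h.BB_lim, h.slim, h.stepG0 hw hmp b hbm hb0, hA, h.stepB m hmp] with ω hB hs hG hI ⟨_, hu⟩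
  set W : ℕ → ℝ := fun k => (((k:ℝ)+2) ^ (m+1))⁻¹ * w (N k ω) with hW
  have hwV : ∀ k, |w (N k ω)| ≤ C * (N k ω ⬝ᵥ N k ω) ^ m := fun k => by
    have := hwb (N k ω)
    rwa [pow_mul, nrm_sq] at this
  have hV0 : ∀ k, 0 ≤ N k ω ⬝ᵥ N k ω := fun k => dot_nn _
  -- boundary
  have t1 : (fun n => W n * BB Ψ i j n ω) =o[atTop] (fun n : ℕ => Real.log n) := by
    have b1 : Tendsto (fun n : ℕ => C * ((ss Ψ n ω / ((n:ℝ)+2)) ^ m * |BB Ψ i j n ω / ((n:ℝ)+2)|)) atTop (𝓝 0) := by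
      have := (((ratio_lim hs 2 (by norm_num)).pow m).mul (ratio_lim (hB i j) 2 (by norm_num)).abs).const_mul C
      simpa using this
    have b2 := ((isLittleO_one_iff ℝ).2 b1).mul_isBigO hu
    simp only [one_mul] at b2
    refine IsBigO.trans_isLittleO (IsBigO.of_bound 1 (Eventually.of_forall fun n => ?_)) b2
    rw [one_mul, Real.norm_eq_abs, Real.norm_eq_abs]
    refine le_trans ?_ (le_abs_self _)
    have h3 := ss3 (Ψ := Ψ) n ω
    have hn : (0:ℝ) < (n:ℝ) + 2 := by positivity
    simp only [hW]
    rw [uu_pow, abs_mul, abs_mul, abs_div, abs_of_nonneg (a := (((n:ℝ)+2) ^ (m+1))⁻¹) (by positivity), abs_of_pos hn]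
    calc _ ≤ (((n:ℝ)+2) ^ (m+1))⁻¹ * (C * (N n ω ⬝ᵥ N n ω) ^ m) * |BB Ψ i j n ω| := by
          have := hwV n
          gcongr
      _ = _ := by rw [div_pow, pow_succ]; field_simp
  -- drift of weights
  have t2 : (fun n => ∑ k ∈ range n, ((((k:ℝ)+3) ^ (m+1))⁻¹ - (((k:ℝ)+2) ^ (m+1))⁻¹) * w (N k ω) *
      BB Ψ i j (k+1) ω) =o[atTop] (fun n : ℕ => Real.log n) := by
    refine sum_littleO _ (fun k => (((k:ℝ)+1) ^ (m+1))⁻¹ * (N k ω ⬝ᵥ N k ω) ^ m)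
      (fun k => C * (m+1:ℕ) * |BB Ψ i j (k+1) ω / ((k:ℝ)+3)|) (Eventually.of_forall fun k => ?_) ?_
      (fun k => by have := hV0 k; positivity) hI
    · have h1 := inv_diff_le ((k:ℝ)+2) (by positivity) (m+1)
      have h2 := inv_diff_nn ((k:ℝ)+2) (by positivity) (m+1)
      rw [show (k:ℝ)+2+1 = (k:ℝ)+3 by ring] at h1 h2
      have h4 : (((k:ℝ)+2) ^ (m+1))⁻¹ ≤ (((k:ℝ)+1) ^ (m+1))⁻¹ := by gcongr; norm_num
      rw [abs_mul, abs_mul, abs_sub_comm, abs_of_nonneg h2, abs_div, abs_of_pos (show (0:ℝ) < (k:ℝ)+3 by positivity)]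
      have := hV0 k
      calc _ ≤ (((m+1:ℕ):ℝ) / ((k:ℝ)+3) * (((k:ℝ)+1) ^ (m+1))⁻¹) * (C * (N k ω ⬝ᵥ N k ω) ^ m) * |BB Ψ i j (k+1) ω| := by
            have := hwV k
            have h5 := h1.trans (mul_le_mul_of_nonneg_left h4 (by positivity))
            gcongr
        _ = _ := by ring
    · have := ((shift1 (hB i j) 3 (by norm_num)).abs).const_mul (C * (m+1:ℕ))
      simpa using this
  have := t1.sub (hG.add t2)
  refine this.congr_left fun n => ?_
  have e1 : ∀ k : ℕ, (((k:ℝ)+2) ^ (m+1))⁻¹ * w (N k ω) * (Ψ k ω i * Ψ k ω j - dlt i j) =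
      W k * (BB Ψ i j (k+1) ω - BB Ψ i j k ω) := fun k => by
    simp only [BB, Finset.sum_range_succ, hW]; ring
  simp only [e1]
  rw [abel_sum W (fun k => BB Ψ i j k ω) (by simp [BB])]
  congr 1
  rw [← Finset.sum_add_distrib]
  refine Finset.sum_congr rfl fun k _ => ?_
  have h3 := ss3 (Ψ := Ψ) (k+1) ω
  have h4 : ss Ψ (k+1) ω ^ m ≠ 0 := by positivity
  simp only [hb, hW]
  rw [mul_assoc (BB Ψ i j (k+1) ω * _), mul_inv_cancel₀ h4]
  push_cast
  rw [show (k:ℝ)+1+2 = (k:ℝ)+3 by ring]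
  ring

end P9

section P10
variable {Ω : Type*} {m0 : MeasurableSpace Ω} {d : ℕ}
variable {N Ψ : ℕ → Ω → Fin d → ℝ}
variable {μ : Measure Ω} [IsProbabilityMeasure μ] {F : Filtration ℕ m0} {e : ℕ → Ω → ℝ} {σ a : ℝ} {p : ℕ}

def ell (σ : ℝ) (d m : ℕ) : ℝ := ∏ i ∈ range m, (σ ^ 2 * (d + 2 * i))

def wij (m : ℕ) (i j : Fin d) (x : Fin d → ℝ) : ℝ :=
  (m+1) * dlt i j * (x ⬝ᵥ x) ^ m + 2 * (m+1) * m * ((x ⬝ᵥ x) ^ (m-1) * (x i * x j))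

lemma wij_PC (m : ℕ) (i j : Fin d) : ∃ Q, PC (wij m i j) (2 * m) Q := by
  have h1 := (PC.const (d := d) ((m+1) * dlt i j)).mul (PC.dotpow m)
  rw [zero_add] at h1
  rcases m with _ | m
  · have : wij 0 i j = fun x => ((0:ℕ)+1) * dlt i j * (x ⬝ᵥ x) ^ 0 := by
      funext x; simp [wij]
    rw [this]
    exact ⟨_, h1⟩
  · have h2 := (PC.const (d := d) (2 * ((m+1:ℕ)+1) * (m+1:ℕ))).mul
      ((PC.dotpow m).mul ((PC.coord i).mul (PC.coord j)))
    rw [zero_add, show 2 * m + (1 + 1) = 2 * (m+1) by ring] at h2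
    exact ⟨_, h1.add h2⟩

lemma wij_sum (m : ℕ) (x y : Fin d → ℝ) :
    (qd x y ^ (m+1)).coeff 2 = ∑ i, ∑ j, wij m i j x * (y i * y j) := by
  rw [qd2]
  have e1 : ∑ i, ∑ j, wij m i j x * (y i * y j) =
      (m+1) * (x ⬝ᵥ x) ^ m * (∑ i, ∑ j, dlt i j * (y i * y j)) +
      2 * (m+1) * m * (x ⬝ᵥ x) ^ (m-1) * (∑ i, ∑ j, (x i * y i) * (x j * y j)) := by
    rw [Finset.mul_sum, Finset.mul_sum, ← Finset.sum_add_distrib]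
    refine Finset.sum_congr rfl fun i _ => ?_
    rw [Finset.mul_sum, Finset.mul_sum, ← Finset.sum_add_distrib]
    exact Finset.sum_congr rfl fun j _ => by unfold wij; ring
  rw [e1]
  have e2 : ∑ i, ∑ j, dlt i j * (y i * y j) = y ⬝ᵥ y := by
    simp [dlt, dotProduct]
  have e3 : ∑ i, ∑ j, (x i * y i) * (x j * y j) = (x ⬝ᵥ y) ^ 2 := by
    rw [pow_two, dotProduct, Finset.sum_mul_sum]
  rw [e2, e3]

lemma wij_diag (m : ℕ) (x : Fin d → ℝ) :
    ∑ i, ∑ j, wij m i j x * dlt i j = (m+1) * (d + 2 * m) * (x ⬝ᵥ x) ^ m := by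
  have e1 : ∀ i, ∑ j, wij m i j x * dlt i j = (m+1) * (x ⬝ᵥ x) ^ m +
     2 * (m+1) * m * (x ⬝ᵥ x) ^ (m-1) * (x i * x i) := fun i => by
    simp [dlt, wij]; ring
  simp only [e1]
  have e2 : ∑ i, 2 * ((m:ℝ)+1) * m * (x ⬝ᵥ x) ^ (m-1) * (x i * x i) =
      2 * ((m:ℝ)+1) * m * (x ⬝ᵥ x) ^ (m-1) * (x ⬝ᵥ x) := by
    rw [← Finset.mul_sum]; rfl
  rw [Finset.sum_add_distrib, e2, Finset.sum_const, Finset.card_univ, Fintype.card_fin, nsmul_eq_mul]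
  rcases m with _ | m
  · simp
  · simp only [Nat.add_sub_cancel]; push_cast; ring

lemma Setup.lim_step (h : Setup μ F e N Ψ σ a p) (m : ℕ) (hmp : m + 1 ≤ p) (c : ℝ)
    (hA : ∀ᵐ ω ∂μ, (fun n => II N m n ω - c * Real.log n) =o[atTop] (fun n : ℕ => Real.log n)) :
    ∀ᵐ ω ∂μ, (fun n => II N (m+1) n ω - c * (σ ^ 2 * (d + 2 * m)) * Real.log n) =o[atTop]
      (fun n : ℕ => Real.log n) := by
  have hAO : ∀ᵐ ω ∂μ, (fun n => II N m n ω) =O[atTop] (fun n : ℕ => Real.log n) := by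
    filter_upwards [hA] with ω hω
    have := hω.isBigO.add ((isBigO_refl (fun n : ℕ => Real.log n) atTop).const_mul_left c)
    simpa using this
  set b : ℕ → Ω → ℝ := fun k ω => (((k:ℝ)+2) ^ (m+1))⁻¹ * ss Ψ (k+1) ω ^ (m+1) with hb
  have hbm : ∀ k, StronglyMeasurable[F k] (b k) := fun k =>
    stronglyMeasurable_const.mul ((h.ssm k).pow (m+1))
  have hbb : ∀ᵐ ω ∂μ, ∃ C, ∀ k, |b k ω| ≤ C := by
    filter_upwards [h.slim] with ω h2
    have := ((shift1 (s := fun n => ss Ψ n ω) h2 2 (by norm_num)).pow (m+1))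
    refine tend_bdd (this.congr fun k => ?_)
    simp only [hb]
    rw [div_pow, div_eq_mul_inv, mul_comm]
  have hR : ∀ᵐ ω ∂μ, ∀ i j, (fun n => ∑ k ∈ range n, (((k:ℝ)+2) ^ (m+1))⁻¹ * wij m i j (N k ω) *
      (Ψ k ω i * Ψ k ω j - dlt i j)) =o[atTop] (fun n : ℕ => Real.log n) := by
    refine ae_all_iff.2 fun i => ae_all_iff.2 fun j => ?_
    obtain ⟨Q, hQ⟩ := wij_PC m i j
    exact h.stepR hQ (by omega) hAO i j
  filter_upwards [hA, hAO, hR, h.stepG (PC.dotpow (m+1)) (by omega) hmp b hbm hbb] with ω hA hAO hR hG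
  have hV0 : ∀ k, 0 ≤ N k ω ⬝ᵥ N k ω := fun k => dot_nn _
  set lg := fun n : ℕ => Real.log n with hlg
  -- replace (k+2) by (k+1)
  have s1 : (fun n => ∑ k ∈ range n, ((((k:ℝ)+2) ^ (m+1))⁻¹ - (((k:ℝ)+1) ^ (m+1))⁻¹) * (N k ω ⬝ᵥ N k ω) ^ m)
      =o[atTop] lg := by
    refine sum_littleO _ (fun k => (((k:ℝ)+1) ^ (m+1))⁻¹ * (N k ω ⬝ᵥ N k ω) ^ m)
      (fun k => |1 - (((k:ℝ)+1)/((k:ℝ)+2)) ^ (m+1)|) (Eventually.of_forall fun k => ?_) ?_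
      (fun k => by have := hV0 k; positivity) hAO
    · have := hV0 k
      refine le_of_eq ?_
      rw [show ((((k:ℝ)+2) ^ (m+1))⁻¹ - (((k:ℝ)+1) ^ (m+1))⁻¹) * (N k ω ⬝ᵥ N k ω) ^ m =
        -((1 - (((k:ℝ)+1)/((k:ℝ)+2)) ^ (m+1)) * ((((k:ℝ)+1) ^ (m+1))⁻¹ * (N k ω ⬝ᵥ N k ω) ^ m)) by
          rw [div_pow]; field_simp; ring, abs_neg, abs_mul]
      congr 1
      exact abs_of_nonneg (by positivity)
    · have := ((t_lim.pow (m+1)).const_sub 1).abs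
      simpa using this
  have s2 : (fun n => ∑ i, ∑ j, ∑ k ∈ range n, (((k:ℝ)+2) ^ (m+1))⁻¹ * wij m i j (N k ω) *
      (Ψ k ω i * Ψ k ω j - dlt i j)) =o[atTop] lg :=
    (IsLittleO.sum (s := Finset.univ) fun i _ => IsLittleO.sum (s := Finset.univ) fun j _ => hR i j).congr_left
      (fun n => by simp only [Finset.sum_apply])
  set c' : ℝ := (m+1) * (c * (σ ^ 2 * (d + 2 * m))) with hc'
  set T : ℕ → ℝ := fun n => ∑ k ∈ range n, (((k:ℝ)+2) ^ (m+1))⁻¹ *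
    ((N (k+1) ω ⬝ᵥ N (k+1) ω) ^ (m+1) - (N k ω ⬝ᵥ N k ω) ^ (m+1)) with hT
  have hTl : (fun n => T n - c' * lg n) =o[atTop] lg := by
    have := hG.add ((s2.const_mul_left (σ ^ 2)).add
      ((s1.add hA).const_mul_left (σ ^ 2 * ((m+1) * (d + 2 * m)))))
    refine this.congr_left fun n => ?_
    have e1 : ∑ i, ∑ j, ∑ k ∈ range n, (((k:ℝ)+2) ^ (m+1))⁻¹ * wij m i j (N k ω) *
        (Ψ k ω i * Ψ k ω j - dlt i j) = ∑ k ∈ range n, (((k:ℝ)+2) ^ (m+1))⁻¹ *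
        ((qd (N k ω) (Ψ k ω) ^ (m+1)).coeff 2 - (m+1) * (d + 2 * m) * (N k ω ⬝ᵥ N k ω) ^ m) := by
      calc _ = ∑ i, ∑ k ∈ range n, ∑ j, (((k:ℝ)+2) ^ (m+1))⁻¹ * wij m i j (N k ω) *
            (Ψ k ω i * Ψ k ω j - dlt i j) := Finset.sum_congr rfl fun i _ => Finset.sum_comm
        _ = ∑ k ∈ range n, ∑ i, ∑ j, (((k:ℝ)+2) ^ (m+1))⁻¹ * wij m i j (N k ω) *
            (Ψ k ω i * Ψ k ω j - dlt i j) := Finset.sum_comm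
        _ = _ := by
          refine Finset.sum_congr rfl fun k _ => ?_
          rw [wij_sum, ← wij_diag, ← Finset.sum_sub_distrib, Finset.mul_sum]
          refine Finset.sum_congr rfl fun i _ => ?_
          rw [← Finset.sum_sub_distrib, Finset.mul_sum]
          exact Finset.sum_congr rfl fun j _ => by ring
    rw [e1]
    have e2 : II N m n ω = ∑ k ∈ range n, (((k:ℝ)+1) ^ (m+1))⁻¹ * (N k ω ⬝ᵥ N k ω) ^ m := rfl
    have e3 : ∑ k ∈ range n, b k ω * (ss Ψ (k+1) ω ^ (m+1))⁻¹ *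
        (((N (k+1) ω ⬝ᵥ N (k+1) ω) ^ (m+1) - (N k ω ⬝ᵥ N k ω) ^ (m+1)) -
          σ ^ 2 * (qd (N k ω) (Ψ k ω) ^ (m+1)).coeff 2) =
        T n - ∑ k ∈ range n, (((k:ℝ)+2) ^ (m+1))⁻¹ * (σ ^ 2 * (qd (N k ω) (Ψ k ω) ^ (m+1)).coeff 2) := by
      rw [hT, ← Finset.sum_sub_distrib]
      refine Finset.sum_congr rfl fun k _ => ?_
      have h3 := ss3 (Ψ := Ψ) (k+1) ω
      have h4 : ss Ψ (k+1) ω ^ (m+1) ≠ 0 := by positivity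
      simp only [hb]
      rw [mul_assoc (((k:ℝ)+2) ^ (m+1))⁻¹, mul_inv_cancel₀ h4]; ring
    rw [e3, e2]
    have e4 : ∀ A B C D X : ℝ, T n - σ ^ 2 * A + (σ ^ 2 * (A - (m+1) * (d + 2 * m) * B) +
       σ ^ 2 * ((m+1) * (d + 2 * m)) * (B - D + (D - c * X))) = T n - c' * X := by
      intro A B C D X; rw [hc']; ring
    have e5 := e4 (∑ k ∈ range n, (((k:ℝ)+2) ^ (m+1))⁻¹ * (qd (N k ω) (Ψ k ω) ^ (m+1)).coeff 2)
      (∑ k ∈ range n, (((k:ℝ)+2) ^ (m+1))⁻¹ * (N k ω ⬝ᵥ N k ω) ^ m) 0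
      (∑ k ∈ range n, (((k:ℝ)+1) ^ (m+1))⁻¹ * (N k ω ⬝ᵥ N k ω) ^ m) (lg n)
    rw [← e5]
    congr 1
    · congr 1
      rw [Finset.mul_sum]
      exact Finset.sum_congr rfl fun k _ => by ring
    · congr 1
      · congr 1
        rw [Finset.mul_sum, ← Finset.sum_sub_distrib]
        exact Finset.sum_congr rfl fun k _ => by ring
      · congr 2
        rw [← Finset.sum_sub_distrib]
        exact Finset.sum_congr rfl fun k _ => by ring
  set U : ℕ → ℝ := fun k => (((k:ℝ)+1) ^ (m+1))⁻¹ * (N k ω ⬝ᵥ N k ω) ^ (m+1) with hU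
  set D : ℕ → ℝ := fun k => ((((k:ℝ)+1) ^ (m+1))⁻¹ - (((k:ℝ)+2) ^ (m+1))⁻¹) * (N k ω ⬝ᵥ N k ω) ^ (m+1) with hD
  have hUT : ∀ n, U n + ∑ k ∈ range n, D k = U 0 + T n := by
    intro n
    induction n with
    | zero => simp [hT]
    | succ n ih =>
      have e1 : T (n+1) = T n + (((n:ℝ)+2) ^ (m+1))⁻¹ *
        ((N (n+1) ω ⬝ᵥ N (n+1) ω) ^ (m+1) - (N n ω ⬝ᵥ N n ω) ^ (m+1)) := by
        simp only [hT]; rw [Finset.sum_range_succ]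
      have e2 : U (n+1) + D n = U n + (((n:ℝ)+2) ^ (m+1))⁻¹ *
        ((N (n+1) ω ⬝ᵥ N (n+1) ω) ^ (m+1) - (N n ω ⬝ᵥ N n ω) ^ (m+1)) := by
        simp only [hU, hD]
        push_cast
        rw [show (n:ℝ)+1+1 = (n:ℝ)+2 by ring]
        ring
      rw [Finset.sum_range_succ, e1]
      linarith [ih]
  have hU0 : ∀ n, 0 ≤ U n := fun n => by have := hV0 n; simp only [hU]; positivity
  have hUTl : (fun n => U n + ∑ k ∈ range n, D k - c' * lg n) =o[atTop] lg := by
    refine ((const_littleO (U 0)).add hTl).congr_left fun n => ?_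
    rw [hUT]; ring
  have hUTO : (fun n => U n + ∑ k ∈ range n, D k) =O[atTop] lg := by
    have := hUTl.isBigO.add ((isBigO_refl lg atTop).const_mul_left c')
    simpa using this
  have hIbig : (fun n => II N (m+1) n ω) =O[atTop] lg := by
    refine bigO_of_le _ _ (fun n => ?_) 2 (fun n => ?_) hUTO
    · exact Finset.sum_nonneg fun k _ => by have := hV0 k; positivity
    · have h1 : II N (m+1) n ω ≤ 2 * ∑ k ∈ range n, D k := by
        rw [Finset.mul_sum]
        refine Finset.sum_le_sum fun k _ => ?_
        have h2 := inv_diff_ge ((k:ℝ)+1) (by linarith [Nat.cast_nonneg (α := ℝ) k]) (m+1) (by omega)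
        rw [show (k:ℝ)+1+1 = (k:ℝ)+2 by ring] at h2
        have := hV0 k
        simp only [hD]
        rw [← mul_assoc]
        gcongr
      linarith [hU0 n]
  have s3 : (fun n => ∑ k ∈ range n, (D k - ((m+1:ℕ):ℝ) * ((((k:ℝ)+1) ^ (m+1+1))⁻¹ * (N k ω ⬝ᵥ N k ω) ^ (m+1))))
      =o[atTop] lg := by
    refine sum_littleO _ (fun k => (((k:ℝ)+1) ^ (m+1+1))⁻¹ * (N k ω ⬝ᵥ N k ω) ^ (m+1))
      (fun k => |((k:ℝ)+1) * (1 - (((k:ℝ)+1)/((k:ℝ)+2)) ^ (m+1)) - (m+1:ℕ)|) (Eventually.of_forall fun k => ?_) ?_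
      (fun k => by have := hV0 k; positivity) hIbig
    · have := hV0 k
      refine le_of_eq ?_
      rw [show D k - ((m+1:ℕ):ℝ) * ((((k:ℝ)+1) ^ (m+1+1))⁻¹ * (N k ω ⬝ᵥ N k ω) ^ (m+1)) =
        (((k:ℝ)+1) * (1 - (((k:ℝ)+1)/((k:ℝ)+2)) ^ (m+1)) - (m+1:ℕ)) *
          ((((k:ℝ)+1) ^ (m+1+1))⁻¹ * (N k ω ⬝ᵥ N k ω) ^ (m+1)) by
          simp only [hD]
          rw [div_pow, pow_succ ((k:ℝ)+1) (m+1)]; field_simp, abs_mul]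
      congr 1
      exact abs_of_nonneg (by positivity)
    · have := ((g_lim (m+1)).sub_const ((m+1:ℕ):ℝ)).abs
      simpa using this
  have hfin := ode_aux (fun n => II N (m+1) n ω) ((m+1:ℕ):ℝ) c' (by positivity) (by
    refine (hUTl.sub s3).congr_left fun n => ?_
    have e1 : ((n:ℝ)+1) * (II N (m+1) (n+1) ω - II N (m+1) n ω) = U n := by
      simp only [II, Finset.sum_range_succ, hU]
      rw [pow_succ ((n:ℝ)+1) (m+1)]
      field_simp
      ring
    simp only [e1]
    rw [Finset.sum_sub_distrib, ← Finset.mul_sum]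
    simp only [II]
    ring)
  refine hfin.congr_left fun n => ?_
  have : c' / ((m+1:ℕ):ℝ) = c * (σ ^ 2 * (d + 2 * m)) := by
    rw [hc']; push_cast; field_simp
  rw [this]

lemma Setup.lim (h : Setup μ F e N Ψ σ a p) (m : ℕ) (hmp : m ≤ p) :
    ∀ᵐ ω ∂μ, (fun n => II N m n ω - ell σ d m * Real.log n) =o[atTop] (fun n : ℕ => Real.log n) := by
  induction m with
  | zero =>
    refine Eventually.of_forall fun ω => ?_
    simpa [II, ell] using harm_lim
  | succ m ih =>
    have := h.lim_step m hmp _ (ih (by omega))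
    simpa only [ell, Finset.prod_range_succ] using this

end P10

section P11

lemma pd_factor {d : ℕ} {L : Matrix (Fin d) (Fin d) ℝ} (hL : L.PosDef) :
    ∃ B : Matrix (Fin d) (Fin d) ℝ, L = Bᵀ * B ∧ IsUnit B := by
  obtain ⟨B, hB, h⟩ : ∃ B : Matrix (Fin d) (Fin d) ℝ, IsUnit B ∧ L = star B * B := by
    open scoped MatrixOrder Matrix.Norms.L2Operator in
    obtain ⟨B, h⟩ := CStarAlgebra.nonneg_iff_eq_star_mul_self.mp hL.posSemidef.nonneg
    refine ⟨B, ?_, h⟩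
    have h1 := (Matrix.isUnit_iff_isUnit_det _).1 hL.isUnit
    rw [h, Matrix.det_mul] at h1
    exact (Matrix.isUnit_iff_isUnit_det _).2 (isUnit_of_mul_isUnit_right h1)
  exact ⟨B, by rw [h, Matrix.star_eq_conjTranspose, Matrix.conjTranspose_eq_transpose_of_trivial], hB⟩

def AA {Ω : Type*} {d : ℕ} (S : Matrix (Fin d) (Fin d) ℝ)
    (Φ : ℕ → Ω → Fin d → ℝ) (n : ℕ) (ω : Ω) : Matrix (Fin d) (Fin d) ℝ :=
  S + ∑ k ∈ Finset.range n, vecMulVec (Φ k ω) (Φ k ω)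

lemma AA_pd {Ω : Type*} {d : ℕ} {S : Matrix (Fin d) (Fin d) ℝ} (hS : S.PosDef)
    (Φ : ℕ → Ω → Fin d → ℝ) (n : ℕ) (ω : Ω) : (AA S Φ n ω).PosDef := by
  refine hS.add_posSemidef (Matrix.posSemidef_sum _ fun k _ => ?_)
  have := posSemidef_vecMulVec_self_star (Φ k ω)
  simpa using this

lemma AA_lim {Ω : Type*} {d : ℕ} {S L : Matrix (Fin d) (Fin d) ℝ}
    {Φ : ℕ → Ω → Fin d → ℝ} {ω : Ω}
    (h : Tendsto (fun n : ℕ => (n : ℝ)⁻¹ • Smat S Φ n ω) atTop (𝓝 L)) :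
    Tendsto (fun n : ℕ => (n : ℝ)⁻¹ • AA S Φ n ω) atTop (𝓝 L) := by
  rw [← tendsto_add_atTop_iff_nat 1]
  have h1 : Tendsto (fun n : ℕ => (n:ℝ)/((n:ℝ)+1)) atTop (𝓝 1) := tendsto_natCast_div_add_atTop 1
  have h2 := h1.smul h
  rw [one_smul] at h2
  refine h2.congr' ?_
  filter_upwards [eventually_gt_atTop 0] with n hn
  have : (n:ℝ) ≠ 0 := by positivity
  rw [smul_smul]
  change _ = ((n+1:ℕ):ℝ)⁻¹ • Smat S Φ n ω
  congr 1
  push_cast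
  field_simp

lemma AA_lim' {Ω : Type*} {d : ℕ} {S L : Matrix (Fin d) (Fin d) ℝ}
    {Φ : ℕ → Ω → Fin d → ℝ} {ω : Ω}
    (h : Tendsto (fun n : ℕ => (n : ℝ)⁻¹ • AA S Φ n ω) atTop (𝓝 L)) :
    Tendsto (fun n : ℕ => (n : ℝ)⁻¹ • ∑ k ∈ Finset.range n, vecMulVec (Φ k ω) (Φ k ω)) atTop (𝓝 L) := by
  have h1 : Tendsto (fun n : ℕ => (n:ℝ)⁻¹ • S) atTop (𝓝 0) := by
    have := (tendsto_inv_atTop_zero.comp (tendsto_natCast_atTop_atTop (R := ℝ))).smul_const S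
    simpa using this
  have h2 := h.sub h1
  rw [sub_zero] at h2
  refine h2.congr fun n => ?_
  rw [← smul_sub, AA, add_sub_cancel_left]

lemma AA_inv_lim {d : ℕ} {A : ℕ → Matrix (Fin d) (Fin d) ℝ} {L : Matrix (Fin d) (Fin d) ℝ} (hL : IsUnit L)
    (h : Tendsto (fun n : ℕ => (n : ℝ)⁻¹ • A n) atTop (𝓝 L)) :
    Tendsto (fun n : ℕ => (n : ℝ) • (A n)⁻¹) atTop (𝓝 L⁻¹) := by
  have hdet := (Matrix.isUnit_iff_isUnit_det _).1 hL
  have hc : ContinuousAt (Inv.inv : Matrix (Fin d) (Fin d) ℝ → _) L := by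
    refine continuousAt_matrix_inv L ?_
    rw [Ring.inverse_eq_inv']
    exact continuousAt_inv₀ hdet.ne_zero
  refine (hc.tendsto.comp h).congr' ?_
  filter_upwards [eventually_gt_atTop 0] with n hn
  have hn : (n:ℝ) ≠ 0 := by positivity
  simp only [Function.comp]
  by_cases hA : IsUnit (A n).det
  · have h3 := Matrix.inv_smul' (A n) (Units.mk0 (n:ℝ)⁻¹ (inv_ne_zero hn)) hA
    simpa [Units.smul_def] using h3
  · rw [Matrix.nonsing_inv_apply_not_isUnit _ hA, smul_zero, Matrix.nonsing_inv_apply_not_isUnit]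
    rw [Matrix.det_smul]
    simp only [isUnit_iff_ne_zero, not_not] at hA ⊢
    rw [hA, mul_zero]

def MM {Ω : Type*} {d : ℕ} (S : Matrix (Fin d) (Fin d) ℝ) (Φ : ℕ → Ω → Fin d → ℝ) (ε : ℕ → Ω → ℝ)
    (θ : Fin d → ℝ) (k : ℕ) (ω : Ω) : Fin d → ℝ :=
  -(S *ᵥ θ) + ∑ l ∈ range k, ε (l+1) ω • Φ l ω

lemma lsq_eq {Ω : Type*} {d : ℕ} {S : Matrix (Fin d) (Fin d) ℝ} (hS : S.PosDef)
    (Φ : ℕ → Ω → Fin d → ℝ) (X ε : ℕ → Ω → ℝ) (θ : Fin d → ℝ)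
    (hmodel : ∀ n ω, X (n + 1) ω = θ ⬝ᵥ Φ n ω + ε (n + 1) ω) (k : ℕ) (hk : 1 ≤ k) (ω : Ω) :
    lsq S Φ X k ω - θ = (AA S Φ k ω)⁻¹ *ᵥ MM S Φ ε θ k ω := by
  have h1 : Smat S Φ (k-1) ω = AA S Φ k ω := by
    rw [Smat, AA, Nat.sub_add_cancel hk]
  have h2 : ∑ l ∈ Finset.Icc 1 k, X l ω • Φ (l-1) ω = AA S Φ k ω *ᵥ θ + MM S Φ ε θ k ω := by
    rw [← Finset.Ico_add_one_right_eq_Icc, Finset.sum_Ico_eq_sum_range, AA, MM, add_mulVec, Matrix.sum_mulVec]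
    have : ∀ l ∈ range (k+1-1), X (1+l) ω • Φ (1+l-1) ω = vecMulVec (Φ l ω) (Φ l ω) *ᵥ θ + ε (l+1) ω • Φ l ω := by
      intro l _
      rw [add_comm 1 l, hmodel, Nat.add_sub_cancel, vecMulVec_mulVec, dotProduct_comm, add_smul]
      rw [op_smul_eq_smul]
    rw [Finset.sum_congr rfl this, Finset.sum_add_distrib, Nat.add_sub_cancel]
    abel
  have hu := (Matrix.isUnit_iff_isUnit_det _).1 (AA_pd hS Φ k ω).isUnit
  rw [lsq, h1, h2, mulVec_add, mulVec_mulVec, Matrix.nonsing_inv_mul _ hu, one_mulVec, add_sub_cancel_left]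

end P11

section P12

lemma D_ratio {d : ℕ} (N : ℕ → Fin d → ℝ) (D : ℕ → Matrix (Fin d) (Fin d) ℝ)
    (hD : Tendsto D atTop (𝓝 1)) : ∃ r : ℕ → ℝ, Tendsto r atTop (𝓝 1) ∧
      ∀ k, (D k *ᵥ N k) ⬝ᵥ (D k *ᵥ N k) = r k * (N k ⬝ᵥ N k) := by
  set q : ℕ → ℝ := fun k => (D k *ᵥ N k) ⬝ᵥ (D k *ᵥ N k) with hq
  set E : ℕ → Matrix (Fin d) (Fin d) ℝ := fun k => (D k)ᵀ * D k - 1 with hE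
  have hEl : Tendsto E atTop (𝓝 0) := by
    have hc : Continuous (fun A : Matrix (Fin d) (Fin d) ℝ => Aᵀ * A - 1) :=
      (continuous_id.matrix_transpose.matrix_mul continuous_id).sub continuous_const
    have := (hc.tendsto 1).comp hD
    simpa [Function.comp_def, hE] using this
  set η : ℕ → ℝ := fun k => ∑ i, ∑ j, |E k i j| with hη
  have hηl : Tendsto η atTop (𝓝 0) := by
    have hc : Continuous (fun A : Matrix (Fin d) (Fin d) ℝ => ∑ i, ∑ j, |A i j|) :=
      continuous_finsetSum _ fun i _ => continuous_finsetSum _ fun j _ => (continuous_id.matrix_elem i j).abs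
    have := (hc.tendsto 0).comp hEl
    simpa [Function.comp_def, hη] using this
  have hqE : ∀ k, q k - N k ⬝ᵥ N k = ∑ i, ∑ j, N k i * E k i j * N k j := by
    intro k
    have : q k - N k ⬝ᵥ N k = N k ⬝ᵥ (E k *ᵥ N k) := by
      simp only [hq, hE]
      rw [sub_mulVec, one_mulVec, dotProduct_sub, ← mulVec_mulVec, dotProduct_mulVec (N k), vecMul_transpose]
    rw [this]
    simp only [dotProduct, mulVec, Finset.mul_sum]
    exact Finset.sum_congr rfl fun i _ => Finset.sum_congr rfl fun j _ => by ring
  have hqb : ∀ k, |q k - N k ⬝ᵥ N k| ≤ η k * (N k ⬝ᵥ N k) := by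
    intro k
    rw [hqE]
    simp only [hη]
    rw [Finset.sum_mul]
    refine (Finset.abs_sum_le_sum_abs _ _).trans (Finset.sum_le_sum fun i _ => ?_)
    rw [Finset.sum_mul]
    refine (Finset.abs_sum_le_sum_abs _ _).trans (Finset.sum_le_sum fun j _ => ?_)
    rw [abs_mul, abs_mul, ← nrm_sq]
    have h1 := coord_le (N k) i
    have h2 := coord_le (N k) j
    calc |N k i| * |E k i j| * |N k j| = |E k i j| * (|N k i| * |N k j|) := by ring
      _ ≤ |E k i j| * (nrm (N k) * nrm (N k)) := by
        gcongr
        exact nrm_nn _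
      _ = _ := by ring
  refine ⟨fun k => if N k ⬝ᵥ N k = 0 then 1 else q k / (N k ⬝ᵥ N k), ?_, fun k => ?_⟩
  · rw [tendsto_iff_norm_sub_tendsto_zero]
    refine squeeze_zero (fun _ => norm_nonneg _) (fun k => ?_) hηl
    split_ifs with h
    · simp only [sub_self, norm_zero, hη]; positivity
    · have h1 : 0 < N k ⬝ᵥ N k := lt_of_le_of_ne (dot_nn _) (Ne.symm h)
      rw [Real.norm_eq_abs, show q k / (N k ⬝ᵥ N k) - 1 = (q k - N k ⬝ᵥ N k) / (N k ⬝ᵥ N k) by field_simp,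
        abs_div, abs_of_pos h1, div_le_iff₀ h1]
      exact hqb k
  · change q k = (if N k ⬝ᵥ N k = 0 then 1 else q k / (N k ⬝ᵥ N k)) * (N k ⬝ᵥ N k)
    split_ifs with h
    · have := hqb k
      rw [h] at this ⊢
      simpa using this
    · field_simp

lemma det_final {d : ℕ} (p : ℕ) (hp : 1 ≤ p) (c : ℝ) (N : ℕ → Fin d → ℝ) (D : ℕ → Matrix (Fin d) (Fin d) ℝ)
    (hD : Tendsto D atTop (𝓝 1)) (Q : ℕ → ℝ)
    (hQ : ∀ k : ℕ, 1 ≤ k → Q k = ((k:ℝ)⁻¹) ^ 2 * ((D k *ᵥ N k) ⬝ᵥ (D k *ᵥ N k)))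
    (hI : (fun n : ℕ => ∑ k ∈ range n, (((k:ℝ)+1)^(p+1))⁻¹ * (N k ⬝ᵥ N k)^p - c * Real.log n) =o[atTop]
      (fun n : ℕ => Real.log n)) :
    Tendsto (fun n : ℕ => (Real.log n)⁻¹ * ∑ k ∈ Finset.Icc 1 n, (k:ℝ)^(p-1) * Q k ^ p) atTop (𝓝 c) := by
  obtain ⟨r, hr, hrq⟩ := D_ratio N D hD
  set y : ℕ → ℝ := fun k => (((k:ℝ)+1)^(p+1))⁻¹ * (N k ⬝ᵥ N k)^p with hy
  set t : ℕ → ℝ := fun k => (k:ℝ)^(p-1) * Q k ^ p with ht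
  have hy0 : ∀ k, 0 ≤ y k := fun k => by have := dot_nn (N k); simp only [hy]; positivity
  have hYO : (fun n => ∑ k ∈ range n, y k) =O[atTop] (fun n : ℕ => Real.log n) := by
    have := hI.isBigO.add ((isBigO_refl (fun n : ℕ => Real.log n) atTop).const_mul_left c)
    simpa using this
  have hu : Tendsto (fun k : ℕ => ((k:ℝ)+1)/(k:ℝ)) atTop (𝓝 1) := by
    have := (tendsto_natCast_div_add_atTop (𝕜 := ℝ) 1).inv₀ one_ne_zero
    simpa using this
  have h1 : (fun n => ∑ k ∈ range n, (t k - y k)) =o[atTop] (fun n : ℕ => Real.log n) := by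
    refine sum_littleO _ y (fun k => |r k ^ p * (((k:ℝ)+1)/(k:ℝ)) ^ (p+1) - 1|) ?_ ?_ hy0 hYO
    · filter_upwards [eventually_ge_atTop 1] with k hk
      have hk0 : (k:ℝ) ≠ 0 := by positivity
      have : t k - y k = (r k ^ p * (((k:ℝ)+1)/(k:ℝ)) ^ (p+1) - 1) * y k := by
        simp only [ht, hy]
        rw [hQ k hk, hrq]
        obtain ⟨m, rfl⟩ : ∃ m, p = m + 1 := ⟨p-1, by omega⟩
        rw [Nat.add_sub_cancel, mul_pow, mul_pow, div_pow, ← pow_mul, inv_pow,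
          show 2 * (m+1) = m + (m+1+1) by ring, pow_add (k:ℝ) m]
        field_simp
      rw [this, abs_mul, abs_of_nonneg (hy0 k)]
    · have := (((hr.pow p).mul (hu.pow (p+1))).sub_const 1).abs
      simpa using this
  have h2 : Tendsto (fun n : ℕ => (∑ k ∈ range n, t k) / Real.log n) atTop (𝓝 c) := by
    have h3 := (h1.add hI).tendsto_div_nhds_zero.add_const c
    rw [zero_add] at h3
    refine h3.congr' ?_
    filter_upwards [log_tend.eventually_gt_atTop 0] with n hn
    rw [Finset.sum_sub_distrib]
    field_simp
    ring
  have h4 : Tendsto (fun n : ℕ => Real.log ((n+1:ℕ):ℝ) / Real.log n) atTop (𝓝 1) := by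
    have h5 : Tendsto (fun n : ℕ => Real.log (((n:ℝ)+1)/n)) atTop (𝓝 0) := by
      have := (Real.continuousAt_log one_ne_zero).tendsto.comp hu
      simpa [Function.comp_def] using this
    have h6 := (h5.div_atTop log_tend).add_const 1
    rw [zero_add] at h6
    refine h6.congr' ?_
    filter_upwards [log_tend.eventually_gt_atTop 0, eventually_gt_atTop 0] with n hn hn0
    have : (n:ℝ) ≠ 0 := by positivity
    rw [Real.log_div (by positivity) this]
    push_cast
    field_simp
    ring
  have h7 := ((h2.comp (tendsto_add_atTop_nat 1)).mul h4).sub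
    ((tendsto_const_nhds (x := t 0)).div_atTop log_tend)
  rw [mul_one, sub_zero] at h7
  refine h7.congr' ?_
  filter_upwards [log_tend.eventually_gt_atTop 0, (log_tend.comp (tendsto_add_atTop_nat 1)).eventually_gt_atTop 0]
    with n hn hn1
  simp only [Function.comp] at hn1 ⊢
  rw [Finset.sum_range_succ', ← Finset.Ico_add_one_right_eq_Icc, Finset.sum_Ico_eq_sum_range, Nat.add_sub_cancel,
    div_mul_div_cancel₀ hn1.ne', ← sub_div, add_sub_cancel_right, div_eq_inv_mul]
  congr 1
  exact Finset.sum_congr rfl fun k _ => by rw [add_comm 1 k]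

lemma ell_eq (σ : ℝ) (d p : ℕ) (hp : 1 ≤ p) : ell σ d p = (d : ℝ) * σ ^ (2 * p) *
          ∏ j ∈ Finset.Icc 1 (p - 1), ((d : ℝ) + 2 * (j : ℝ)) := by
  obtain ⟨m, rfl⟩ : ∃ m, p = m + 1 := ⟨p-1, by omega⟩
  rw [ell, Finset.prod_mul_distrib, Finset.prod_const, Finset.card_range, Finset.prod_range_succ', ← pow_mul,
    Nat.add_sub_cancel, ← Finset.Ico_add_one_right_eq_Icc, Finset.prod_Ico_eq_prod_range, Nat.add_sub_cancel]
  have : ∏ k ∈ range m, ((d:ℝ) + 2 * ((1+k:ℕ):ℝ)) = ∏ k ∈ range m, ((d:ℝ) + 2 * ((k+1:ℕ):ℝ)) :=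
    Finset.prod_congr rfl fun k _ => by rw [add_comm 1 k]
  rw [this]
  simp
  ring

end P12

section P13

lemma nrm_bound {d : ℕ} (C : Matrix (Fin d) (Fin d) ℝ) : ∃ K : ℝ, 0 ≤ K ∧ ∀ y : Fin d → ℝ,
    (C *ᵥ y) ⬝ᵥ (C *ᵥ y) ≤ K * (y ⬝ᵥ y) := by
  refine ⟨∑ i, (∑ j, |C i j|) ^ 2, by positivity, fun y => ?_⟩
  rw [Finset.sum_mul]
  refine Finset.sum_le_sum fun i _ => ?_
  rw [← pow_two, ← nrm_sq, ← mul_pow, ← sq_abs]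
  have : |(C *ᵥ y) i| ≤ (∑ j, |C i j|) * nrm y := by
    rw [mulVec, dotProduct, Finset.sum_mul]
    refine (Finset.abs_sum_le_sum_abs _ _).trans (Finset.sum_le_sum fun j _ => ?_)
    rw [abs_mul]
    exact mul_le_mul_of_nonneg_left (coord_le y j) (abs_nonneg _)
  gcongr

lemma mk_setup
    {Ω : Type*} {m0 : MeasurableSpace Ω} {μ : Measure Ω} [IsProbabilityMeasure μ]
    (F : Filtration ℕ m0) {d : ℕ} (hd : 0 < d)
    (ε : ℕ → Ω → ℝ) (Φ : ℕ → Ω → Fin d → ℝ) (θ : Fin d → ℝ)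
    (S L B : Matrix (Fin d) (Fin d) ℝ) (hB : IsUnit B) (hLB : L = Bᵀ * B)
    (σ : ℝ) (p : ℕ) (hp : 1 ≤ p) (a : ℝ) (ha : 2 * p < a)
    (hεadapt : ∀ n, StronglyMeasurable[F n] (ε n))
    (hΦadapt : ∀ n, StronglyMeasurable[F n] (Φ n))
    (hmds : ∀ n, μ[ε (n + 1)|F n] =ᵐ[μ] 0)
    (hvar : ∀ n, μ[fun ω => ε (n + 1) ω ^ 2|F n] =ᵐ[μ] fun _ => σ ^ 2)
    (hmomint : ∀ n, Integrable (fun ω => |ε (n + 1) ω| ^ a) μ)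
    (hmom : ∀ᵐ ω ∂μ, ∃ C : ℝ, ∀ n, (μ[fun ω => |ε (n + 1) ω| ^ a|F n]) ω ≤ C)
    (hconv : ∀ᵐ ω ∂μ, Tendsto (fun n : ℕ => (n : ℝ)⁻¹ • Smat S Φ n ω) atTop (𝓝 L)) :
    Setup μ F (fun k => ε (k+1)) (fun k ω => (Bᵀ)⁻¹ *ᵥ MM S Φ ε θ k ω) (fun k ω => (Bᵀ)⁻¹ *ᵥ Φ k ω) σ a p := by
  have hc : Continuous (fun v : Fin d → ℝ => (Bᵀ)⁻¹ *ᵥ v) := continuous_const.matrix_mulVec continuous_id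
  have hdet : IsUnit B.det := (Matrix.isUnit_iff_isUnit_det _).1 hB
  have hdet' : IsUnit Bᵀ.det := by rwa [Matrix.det_transpose]
  refine ⟨hd, hp, ha, fun k => hεadapt (k+1), hmomint, hmds, hvar, hmom, fun k => ?_, fun k => ?_, fun k ω => ?_, ?_⟩
  · refine hc.comp_stronglyMeasurable ?_
    refine stronglyMeasurable_const.add ?_
    refine Finset.stronglyMeasurable_fun_sum _ fun l hl => ?_
    have hl : l < k := Finset.mem_range.1 hl
    exact ((hεadapt (l+1)).mono (F.mono hl)).smul ((hΦadapt l).mono (F.mono hl.le))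
  · exact hc.comp_stronglyMeasurable (hΦadapt k)
  · simp only [MM, Finset.sum_range_succ]
    rw [← add_assoc, mulVec_add, mulVec_smul]
  · filter_upwards [hconv] with ω hω i j
    have h1 := AA_lim' (AA_lim hω)
    have hc2 : Continuous (fun A : Matrix (Fin d) (Fin d) ℝ => ((Bᵀ)⁻¹ * A * ((Bᵀ)⁻¹)ᵀ) i j) :=
      ((continuous_const.matrix_mul continuous_id).matrix_mul continuous_const).matrix_elem i j
    have h2 := (hc2.tendsto L).comp h1
    have h3 : (Bᵀ)⁻¹ * L * ((Bᵀ)⁻¹)ᵀ = 1 := by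
      rw [hLB, ← Matrix.mul_assoc, Matrix.nonsing_inv_mul _ hdet', Matrix.one_mul, Matrix.transpose_nonsing_inv,
        Matrix.transpose_transpose, Matrix.mul_nonsing_inv _ hdet]
    rw [h3, Matrix.one_apply] at h2
    refine h2.congr fun n => ?_
    simp only [Function.comp]
    rw [Matrix.mul_smul, Matrix.smul_mul, Finset.mul_sum, Finset.sum_mul, Matrix.smul_apply, Matrix.sum_apply,
      smul_eq_mul]
    congr 1
    refine Finset.sum_congr rfl fun k _ => ?_
    rw [mul_vecMulVec, vecMulVec_mul, vecMul_transpose, vecMulVec_apply]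

end P13

/-- **Corollary 3, second part**: if `S_n/n → L` a.s. then a.s.
`(1/log n) ∑_{k=1}^n k^{p-1} ((θ̂_k - θ)ᵗ L (θ̂_k - θ))^p → ℓ(p)`; in particular the
cumulative estimation error `G_n(p) = ∑_{k=1}^n k^{p-1} ‖θ̂_k - θ‖^{2p}` is `O(log n)` a.s. -/
theorem cumulative_estimation_error_limit
    {Ω : Type*} {m0 : MeasurableSpace Ω} {μ : Measure Ω} [IsProbabilityMeasure μ]
    (F : Filtration ℕ m0) {d : ℕ} (hd : 0 < d)
    (ε : ℕ → Ω → ℝ) (Φ : ℕ → Ω → Fin d → ℝ) (X : ℕ → Ω → ℝ) (θ : Fin d → ℝ)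
    (S L : Matrix (Fin d) (Fin d) ℝ) (hS : S.PosDef) (hL : L.PosDef)
    (σ : ℝ) (p : ℕ) (hp : 1 ≤ p) (a : ℝ) (ha : 2 * p < a)
    (hmodel : ∀ n ω, X (n + 1) ω = θ ⬝ᵥ Φ n ω + ε (n + 1) ω)
    (hεadapt : ∀ n, StronglyMeasurable[F n] (ε n))
    (hεint : ∀ n, Integrable (ε n) μ)
    (hΦadapt : ∀ n, StronglyMeasurable[F n] (Φ n))
    (hXadapt : ∀ n, StronglyMeasurable[F n] (X n))
    (hmds : ∀ n, μ[ε (n + 1)|F n] =ᵐ[μ] 0)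
    (hvar : ∀ n, μ[fun ω => ε (n + 1) ω ^ 2|F n] =ᵐ[μ] fun _ => σ ^ 2)
    (hmomint : ∀ n, Integrable (fun ω => |ε (n + 1) ω| ^ a) μ)
    (hmom : ∀ᵐ ω ∂μ, ∃ C : ℝ, ∀ n, (μ[fun ω => |ε (n + 1) ω| ^ a|F n]) ω ≤ C)
    (hf0 : ∀ᵐ ω ∂μ, Tendsto (fun n => expl S Φ n ω) atTop (𝓝 0))
    (hconv : ∀ᵐ ω ∂μ, Tendsto (fun n : ℕ => (n : ℝ)⁻¹ • Smat S Φ n ω) atTop (𝓝 L)) :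
    (∀ᵐ ω ∂μ, Tendsto (fun n : ℕ =>
      (Real.log n)⁻¹ *
        ∑ k ∈ Finset.Icc 1 n,
          (k : ℝ) ^ (p - 1) *
            ((lsq S Φ X k ω - θ) ⬝ᵥ (L *ᵥ (lsq S Φ X k ω - θ))) ^ p)
      atTop
        (𝓝 ((d : ℝ) * σ ^ (2 * p) *
          ∏ j ∈ Finset.Icc 1 (p - 1), ((d : ℝ) + 2 * (j : ℝ))))) ∧
      ∀ᵐ ω ∂μ, (fun n : ℕ =>
          ∑ k ∈ Finset.Icc 1 n,
            (k : ℝ) ^ (p - 1) * (∑ i, (lsq S Φ X k ω i - θ i) ^ 2) ^ p) =O[atTop]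
        fun n : ℕ => Real.log n := by
  obtain ⟨B, hLB, hB⟩ := pd_factor hL
  have hdet : IsUnit B.det := (Matrix.isUnit_iff_isUnit_det _).1 hB
  have hdet' : IsUnit Bᵀ.det := by rwa [Matrix.det_transpose]
  have hset := mk_setup F hd ε Φ θ S L B hB hLB σ p hp a ha hεadapt hΦadapt hmds hvar hmomint hmom hconv
  have hquad : ∀ x : Fin d → ℝ, x ⬝ᵥ (L *ᵥ x) = (B *ᵥ x) ⬝ᵥ (B *ᵥ x) := fun x => by
    rw [hLB, ← mulVec_mulVec, dotProduct_mulVec x, vecMul_transpose]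
  have main : ∀ᵐ ω ∂μ, Tendsto (fun n : ℕ =>
      (Real.log n)⁻¹ *
        ∑ k ∈ Finset.Icc 1 n,
          (k : ℝ) ^ (p - 1) *
            ((lsq S Φ X k ω - θ) ⬝ᵥ (L *ᵥ (lsq S Φ X k ω - θ))) ^ p)
      atTop
        (𝓝 ((d : ℝ) * σ ^ (2 * p) *
          ∏ j ∈ Finset.Icc 1 (p - 1), ((d : ℝ) + 2 * (j : ℝ)))) := by
    filter_upwards [hset.lim p le_rfl, hconv] with ω h1 h2
    rw [← ell_eq σ d p hp]
    have h3 := AA_inv_lim hL.isUnit (AA_lim h2)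
    refine det_final p hp (ell σ d p) (fun k => (Bᵀ)⁻¹ *ᵥ MM S Φ ε θ k ω)
      (fun k => (k:ℝ) • (B * (AA S Φ k ω)⁻¹ * Bᵀ)) ?_ _ ?_ h1
    · have hc2 : Continuous (fun A : Matrix (Fin d) (Fin d) ℝ => B * A * Bᵀ) :=
        (continuous_const.matrix_mul continuous_id).matrix_mul continuous_const
      have h4 := (hc2.tendsto L⁻¹).comp h3
      have h5 : B * L⁻¹ * Bᵀ = 1 := by
        rw [hLB, Matrix.mul_inv_rev, ← Matrix.mul_assoc, Matrix.mul_nonsing_inv _ hdet, Matrix.one_mul,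
          Matrix.nonsing_inv_mul _ hdet']
      rw [h5] at h4
      refine h4.congr fun n => ?_
      simp only [Function.comp]
      rw [Matrix.mul_smul, Matrix.smul_mul]
    · intro k hk
      have hk0 : (k:ℝ) ≠ 0 := by positivity
      rw [hquad, lsq_eq hS Φ X ε θ hmodel k hk ω]
      have h6 : B *ᵥ ((AA S Φ k ω)⁻¹ *ᵥ MM S Φ ε θ k ω) =
          (k:ℝ)⁻¹ • (((k:ℝ) • (B * (AA S Φ k ω)⁻¹ * Bᵀ)) *ᵥ ((Bᵀ)⁻¹ *ᵥ MM S Φ ε θ k ω)) := by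
        rw [smul_mulVec, smul_smul, inv_mul_cancel₀ hk0, one_smul, mulVec_mulVec, mulVec_mulVec,
          Matrix.mul_assoc, Matrix.mul_nonsing_inv _ hdet', Matrix.mul_one]
      rw [h6, smul_dotProduct, dotProduct_smul, smul_eq_mul, smul_eq_mul, ← mul_assoc, ← pow_two]
  refine ⟨main, ?_⟩
  obtain ⟨K, hK, hKb⟩ := nrm_bound B⁻¹
  filter_upwards [main] with ω hω
  have hO : (fun n : ℕ => ∑ k ∈ Finset.Icc 1 n, (k : ℝ) ^ (p - 1) *
            ((lsq S Φ X k ω - θ) ⬝ᵥ (L *ᵥ (lsq S Φ X k ω - θ))) ^ p) =O[atTop] fun n : ℕ => Real.log n := by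
    have h1 := (hω.isBigO_one ℝ).mul (isBigO_refl (fun n : ℕ => Real.log n) atTop)
    refine h1.congr' ?_ ?_
    · filter_upwards [log_tend.eventually_gt_atTop 0] with n hn
      field_simp
    · exact Eventually.of_forall fun n => by simp
  refine bigO_of_le _ _ (fun n => by positivity) (K ^ p) (fun n => ?_) hO
  rw [Finset.mul_sum]
  refine Finset.sum_le_sum fun k _ => ?_
  rw [mul_left_comm, ← mul_pow]
  have h2 : ∑ i, (lsq S Φ X k ω i - θ i) ^ 2 ≤
      K * ((lsq S Φ X k ω - θ) ⬝ᵥ (L *ᵥ (lsq S Φ X k ω - θ))) := by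
    have h3 := hKb (B *ᵥ (lsq S Φ X k ω - θ))
    rw [mulVec_mulVec, Matrix.nonsing_inv_mul _ hdet, one_mulVec, ← hquad] at h3
    refine le_trans (le_of_eq ?_) h3
    exact Finset.sum_congr rfl fun i _ => by rw [pow_two]; rfl
  have h4 : 0 ≤ ∑ i, (lsq S Φ X k ω i - θ i) ^ 2 := by positivity
  gcongr
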